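/- arXiv:2212.02986 — 3 statements merged into one kernel-verified Lean document; each statement's English description precedes it below -/
import Mathlib

section
/- $\sum_{n=1}^{\infty} \frac{(-1)^n}{n^3 \binom{2n}{n}}\left(110 \sum_{j=1}^{n} \frac{(-1)^j}{j^4} + \frac{29(-1)^n}{n^4}\right) = \frac{221\pi^4 \zeta(3)}{180} + \frac{223\,\zeta(7)}{24} - \frac{301\pi^2 \zeta(5)}{36}$. -/
open Filter Topology

/-- Alternating harmonic-type sum `∑_{j=1}^n (-1)^j / j^s`. -/
noncomputable def A (s n : ℕ) : ℝ := ∑ j ∈ Finset.range n, (-1:ℝ)^(j+1) / ((j:ℝ) + 1) ^ s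

/-- The Riemann zeta value `ζ(s) = ∑_{n ≥ 1} 1/n^s`. -/
noncomputable def zeta (s : ℕ) : ℝ := ∑' n : ℕ, 1 / ((n:ℝ) + 1) ^ s


namespace Apy

/-! ### Letters, truncated nested sums, kernels -/

/-- A letter `x` encodes the exponent `x / 2` and the sign `(-1) ^ (x % 2)`. -/
noncomputable def p (x m : ℕ) : ℝ := ((-1 : ℝ) ^ m) ^ (x % 2) * ((m : ℝ)⁻¹) ^ (x / 2)

/-- product of two letters -/
def lm (x y : ℕ) : ℕ := 2 * (x / 2 + y / 2) + (x + y) % 2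

theorem p_lm (x y m : ℕ) : p (lm x y) m = p x m * p y m := by
  have h1 : (lm x y) / 2 = x / 2 + y / 2 := by unfold lm; omega
  have h2 : (lm x y) % 2 = (x + y) % 2 := by unfold lm; omega
  have hs : ((-1 : ℝ) ^ m) * ((-1 : ℝ) ^ m) = 1 := by
    rw [← mul_pow]; norm_num
  have key : ((-1 : ℝ) ^ m) ^ ((x + y) % 2) = ((-1 : ℝ) ^ m) ^ (x % 2) * ((-1 : ℝ) ^ m) ^ (y % 2) := by
    rcases Nat.mod_two_eq_zero_or_one x with hx | hx <;>
    rcases Nat.mod_two_eq_zero_or_one y with hy | hy <;>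
    simp [Nat.add_mod, hx, hy, hs]
  unfold p
  rw [h1, h2, key, pow_add]; ring

theorem p_add_two (x m : ℕ) : p (2 + x) m = p x m * (m : ℝ)⁻¹ := by
  have h1 : (2 + x) / 2 = x / 2 + 1 := by omega
  have h2 : (2 + x) % 2 = x % 2 := by omega
  unfold p; rw [h1, h2, pow_succ]; ring

theorem p_sub_two (x m : ℕ) (hx : 2 ≤ x) (hm : m ≠ 0) : p (x - 2) m = p x m * m := by
  obtain ⟨y, rfl⟩ := Nat.exists_eq_add_of_le hx
  have : (m : ℝ) ≠ 0 := by exact_mod_cast hm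
  rw [p_add_two]; simp; field_simp

theorem p_sub_four (x m : ℕ) (hx : 4 ≤ x) (hm : m ≠ 0) : p (x - 4) m = p x m * m * m := by
  rw [← p_sub_two x m (by omega) hm, ← p_sub_two (x - 2) m (by omega) hm]
  congr 1

/-- integer value of sign bit -/
def sg (e : ℕ) : ℤ := if e = 0 then 1 else -1

theorem p_sign (e m : ℕ) (he : e < 2) : p e m = ((sg e : ℤ) : ℝ) ^ m := by
  interval_cases e <;> simp [p, sg]

theorem p_sign_succ (e m : ℕ) (he : e < 2) : p e (m + 1) = (sg e : ℝ) * p e m := by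
  rw [p_sign e _ he, p_sign e _ he, pow_succ]; ring

theorem sg_sq (e : ℕ) : (sg e : ℝ) * (sg e : ℝ) = 1 := by
  unfold sg; split_ifs <;> norm_num

/-- truncated nested sum -/
noncomputable def Z : List ℕ → ℕ → ℝ
  | [], _ => 1
  | x :: w, n => ∑ m ∈ Finset.Ico 1 n, p x m * Z w m

theorem Z_nil (n : ℕ) : Z [] n = 1 := rfl
theorem Z_cons (x : ℕ) (w : List ℕ) (n : ℕ) :
    Z (x :: w) n = ∑ m ∈ Finset.Ico 1 n, p x m * Z w m := rfl

theorem Z_cons_succ (x : ℕ) (w : List ℕ) (n : ℕ) (hn : 1 ≤ n) :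
    Z (x :: w) (n + 1) = Z (x :: w) n + p x n * Z w n := by
  rw [Z_cons, Z_cons, Finset.sum_Ico_succ_top hn]

theorem Z_cons_one (x : ℕ) (w : List ℕ) : Z (x :: w) 1 = 0 := by simp [Z_cons]

/-- increment of `Z w` -/
noncomputable def dZ : List ℕ → ℕ → ℝ
  | [], _ => 0
  | x :: w, n => p x n * Z w n

theorem Z_succ (w : List ℕ) (n : ℕ) (hn : 1 ≤ n) : Z w (n + 1) = Z w n + dZ w n := by
  cases w with
  | nil => simp [Z_nil, dZ]
  | cons x w => exact Z_cons_succ x w n hn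

/-- indicator of the empty word -/
def em : List ℕ → ℝ
  | [] => 1
  | _ :: _ => 0

theorem Z_one (w : List ℕ) : Z w 1 = em w := by
  cases w with
  | nil => rfl
  | cons x w => exact Z_cons_one x w

/-! ### quasi-shuffle -/

def qsIn (a : ℕ) (u : List ℕ) (f : List ℕ → List (List ℕ)) : List ℕ → List (List ℕ)
  | [] => [a :: u]
  | b :: v => (f (b :: v)).map (List.cons a) ++ ((qsIn a u f v).map (List.cons b) ++
      (f v).map (List.cons (lm a b)))

def qs : List ℕ → List ℕ → List (List ℕ)
  | [] => fun v => [v]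
  | a :: u => qsIn a u (qs u)

theorem qs_nil (v : List ℕ) : qs [] v = [v] := rfl
theorem qs_cons_nil (a : ℕ) (u : List ℕ) : qs (a :: u) [] = [a :: u] := rfl
theorem qs_cons_cons (a : ℕ) (u : List ℕ) (b : ℕ) (v : List ℕ) :
    qs (a :: u) (b :: v) = (qs u (b :: v)).map (List.cons a) ++
      ((qs (a :: u) v).map (List.cons b) ++ (qs u v).map (List.cons (lm a b))) := rfl

noncomputable def ZS (l : List (List ℕ)) (n : ℕ) : ℝ := (l.map (fun w => Z w n)).sum

theorem ZS_append (l l' : List (List ℕ)) (n : ℕ) : ZS (l ++ l') n = ZS l n + ZS l' n := by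
  simp [ZS]

theorem ZS_map_cons_succ (a : ℕ) (l : List (List ℕ)) (n : ℕ) (hn : 1 ≤ n) :
    ZS (l.map (List.cons a)) (n + 1) = ZS (l.map (List.cons a)) n + p a n * ZS l n := by
  induction l with
  | nil => simp [ZS]
  | cons w l ih =>
    simp only [ZS, List.map_cons, List.sum_cons] at ih ⊢
    rw [ih, Z_cons_succ a w n hn]; ring

theorem ZS_map_cons_one (a : ℕ) (l : List (List ℕ)) : ZS (l.map (List.cons a)) 1 = 0 := by
  induction l with
  | nil => simp [ZS]
  | cons w l ih =>
    simp only [ZS, List.map_cons, List.sum_cons] at ih ⊢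
    rw [ih, Z_cons_one]; ring

theorem qs_sound (u v : List ℕ) (n : ℕ) (hn : 1 ≤ n) : Z u n * Z v n = ZS (qs u v) n := by
  induction u generalizing v n with
  | nil => simp [qs_nil, ZS, Z_nil]
  | cons a u ihu =>
    induction v generalizing n with
    | nil => simp [qs_cons_nil, ZS, Z_nil]
    | cons b v ihv =>
      induction n, hn using Nat.le_induction with
      | base =>
        rw [qs_cons_cons, ZS_append, ZS_append, ZS_map_cons_one, ZS_map_cons_one, ZS_map_cons_one,
          Z_cons_one]; ring
      | succ n hn ih =>
        rw [qs_cons_cons, ZS_append, ZS_append] at ih ⊢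
        rw [ZS_map_cons_succ _ _ _ hn, ZS_map_cons_succ _ _ _ hn, ZS_map_cons_succ _ _ _ hn,
          Z_cons_succ a u n hn, Z_cons_succ b v n hn, ← ihu (b :: v) n hn, ← ihv n hn, ← ihu v n hn,
          p_lm]
        linear_combination ih

/-! ### kernels -/

noncomputable def K (M k : ℕ) : ℝ :=
  ((k.factorial : ℝ) ^ 2 * ((M - k - 1).factorial : ℝ) * M) / ((M + k).factorial : ℝ)
noncomputable def FF (M k : ℕ) : ℝ :=
  ((k.factorial : ℝ) ^ 2 * ((M - k).factorial : ℝ)) / ((M + k).factorial : ℝ)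
noncomputable def E (M k : ℕ) : ℝ :=
  ((k.factorial : ℝ) * (M.factorial : ℝ)) / ((M + k).factorial : ℝ)
/-- reciprocal central binomial coefficient -/
noncomputable def ic (n : ℕ) : ℝ := (n.factorial : ℝ) ^ 2 / ((2 * n).factorial : ℝ)

theorem fne (n : ℕ) : (n.factorial : ℝ) ≠ 0 := by exact_mod_cast n.factorial_ne_zero

theorem ic_eq (n : ℕ) : ic n = (((2 * n).choose n : ℕ) : ℝ)⁻¹ := by
  unfold ic
  rw [Nat.cast_choose ℝ (by omega : n ≤ 2 * n), show 2 * n - n = n by omega]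
  have := fne n
  have := fne (2 * n)
  field_simp

theorem FF_top (M k : ℕ) (h : k < M) : FF M k = (1 - (k : ℝ) * (M : ℝ)⁻¹) * K M k := by
  obtain ⟨j, rfl⟩ := Nat.exists_eq_add_of_lt h
  unfold FF K
  rw [show k + j + 1 - k - 1 = j by omega, show k + j + 1 - k = j + 1 by omega, Nat.factorial_succ]
  have := fne (k + j + 1 + k)
  have : ((k + j + 1 : ℕ) : ℝ) ≠ 0 := by positivity
  push_cast at *
  field_simp
  ring

theorem FF_bot (M k : ℕ) (h : k < M) : FF (M - 1) k = (1 + (k : ℝ) * (M : ℝ)⁻¹) * K M k := by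
  obtain ⟨j, rfl⟩ := Nat.exists_eq_add_of_lt h
  unfold FF K
  rw [show k + j + 1 - k - 1 = j by omega, show k + j + 1 - 1 = k + j by omega,
    show k + j - k = j by omega, show k + j + 1 + k = (k + j + k) + 1 by omega,
    Nat.factorial_succ]
  have := fne (k + j + k)
  have : ((k + j + 1 : ℕ) : ℝ) ≠ 0 := by positivity
  have : ((k + j + k + 1 : ℕ) : ℝ) ≠ 0 := by positivity
  push_cast at *
  field_simp
  ring

theorem FF_diag (k : ℕ) : FF k k = ic k := by
  unfold FF ic; simp [two_mul]

theorem K_zero (M : ℕ) (h : 1 ≤ M) : K M 0 = 1 := by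
  obtain ⟨j, rfl⟩ := Nat.exists_eq_add_of_le h
  unfold K
  rw [show 1 + j - 0 - 1 = j by omega, show 1 + j + 0 = j + 1 by omega, Nat.factorial_succ]
  have := fne j
  have : ((j + 1 : ℕ) : ℝ) ≠ 0 := by positivity
  push_cast at *
  simp only [Nat.factorial_zero, Nat.cast_one]
  field_simp
  ring

theorem K_last (M : ℕ) (h : 1 ≤ M) : K M (M - 1) = 2 * ic M := by
  obtain ⟨j, rfl⟩ := Nat.exists_eq_add_of_le h
  unfold K ic
  rw [show 1 + j - 1 = j by omega, show 1 + j - j - 1 = 0 by omega,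
    show 2 * (1 + j) = (2 * j + 1) + 1 by omega, show 1 + j + j = 2 * j + 1 by omega,
    show 1 + j = j + 1 by omega, Nat.factorial_succ j, Nat.factorial_succ (2 * j + 1)]
  have := fne (2 * j + 1)
  have : ((2 * j + 1 + 1 : ℕ) : ℝ) ≠ 0 := by positivity
  push_cast at *
  simp only [Nat.factorial_zero, Nat.cast_one]
  field_simp
  ring

theorem K_prev (M k : ℕ) (h : k < M) (hk : 1 ≤ k) :
    K M (k - 1) = ((M : ℝ) * M * ((k : ℝ)⁻¹ * (k : ℝ)⁻¹) - 1) * K M k := by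
  obtain ⟨j, rfl⟩ := Nat.exists_eq_add_of_lt h
  obtain ⟨i, rfl⟩ := Nat.exists_eq_add_of_le hk
  unfold K
  rw [show 1 + i - 1 = i by omega, show 1 + i + j + 1 - (1 + i) - 1 = j by omega,
    show 1 + i + j + 1 - i - 1 = j + 1 by omega,
    show 1 + i + j + 1 + (1 + i) = (1 + i + j + 1 + i) + 1 by omega,
    show 1 + i = i + 1 by omega,
    Nat.factorial_succ i, Nat.factorial_succ j, Nat.factorial_succ (i + 1 + j + 1 + i)]
  have := fne (i + 1 + j + 1 + i)
  have : ((i + 1 : ℕ) : ℝ) ≠ 0 := by positivity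
  have : ((i + 1 + j + 1 + i + 1 : ℕ) : ℝ) ≠ 0 := by positivity
  push_cast at *
  field_simp
  ring

theorem E_bot (M k : ℕ) (h : 1 ≤ M) : E (M - 1) k = (1 + (k : ℝ) * (M : ℝ)⁻¹) * E M k := by
  obtain ⟨j, rfl⟩ := Nat.exists_eq_add_of_le h
  unfold E
  rw [show 1 + j - 1 = j by omega, show 1 + j + k = (j + k) + 1 by omega,
    show 1 + j = j + 1 by omega, Nat.factorial_succ j, Nat.factorial_succ (j + k)]
  have := fne (j + k)
  have : ((j + 1 : ℕ) : ℝ) ≠ 0 := by positivity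
  have : ((j + k + 1 : ℕ) : ℝ) ≠ 0 := by positivity
  push_cast at *
  field_simp
  ring

theorem E_comm (M k : ℕ) : E M k = E k M := by
  unfold E; rw [add_comm M k, mul_comm]

theorem E_prev (M k : ℕ) (hk : 1 ≤ k) : E M (k - 1) = (1 + (M : ℝ) * (k : ℝ)⁻¹) * E M k := by
  rw [E_comm, E_bot k M hk, E_comm k M]

theorem E_diag (k : ℕ) : E k k = ic k := by
  unfold E ic; rw [two_mul, sq]

theorem E_zero (M : ℕ) : E M 0 = 1 := by
  unfold E; simp [Nat.factorial_ne_zero]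

theorem E_last (M : ℕ) (h : 1 ≤ M) : E M (M - 1) = 2 * ic M := by
  rw [E_prev M M h, E_diag, mul_inv_cancel₀]
  · ring
  · have : M ≠ 0 := by omega
    exact_mod_cast this

theorem E_pos (M k : ℕ) : 0 < E M k := by
  unfold E
  have := M.factorial_pos
  have := k.factorial_pos
  have := (M + k).factorial_pos
  positivity

theorem E_le (M k : ℕ) (hk : 1 ≤ k) : E M k ≤ ((M : ℝ) + 1)⁻¹ := by
  induction k, hk using Nat.le_induction with
  | base =>
    have h := E_prev M 1 le_rfl
    simp only [Nat.sub_self, E_zero, Nat.cast_one, inv_one, mul_one] at h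
    rw [eq_comm, mul_comm] at h
    rw [eq_inv_of_mul_eq_one_left h, add_comm]
  | succ k hk ih =>
    refine le_trans ?_ ih
    have h := E_prev M (k + 1) (by omega)
    rw [Nat.add_sub_cancel] at h
    rw [h]
    have := E_pos M (k + 1)
    have h2 : (0 : ℝ) ≤ (M : ℝ) * ((k + 1 : ℕ) : ℝ)⁻¹ := by positivity
    nlinarith

theorem FF_nonneg (M k : ℕ) : 0 ≤ FF M k := by unfold FF; positivity

theorem FF_le (M k : ℕ) (h : k ≤ M) : FF M k ≤ E M k := by
  unfold FF E
  have h1 : (k.factorial : ℝ) * ((M - k).factorial : ℝ) ≤ (M.factorial : ℝ) := by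
    exact_mod_cast Nat.le_of_dvd (Nat.factorial_pos _) (Nat.factorial_mul_factorial_dvd_factorial h)
  have h2 : (0 : ℝ) ≤ k.factorial := by positivity
  apply div_le_div_of_nonneg_right _ (by positivity)
  nlinarith


/-! ### columns, linear combinations, relations -/

inductive Col where
  | W (c : ℕ) (w : List ℕ)
  | D (c : ℕ) (u : List ℕ) (d : ℕ) (w : List ℕ)
  | T (c : ℕ) (u : List ℕ) (d : ℕ) (w : List ℕ)
  | Z (w : List ℕ)
  | P (u v : List ℕ)
  deriving DecidableEq

noncomputable def val (N : ℕ) : Col → ℝ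
  | .W c w => ∑ i ∈ Finset.Ico 1 N, p c i * Z w i * ic i
  | .D c u d w => ∑ M ∈ Finset.Ico 1 N, ∑ k ∈ Finset.Ico 1 M,
      K M k * ((p c M * Z u M) * (p d k * Z w k))
  | .T c u d w => ∑ M ∈ Finset.Ico 1 N, ∑ k ∈ Finset.Ico 1 M,
      E M k * ((p c M * Z u M) * (p d k * Z w k))
  | .Z w => Z w N
  | .P u v => Z u N * Z v N

noncomputable def ev (N : ℕ) (l : List (ℤ × Col)) : ℝ := (l.map (fun t => (t.1 : ℝ) * val N t.2)).sum

theorem ev_nil (N : ℕ) : ev N [] = 0 := rfl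
theorem ev_cons (N : ℕ) (c : ℤ) (k : Col) (l : List (ℤ × Col)) :
    ev N ((c, k) :: l) = (c : ℝ) * val N k + ev N l := by simp [ev]
theorem ev_append (N : ℕ) (l l' : List (ℤ × Col)) : ev N (l ++ l') = ev N l + ev N l' := by
  simp [ev]

theorem ev_W (N : ℕ) (a : ℤ) (c : ℕ) (L : List (List ℕ)) :
    ev N (L.map (fun k => (a, Col.W c k))) =
      (a : ℝ) * ∑ i ∈ Finset.Ico 1 N, p c i * ZS L i * ic i := by
  induction L with
  | nil => simp [ev, ZS]
  | cons w L ih =>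
    rw [List.map_cons, ev_cons, ih]
    simp only [val, ZS, List.map_cons, List.sum_cons]
    rw [← mul_add, ← Finset.sum_add_distrib]
    congr 1
    apply Finset.sum_congr rfl; intros; ring

theorem ev_Wqs (N : ℕ) (a : ℤ) (c : ℕ) (u v : List ℕ) :
    ev N ((qs u v).map (fun k => (a, Col.W c k))) =
      (a : ℝ) * ∑ i ∈ Finset.Ico 1 N, p c i * (Z u i * Z v i) * ic i := by
  rw [ev_W]; congr 1
  apply Finset.sum_congr rfl; intro i hi
  rw [qs_sound u v i (Finset.mem_Ico.1 hi).1]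

theorem ev_Z (N : ℕ) (a : ℤ) (L : List (List ℕ)) :
    ev N (L.map (fun k => (a, Col.Z k))) = (a : ℝ) * ZS L N := by
  induction L with
  | nil => simp [ev, ZS]
  | cons w L ih =>
    rw [List.map_cons, ev_cons, ih]
    simp only [val, ZS, List.map_cons, List.sum_cons]; ring

theorem tele (g : ℕ → ℝ) (a b : ℕ) (hab : a ≤ b) :
    ∑ k ∈ Finset.Ico (a + 1) (b + 1), (g k - g (k - 1)) = g b - g a := by
  induction b, hab using Nat.le_induction with
  | base => simp
  | succ b hb ih => rw [Finset.sum_Ico_succ_top (by omega), ih]; simp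

def mK1 (c : ℕ) (u : List ℕ) (e : ℕ) : List ℕ → List (ℤ × Col)
  | [] => [(1, Col.Z (c :: u))]
  | x :: w' => [(1, Col.D c u (lm x e) w')]

def gK1 (c : ℕ) (u : List ℕ) (e : ℕ) (w : List ℕ) : List (ℤ × Col) :=
  (1 + sg e, Col.D c u e w) :: (-sg e, Col.D (c - 4) u (4 + e) w) ::
  (mK1 c u e w ++
  (qs u w).map (fun k => (-2 * sg e, Col.W (lm c e) k)))

def mN1 (e d : ℕ) (w : List ℕ) : List ℕ → List (ℤ × Col)
  | [] => []
  | x :: v' => (1, Col.D (lm x e) v' d w) :: (-1, Col.D (2 + lm x e) v' (d - 2) w) ::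
        (qs v' w).map (fun k => (1, Col.W (lm (lm d e) x) k))

def gN1 (e : ℕ) (v : List ℕ) (d : ℕ) (w : List ℕ) : List (ℤ × Col) :=
  (1 - sg e, Col.D e v d w) :: (-(1 + sg e), Col.D (2 + e) v (d - 2) w) ::
  (mN1 e d w v ++
  (qs v w).map (fun k => (1, Col.W (lm d e) k)))

def mK3 (c : ℕ) (u : List ℕ) : List ℕ → List (ℤ × Col)
  | [] => [(1, Col.Z (c :: u))]
  | x :: w' => [(1, Col.T c u x w')]

def gK3 (c : ℕ) (u : List ℕ) (w : List ℕ) : List (ℤ × Col) :=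
  (-1, Col.T (c - 2) u 2 w) ::
  (mK3 c u w ++
  (qs u w).map (fun k => (-2, Col.W c k)))

def mM3 (d : ℕ) (w : List ℕ) : List ℕ → List (ℤ × Col)
  | [] => []
  | x :: v' => (1, Col.T x v' d w) :: (qs v' w).map (fun k => (1, Col.W (lm d x) k))

def gM3 (v : List ℕ) (d : ℕ) (w : List ℕ) : List (ℤ × Col) :=
  (-1, Col.T 2 v (d - 2) w) ::
  (mM3 d w v ++
  (qs v w).map (fun k => (1, Col.W d k)))

/-! #### K1 -/

theorem k1_inner (M e : ℕ) (w : List ℕ) (he : e < 2) (hM : 1 ≤ M) :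
    ∑ k ∈ Finset.Ico 1 M, K M k * (p e k * ((1 + (sg e : ℝ)) * Z w k + dZ w k
        - (sg e : ℝ) * ((M : ℝ) * M * ((k : ℝ)⁻¹ * (k : ℝ)⁻¹)) * Z w k))
      = 2 * (sg e : ℝ) * p e M * ic M * Z w M - em w := by
  obtain ⟨m, rfl⟩ := Nat.exists_eq_add_of_le' hM
  have h := tele (fun k => p e k * K (m + 1) k * Z w (k + 1)) 0 m (Nat.zero_le _)
  have h1 : p e 0 * K (m + 1) 0 * Z w (0 + 1) = em w := by
    rw [K_zero _ hM, p_sign e 0 he, zero_add, Z_one]; simp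
  have h2 : p e m * K (m + 1) m * Z w (m + 1) =
      2 * (sg e : ℝ) * p e (m + 1) * ic (m + 1) * Z w (m + 1) := by
    have := K_last (m + 1) hM
    rw [Nat.add_sub_cancel] at this
    rw [this, p_sign_succ e m he]
    linear_combination (-2 * p e m * ic (m + 1) * Z w (m + 1)) * sg_sq e
  beta_reduce at h
  rw [h1, h2] at h
  rw [← h]
  apply Finset.sum_congr (by simp)
  intro k hk
  obtain ⟨hk1, hk2⟩ := Finset.mem_Ico.1 hk
  rw [Z_succ w k hk1, show k - 1 + 1 = k by omega, K_prev (m + 1) k hk2 hk1]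
  have h3 : p e k = (sg e : ℝ) * p e (k - 1) := by
    have := p_sign_succ e (k - 1) he
    rwa [show k - 1 + 1 = k by omega] at this
  have h4 : p e (k - 1) = (sg e : ℝ) * p e k := by
    rw [h3]; linear_combination (-p e (k - 1)) * sg_sq e
  rw [h4]; ring

theorem p_four (e k : ℕ) : p (4 + e) k = p e k * ((k : ℝ)⁻¹ * (k : ℝ)⁻¹) := by
  rw [show 4 + e = 2 + (2 + e) by omega, p_add_two, p_add_two]; ring

theorem K1_sound (N c : ℕ) (u : List ℕ) (e : ℕ) (w : List ℕ) (he : e < 2) (hc : 4 ≤ c) :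
    ev N (gK1 c u e w) = 0 := by
  have main : ∑ M ∈ Finset.Ico 1 N, (p c M * Z u M) *
      ((∑ k ∈ Finset.Ico 1 M, K M k * (p e k * ((1 + (sg e : ℝ)) * Z w k + dZ w k
        - (sg e : ℝ) * ((M : ℝ) * M * ((k : ℝ)⁻¹ * (k : ℝ)⁻¹)) * Z w k)))
      - (2 * (sg e : ℝ) * p e M * ic M * Z w M - em w)) = 0 := by
    apply Finset.sum_eq_zero
    intro M hM
    rw [k1_inner M e w he (Finset.mem_Ico.1 hM).1]; ring
  have hA : ∑ M ∈ Finset.Ico 1 N, (p c M * Z u M) *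
      ((∑ k ∈ Finset.Ico 1 M, K M k * (p e k * ((1 + (sg e : ℝ)) * Z w k + dZ w k
        - (sg e : ℝ) * ((M : ℝ) * M * ((k : ℝ)⁻¹ * (k : ℝ)⁻¹)) * Z w k)))
      - (2 * (sg e : ℝ) * p e M * ic M * Z w M - em w)) =
      (1 + (sg e : ℝ)) * val N (Col.D c u e w) + (-(sg e : ℝ)) * val N (Col.D (c - 4) u (4 + e) w)
      + (∑ M ∈ Finset.Ico 1 N, ∑ k ∈ Finset.Ico 1 M,
          K M k * ((p c M * Z u M) * (p e k * dZ w k)) + em w * Z (c :: u) N)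
      + (-2 * (sg e : ℝ)) * ∑ i ∈ Finset.Ico 1 N, p (lm c e) i * (Z u i * Z w i) * ic i := by
    simp only [val, Z_cons]
    simp only [Finset.mul_sum, ← Finset.sum_add_distrib]
    apply Finset.sum_congr rfl
    intro M hM
    have hM1 : M ≠ 0 := by have := (Finset.mem_Ico.1 hM).1; omega
    rw [p_lm, mul_sub, Finset.mul_sum]
    rw [show ∀ a c d e : ℝ, a + (c + d) + e = (a + c) + (d + e) by intros; ring]
    rw [← Finset.sum_add_distrib, sub_eq_add_neg]
    congr 1
    · apply Finset.sum_congr rfl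
      intro k hk
      rw [p_sub_four c M hc hM1, p_four]; ring
    · ring
  rw [hA] at main
  have hB : ev N (mK1 c u e w) = (∑ M ∈ Finset.Ico 1 N, ∑ k ∈ Finset.Ico 1 M,
          K M k * ((p c M * Z u M) * (p e k * dZ w k)) + em w * Z (c :: u) N) := by
    cases w with
    | nil => simp [mK1, ev_cons, ev_nil, val, dZ, em]
    | cons x w' =>
      simp only [mK1, ev_cons, ev_nil, val, dZ, em]
      simp only [Int.cast_one, one_mul, zero_mul, add_zero]
      apply Finset.sum_congr rfl; intro M _
      apply Finset.sum_congr rfl; intro k _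
      rw [p_lm]; ring
  unfold gK1
  rw [ev_cons, ev_cons, ev_append, ev_Wqs, hB]
  push_cast
  linear_combination main

/-! #### K3 -/

theorem k3_inner (M : ℕ) (w : List ℕ) (hM : 1 ≤ M) :
    ∑ k ∈ Finset.Ico 1 M, E M k * (dZ w k - (M : ℝ) * (k : ℝ)⁻¹ * Z w k)
      = 2 * ic M * Z w M - em w := by
  obtain ⟨m, rfl⟩ := Nat.exists_eq_add_of_le' hM
  have h := tele (fun k => E (m + 1) k * Z w (k + 1)) 0 m (Nat.zero_le _)
  have h1 : E (m + 1) 0 * Z w (0 + 1) = em w := by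
    rw [E_zero, zero_add, Z_one]; simp
  have h2 : E (m + 1) m * Z w (m + 1) = 2 * ic (m + 1) * Z w (m + 1) := by
    have := E_last (m + 1) hM
    rw [Nat.add_sub_cancel] at this
    rw [this]
  beta_reduce at h
  rw [h1, h2] at h
  rw [← h]
  apply Finset.sum_congr (by simp)
  intro k hk
  obtain ⟨hk1, hk2⟩ := Finset.mem_Ico.1 hk
  rw [Z_succ w k hk1, show k - 1 + 1 = k by omega, E_prev (m + 1) k hk1]
  ring

theorem p_two (k : ℕ) : p 2 k = (k : ℝ)⁻¹ := by simp [p]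

theorem K3_sound (N c : ℕ) (u : List ℕ) (w : List ℕ) (hc : 2 ≤ c) :
    ev N (gK3 c u w) = 0 := by
  have main : ∑ M ∈ Finset.Ico 1 N, (p c M * Z u M) *
      ((∑ k ∈ Finset.Ico 1 M, E M k * (dZ w k - (M : ℝ) * (k : ℝ)⁻¹ * Z w k))
      - (2 * ic M * Z w M - em w)) = 0 := by
    apply Finset.sum_eq_zero
    intro M hM
    rw [k3_inner M w (Finset.mem_Ico.1 hM).1]; ring
  have hA : ∑ M ∈ Finset.Ico 1 N, (p c M * Z u M) *
      ((∑ k ∈ Finset.Ico 1 M, E M k * (dZ w k - (M : ℝ) * (k : ℝ)⁻¹ * Z w k))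
      - (2 * ic M * Z w M - em w)) =
      (-1) * val N (Col.T (c - 2) u 2 w)
      + (∑ M ∈ Finset.Ico 1 N, ∑ k ∈ Finset.Ico 1 M,
          E M k * ((p c M * Z u M) * dZ w k) + em w * Z (c :: u) N)
      + (-2) * ∑ i ∈ Finset.Ico 1 N, p c i * (Z u i * Z w i) * ic i := by
    simp only [val, Z_cons]
    simp only [Finset.mul_sum, ← Finset.sum_add_distrib]
    apply Finset.sum_congr rfl
    intro M hM
    have hM1 : M ≠ 0 := by have := (Finset.mem_Ico.1 hM).1; omega
    rw [mul_sub, Finset.mul_sum]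
    rw [show ∀ a b c d : ℝ, a + (b + c) + d = (a + b) + (c + d) by intros; ring]
    rw [← Finset.sum_add_distrib, sub_eq_add_neg]
    congr 1
    · apply Finset.sum_congr rfl
      intro k hk
      rw [p_sub_two c M hc hM1, p_two]; ring
    · ring
  rw [hA] at main
  have hB : ev N (mK3 c u w) = (∑ M ∈ Finset.Ico 1 N, ∑ k ∈ Finset.Ico 1 M,
          E M k * ((p c M * Z u M) * dZ w k) + em w * Z (c :: u) N) := by
    cases w with
    | nil => simp [mK3, ev_cons, ev_nil, val, dZ, em]
    | cons x w' =>
      simp only [mK3, ev_cons, ev_nil, val, dZ, em]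
      simp only [Int.cast_one, one_mul, zero_mul, add_zero]
  unfold gK3
  rw [ev_cons, ev_append, ev_Wqs, hB]
  push_cast
  linear_combination main

/-! #### N1 -/

theorem n1_inner (N k e : ℕ) (v : List ℕ) (he : e < 2) (hk : 1 ≤ k) (hN : k < N) :
    ∑ M ∈ Finset.Ico (k + 1) N, K M k * (p e M * ((1 - (sg e : ℝ)) * Z v M
        - (1 + (sg e : ℝ)) * ((k : ℝ) * (M : ℝ)⁻¹) * Z v M + dZ v M - (k : ℝ) * (M : ℝ)⁻¹ * dZ v M))
      = p e (N - 1) * FF (N - 1) k * Z v N - p e k * ic k * (Z v k + dZ v k) := by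
  obtain ⟨m, rfl⟩ := Nat.exists_eq_add_of_le' (show 1 ≤ N by omega)
  have h := tele (fun M => p e M * FF M k * Z v (M + 1)) k m (by omega)
  beta_reduce at h
  rw [FF_diag, Z_succ v k hk] at h
  rw [Nat.add_sub_cancel, ← h]
  apply Finset.sum_congr rfl
  intro M hM
  obtain ⟨hM1, hM2⟩ := Finset.mem_Ico.1 hM
  rw [Z_succ v M (by omega), show M - 1 + 1 = M by omega, FF_top M k (by omega),
    FF_bot M k (by omega)]
  have h3 : p e M = (sg e : ℝ) * p e (M - 1) := by
    have := p_sign_succ e (M - 1) he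
    rwa [show M - 1 + 1 = M by omega] at this
  have h4 : p e (M - 1) = (sg e : ℝ) * p e M := by
    rw [h3]; linear_combination (-p e (M - 1)) * sg_sq e
  rw [h4]; ring

theorem N1_exact (N d : ℕ) (v : List ℕ) (e : ℕ) (w : List ℕ) (he : e < 2) (hd : 2 ≤ d) :
    ev N (gN1 e v d w) =
      ∑ k ∈ Finset.Ico 1 N, (p d k * Z w k) * (p e (N - 1) * FF (N - 1) k * Z v N) := by
  have main : ∑ k ∈ Finset.Ico 1 N, (p d k * Z w k) *
      ((∑ M ∈ Finset.Ico (k + 1) N, K M k * (p e M * ((1 - (sg e : ℝ)) * Z v M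
        - (1 + (sg e : ℝ)) * ((k : ℝ) * (M : ℝ)⁻¹) * Z v M + dZ v M - (k : ℝ) * (M : ℝ)⁻¹ * dZ v M)))
        + p e k * ic k * (Z v k + dZ v k)) =
      ∑ k ∈ Finset.Ico 1 N, (p d k * Z w k) * (p e (N - 1) * FF (N - 1) k * Z v N) := by
    apply Finset.sum_congr rfl
    intro k hk
    rw [n1_inner N k e v he (Finset.mem_Ico.1 hk).1 (Finset.mem_Ico.1 hk).2]; ring
  rw [← main]
  have hA : ∑ k ∈ Finset.Ico 1 N, (p d k * Z w k) *
      ((∑ M ∈ Finset.Ico (k + 1) N, K M k * (p e M * ((1 - (sg e : ℝ)) * Z v M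
        - (1 + (sg e : ℝ)) * ((k : ℝ) * (M : ℝ)⁻¹) * Z v M + dZ v M - (k : ℝ) * (M : ℝ)⁻¹ * dZ v M)))
        + p e k * ic k * (Z v k + dZ v k)) =
      (1 - (sg e : ℝ)) * val N (Col.D e v d w) + (-(1 + (sg e : ℝ))) * val N (Col.D (2 + e) v (d - 2) w)
      + (∑ M ∈ Finset.Ico 1 N, ∑ k ∈ Finset.Ico 1 M,
          K M k * ((p e M * dZ v M) * (p d k * Z w k) - (p e M * (M : ℝ)⁻¹ * dZ v M) * (p d k * k * Z w k))
        + ∑ i ∈ Finset.Ico 1 N, p (lm d e) i * (dZ v i * Z w i) * ic i)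
      + ∑ i ∈ Finset.Ico 1 N, p (lm d e) i * (Z v i * Z w i) * ic i := by
    simp only [mul_add, Finset.sum_add_distrib, Finset.mul_sum]
    rw [Finset.sum_Ico_Ico_comm']
    simp only [val, Finset.mul_sum]
    rw [show ∀ a b c d e : ℝ, a + b + (c + d) + e = (a + b + c) + (e + d) by intros; ring]
    congr 1
    · simp only [← Finset.sum_add_distrib]
      apply Finset.sum_congr rfl; intro M hM
      apply Finset.sum_congr rfl; intro k hk
      have hk1 : k ≠ 0 := by have := (Finset.mem_Ico.1 hk).1; omega
      rw [p_sub_two d k hd hk1, p_add_two]; ring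
    · congr 1 <;> (apply Finset.sum_congr rfl; intro k hk; rw [p_lm]; ring)
  rw [hA]
  have hB : ev N (mN1 e d w v) =
      (∑ M ∈ Finset.Ico 1 N, ∑ k ∈ Finset.Ico 1 M,
          K M k * ((p e M * dZ v M) * (p d k * Z w k) - (p e M * (M : ℝ)⁻¹ * dZ v M) * (p d k * k * Z w k))
        + ∑ i ∈ Finset.Ico 1 N, p (lm d e) i * (dZ v i * Z w i) * ic i) := by
    cases v with
    | nil => simp [mN1, ev_nil, dZ]
    | cons x v' =>
      simp only [mN1, ev_cons, ev_Wqs, val, dZ]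
      rw [← add_assoc]
      push_cast
      congr 1
      · simp only [Finset.mul_sum, ← Finset.sum_add_distrib]
        apply Finset.sum_congr rfl; intro M hM
        apply Finset.sum_congr rfl; intro k hk
        have hk1 : k ≠ 0 := by have := (Finset.mem_Ico.1 hk).1; omega
        rw [p_sub_two d k hd hk1, p_add_two, p_lm]; ring
      · rw [one_mul]
        apply Finset.sum_congr rfl; intro k hk
        rw [p_lm _ x]; ring
  unfold gN1
  rw [ev_cons, ev_cons, ev_append, ev_Wqs, hB]
  push_cast
  ring

/-! #### M3 -/

theorem m3_inner (N k : ℕ) (v : List ℕ) (hk : 1 ≤ k) (hN : k < N) :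
    ∑ M ∈ Finset.Ico (k + 1) N, E M k * (dZ v M - (k : ℝ) * (M : ℝ)⁻¹ * Z v M)
      = E (N - 1) k * Z v N - ic k * (Z v k + dZ v k) := by
  obtain ⟨m, rfl⟩ := Nat.exists_eq_add_of_le' (show 1 ≤ N by omega)
  have h := tele (fun M => E M k * Z v (M + 1)) k m (by omega)
  beta_reduce at h
  rw [E_diag, Z_succ v k hk] at h
  rw [Nat.add_sub_cancel, ← h]
  apply Finset.sum_congr rfl
  intro M hM
  obtain ⟨hM1, hM2⟩ := Finset.mem_Ico.1 hM
  rw [Z_succ v M (by omega), show M - 1 + 1 = M by omega, E_bot M k (by omega)]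
  ring

theorem M3_exact (N d : ℕ) (v : List ℕ) (w : List ℕ) (hd : 2 ≤ d) :
    ev N (gM3 v d w) =
      ∑ k ∈ Finset.Ico 1 N, (p d k * Z w k) * (E (N - 1) k * Z v N) := by
  have main : ∑ k ∈ Finset.Ico 1 N, (p d k * Z w k) *
      ((∑ M ∈ Finset.Ico (k + 1) N, E M k * (dZ v M - (k : ℝ) * (M : ℝ)⁻¹ * Z v M))
        + ic k * (Z v k + dZ v k)) =
      ∑ k ∈ Finset.Ico 1 N, (p d k * Z w k) * (E (N - 1) k * Z v N) := by
    apply Finset.sum_congr rfl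
    intro k hk
    rw [m3_inner N k v (Finset.mem_Ico.1 hk).1 (Finset.mem_Ico.1 hk).2]; ring
  rw [← main]
  have hA : ∑ k ∈ Finset.Ico 1 N, (p d k * Z w k) *
      ((∑ M ∈ Finset.Ico (k + 1) N, E M k * (dZ v M - (k : ℝ) * (M : ℝ)⁻¹ * Z v M))
        + ic k * (Z v k + dZ v k)) =
      (-1) * val N (Col.T 2 v (d - 2) w)
      + (∑ M ∈ Finset.Ico 1 N, ∑ k ∈ Finset.Ico 1 M,
          E M k * (dZ v M * (p d k * Z w k))
        + ∑ i ∈ Finset.Ico 1 N, p d i * (dZ v i * Z w i) * ic i)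
      + ∑ i ∈ Finset.Ico 1 N, p d i * (Z v i * Z w i) * ic i := by
    simp only [mul_add, Finset.sum_add_distrib, Finset.mul_sum]
    rw [Finset.sum_Ico_Ico_comm']
    simp only [val, Finset.mul_sum]
    rw [show ∀ a b c d : ℝ, a + (b + c) + d = (a + b) + (d + c) by intros; ring]
    congr 1
    · simp only [← Finset.sum_add_distrib]
      apply Finset.sum_congr rfl; intro M hM
      apply Finset.sum_congr rfl; intro k hk
      have hk1 : k ≠ 0 := by have := (Finset.mem_Ico.1 hk).1; omega
      rw [p_sub_two d k hd hk1, p_two]; ring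
    · congr 1 <;> (apply Finset.sum_congr rfl; intro k hk; ring)
  rw [hA]
  have hB : ev N (mM3 d w v) =
      (∑ M ∈ Finset.Ico 1 N, ∑ k ∈ Finset.Ico 1 M,
          E M k * (dZ v M * (p d k * Z w k))
        + ∑ i ∈ Finset.Ico 1 N, p d i * (dZ v i * Z w i) * ic i) := by
    cases v with
    | nil => simp [mM3, ev_nil, dZ]
    | cons x v' =>
      simp only [mM3, ev_cons, ev_Wqs, val, dZ]
      push_cast
      rw [one_mul, one_mul]
      congr 1
      apply Finset.sum_congr rfl; intro k hk
      rw [p_lm _ x]; ring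
  unfold gM3
  rw [ev_cons, ev_append, ev_Wqs, hB]
  push_cast
  ring


/-! ### growth bounds -/

noncomputable def B (N : ℕ) : ℝ := 1 + ∑ m ∈ Finset.Ico 1 N, (m : ℝ)⁻¹

theorem B_mono {n N : ℕ} (h : n ≤ N) : B n ≤ B N := by
  unfold B
  have := Finset.sum_le_sum_of_subset_of_nonneg (f := fun m : ℕ => (m : ℝ)⁻¹)
    (Finset.Ico_subset_Ico_right (a := 1) h) (fun i _ _ => by positivity)
  linarith

theorem one_le_B (N : ℕ) : 1 ≤ B N := by
  unfold B
  have : 0 ≤ ∑ m ∈ Finset.Ico 1 N, (m : ℝ)⁻¹ := Finset.sum_nonneg (fun i _ => by positivity)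
  linarith

theorem B_nonneg (N : ℕ) : 0 ≤ B N := le_trans zero_le_one (one_le_B N)

theorem sum_le_B (N : ℕ) : ∑ m ∈ Finset.Ico 1 N, (m : ℝ)⁻¹ ≤ B N := by unfold B; linarith

theorem abs_p_le (x m : ℕ) (hx : 2 ≤ x) : |p x m| ≤ (m : ℝ)⁻¹ := by
  unfold p
  rw [abs_mul, abs_pow, abs_pow, abs_neg, abs_one, one_pow, one_pow, one_mul, abs_of_nonneg (by positivity)]
  have h0 : (0 : ℝ) ≤ (m : ℝ)⁻¹ := by positivity
  have h1 : (m : ℝ)⁻¹ ≤ 1 := Nat.cast_inv_le_one m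
  calc ((m : ℝ)⁻¹) ^ (x / 2) ≤ ((m : ℝ)⁻¹) ^ 1 := pow_le_pow_of_le_one h0 h1 (by omega)
    _ = _ := pow_one _

theorem abs_p_sign (e m : ℕ) (he : e < 2) : |p e m| = 1 := by
  unfold p
  rw [show e / 2 = 0 by omega]
  simp

def big (w : List ℕ) : Bool := w.all (fun x => decide (2 ≤ x))

theorem abs_Z_le (w : List ℕ) (hw : big w = true) (n : ℕ) : |Z w n| ≤ B n ^ w.length := by
  induction w generalizing n with
  | nil => simp [Z_nil]
  | cons x w ih =>
    simp only [big, List.all_cons, Bool.and_eq_true, decide_eq_true_eq] at hw ih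
    rw [Z_cons, List.length_cons, pow_succ]
    calc |∑ m ∈ Finset.Ico 1 n, p x m * Z w m| ≤ ∑ m ∈ Finset.Ico 1 n, |p x m * Z w m| :=
          Finset.abs_sum_le_sum_abs _ _
      _ ≤ ∑ m ∈ Finset.Ico 1 n, B n ^ w.length * (m : ℝ)⁻¹ := by
          apply Finset.sum_le_sum
          intro m hm
          rw [abs_mul, mul_comm]
          apply mul_le_mul _ (abs_p_le x m hw.1) (abs_nonneg _) (pow_nonneg (B_nonneg _) _)
          refine (ih hw.2 m).trans ?_
          exact pow_le_pow_left₀ (B_nonneg _) (B_mono (Finset.mem_Ico.1 hm).2.le) _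
      _ = B n ^ w.length * ∑ m ∈ Finset.Ico 1 n, (m : ℝ)⁻¹ := by rw [Finset.mul_sum]
      _ ≤ _ := mul_le_mul_of_nonneg_left (sum_le_B n) (pow_nonneg (B_nonneg _) _)

theorem B_le_log (N : ℕ) (hN : 3 ≤ N) : B N ≤ 3 * Real.log N := by
  have h1 : ∑ m ∈ Finset.Ico 1 N, (m : ℝ)⁻¹ ≤ (harmonic N : ℝ) := by
    rw [harmonic_eq_sum_Icc]
    push_cast
    apply Finset.sum_le_sum_of_subset_of_nonneg
    · intro i hi
      rw [Finset.mem_Ico] at hi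
      rw [Finset.mem_Icc]; omega
    · intro i _ _; positivity
  have h2 := harmonic_le_one_add_log N
  have h3 : 1 ≤ Real.log N := by
    rw [Real.le_log_iff_exp_le (by positivity)]
    have := Real.exp_one_lt_d9
    have : (3 : ℝ) ≤ N := by exact_mod_cast hN
    linarith
  unfold B
  linarith

theorem B_lim (k : ℕ) : Tendsto (fun N : ℕ => B N ^ k * (N : ℝ)⁻¹) atTop (𝓝 0) := by
  have h := (Real.isLittleO_pow_log_id_atTop (n := k)).tendsto_div_nhds_zero
  have h2 := (h.comp tendsto_natCast_atTop_atTop).const_mul ((3 : ℝ) ^ k)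
  rw [mul_zero] at h2
  refine squeeze_zero' (Eventually.of_forall fun N => ?_) ?_ h2
  · exact mul_nonneg (pow_nonneg (B_nonneg _) _) (by positivity)
  · filter_upwards [eventually_ge_atTop 3] with N hN
    simp only [Function.comp, id]
    rw [← mul_div_assoc, ← mul_pow, div_eq_mul_inv]
    exact mul_le_mul_of_nonneg_right (pow_le_pow_left₀ (B_nonneg _) (B_le_log N hN) _) (by positivity)

theorem lim_of_bound (f : ℕ → ℝ) (k : ℕ) (C : ℝ) (h : ∀ N, 1 ≤ N → |f N| ≤ C * (B N ^ k * (N : ℝ)⁻¹)) :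
    Tendsto f atTop (𝓝 0) := by
  rw [tendsto_zero_iff_abs_tendsto_zero]
  have h2 := (B_lim k).const_mul C
  rw [mul_zero] at h2
  refine squeeze_zero' (Eventually.of_forall fun N => abs_nonneg _) ?_ h2
  filter_upwards [eventually_ge_atTop 1] with N hN using h N hN

theorem rem_lim (f : ℕ → ℕ → ℝ) (d : ℕ) (w v : List ℕ) (hd : 2 ≤ d) (hw : big w = true) (hv : big v = true)
    (hf : ∀ N k, 1 ≤ k → k < N → |f N k| ≤ (N : ℝ)⁻¹) :
    Tendsto (fun N => ∑ k ∈ Finset.Ico 1 N, (p d k * Z w k) * (f N k * Z v N)) atTop (𝓝 0) := by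
  apply lim_of_bound _ (w.length + v.length + 1) 1
  intro N hN
  have hB := B_nonneg N
  calc |∑ k ∈ Finset.Ico 1 N, (p d k * Z w k) * (f N k * Z v N)|
      ≤ ∑ k ∈ Finset.Ico 1 N, |(p d k * Z w k) * (f N k * Z v N)| := Finset.abs_sum_le_sum_abs _ _
    _ ≤ ∑ k ∈ Finset.Ico 1 N, (B N ^ (w.length + v.length) * (N : ℝ)⁻¹) * (k : ℝ)⁻¹ := by
        apply Finset.sum_le_sum
        intro k hk
        obtain ⟨hk1, hk2⟩ := Finset.mem_Ico.1 hk
        rw [abs_mul, abs_mul, abs_mul]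
        have h1 := abs_p_le d k hd
        have h2 : |Z w k| ≤ B N ^ w.length := (abs_Z_le w hw k).trans
          (pow_le_pow_left₀ (B_nonneg _) (B_mono hk2.le) _)
        have h3 := hf N k hk1 hk2
        have h4 := abs_Z_le v hv N
        calc |p d k| * |Z w k| * (|f N k| * |Z v N|)
            ≤ ((k : ℝ)⁻¹ * B N ^ w.length) * ((N : ℝ)⁻¹ * B N ^ v.length) := by gcongr
          _ = _ := by rw [pow_add]; ring
    _ = (B N ^ (w.length + v.length) * (N : ℝ)⁻¹) * ∑ k ∈ Finset.Ico 1 N, (k : ℝ)⁻¹ := by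
        rw [Finset.mul_sum]
    _ ≤ (B N ^ (w.length + v.length) * (N : ℝ)⁻¹) * B N := by
        apply mul_le_mul_of_nonneg_left (sum_le_B N); positivity
    _ = _ := by rw [pow_succ]; ring

theorem N1_lim (d : ℕ) (v : List ℕ) (e : ℕ) (w : List ℕ) (he : e < 2) (hd : 2 ≤ d)
    (hw : big w = true) (hv : big v = true) :
    Tendsto (fun N => ev N (gN1 e v d w)) atTop (𝓝 0) := by
  simp only [N1_exact _ d v e w he hd]
  apply rem_lim (fun N k => p e (N - 1) * FF (N - 1) k) d w v hd hw hv
  intro N k hk hN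
  rw [abs_mul, abs_p_sign e _ he, one_mul, abs_of_nonneg (FF_nonneg _ _)]
  refine (FF_le _ _ (by omega)).trans ((E_le _ _ hk).trans_eq ?_)
  rw [← Nat.cast_add_one, Nat.sub_add_cancel (by omega)]

theorem M3_lim (d : ℕ) (v : List ℕ) (w : List ℕ) (hd : 2 ≤ d)
    (hw : big w = true) (hv : big v = true) :
    Tendsto (fun N => ev N (gM3 v d w)) atTop (𝓝 0) := by
  simp only [M3_exact _ d v w hd]
  apply rem_lim (fun N k => E (N - 1) k) d w v hd hw hv
  intro N k hk hN
  rw [abs_of_nonneg (E_pos _ _).le]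
  refine (E_le _ _ hk).trans_eq ?_
  rw [← Nat.cast_add_one, Nat.sub_add_cancel (by omega)]

/-! ### shuffle products -/

noncomputable def G (a : ℕ) : PowerSeries ℝ :=
  if a = 0 then 1 else PowerSeries.mk (fun k => if k = 0 then 0 else p (a - 1) k)

noncomputable def F : List ℕ → PowerSeries ℝ
  | [] => 1
  | a :: l => PowerSeries.mk (fun n => (n : ℝ)⁻¹ * PowerSeries.coeff n (G a * F l))

noncomputable def th (f : PowerSeries ℝ) : PowerSeries ℝ := PowerSeries.X * PowerSeries.derivative ℝ f

theorem coeff_th (f : PowerSeries ℝ) (n : ℕ) :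
    PowerSeries.coeff n (th f) = n * PowerSeries.coeff n f := by
  unfold th
  cases n with
  | zero => simp
  | succ n => rw [PowerSeries.coeff_succ_X_mul, PowerSeries.coeff_derivative]; push_cast; ring

theorem th_mul (f g : PowerSeries ℝ) : th (f * g) = th f * g + f * th g := by
  unfold th
  rw [Derivation.leibniz]; simp only [smul_eq_mul]; ring

theorem coeff_F_zero (a : ℕ) (l : List ℕ) : PowerSeries.coeff 0 (F (a :: l)) = 0 := by
  simp [F]

def ok : List ℕ → Bool
  | [] => true
  | [a] => decide (1 ≤ a) && decide (a ≤ 2)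
  | a :: b :: l => decide (a ≤ 2) && ok (b :: l)

theorem ok_tail (a : ℕ) (l : List ℕ) (h : ok (a :: l) = true) : ok l = true := by
  cases l with
  | nil => rfl
  | cons b l => simp only [ok, Bool.and_eq_true] at h; exact h.2

theorem ok_head (a : ℕ) (l : List ℕ) (h : ok (a :: l) = true) : a ≤ 2 := by
  cases l with
  | nil => simp only [ok, Bool.and_eq_true, decide_eq_true_eq] at h; exact h.2
  | cons b l => simp only [ok, Bool.and_eq_true, decide_eq_true_eq] at h; exact h.1

theorem ok_zero (l : List ℕ) (h : ok (0 :: l) = true) : l ≠ [] := by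
  rintro rfl; simp [ok] at h

theorem th_F (a : ℕ) (l : List ℕ) (h : ok (a :: l) = true) : th (F (a :: l)) = G a * F l := by
  ext n
  rw [coeff_th]
  rcases Nat.eq_zero_or_pos n with rfl | hn
  · simp only [Nat.cast_zero, zero_mul]
    rw [PowerSeries.coeff_zero_eq_constantCoeff, map_mul]
    by_cases ha : a = 0
    · subst ha
      have := ok_zero l h
      obtain ⟨b, l', rfl⟩ := List.exists_cons_of_ne_nil this
      have h0 := coeff_F_zero b l'
      rw [PowerSeries.coeff_zero_eq_constantCoeff] at h0
      rw [h0, mul_zero]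
    · have : PowerSeries.constantCoeff (G a) = 0 := by
        rw [← PowerSeries.coeff_zero_eq_constantCoeff]; simp [G, ha]
      rw [this, zero_mul]
  · rw [F, PowerSeries.coeff_mk, mul_inv_cancel_left₀]
    have : n ≠ 0 := by omega
    exact_mod_cast this

def shIn (a : ℕ) (u : List ℕ) (f : List ℕ → List (List ℕ)) : List ℕ → List (List ℕ)
  | [] => [a :: u]
  | b :: v => (f (b :: v)).map (List.cons a) ++ (shIn a u f v).map (List.cons b)

def sh : List ℕ → List ℕ → List (List ℕ)
  | [] => fun v => [v]
  | a :: u => shIn a u (sh u)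

theorem sh_nil (v : List ℕ) : sh [] v = [v] := rfl
theorem sh_cons_nil (a : ℕ) (u : List ℕ) : sh (a :: u) [] = [a :: u] := rfl
theorem sh_cons_cons (a : ℕ) (u : List ℕ) (b : ℕ) (v : List ℕ) :
    sh (a :: u) (b :: v) = (sh u (b :: v)).map (List.cons a) ++
      (sh (a :: u) v).map (List.cons b) := rfl

noncomputable def FS (L : List (List ℕ)) : PowerSeries ℝ := (L.map F).sum

theorem FS_append (l l' : List (List ℕ)) : FS (l ++ l') = FS l + FS l' := by simp [FS]

theorem FS_map_cons (a : ℕ) (L : List (List ℕ)) :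
    FS (L.map (List.cons a)) = PowerSeries.mk (fun n => (n : ℝ)⁻¹ * PowerSeries.coeff n (G a * FS L)) := by
  induction L with
  | nil => ext n; simp [FS]
  | cons w L ih =>
    have : FS ((w :: L).map (List.cons a)) = F (a :: w) + FS (L.map (List.cons a)) := by
      simp [FS]
    rw [this, ih]
    ext n
    simp only [F, map_add, PowerSeries.coeff_mk, FS, List.map_cons, List.sum_cons, mul_add]

theorem sh_sound (u v : List ℕ) (hu : ok u = true) (hv : ok v = true) : F u * F v = FS (sh u v) := by
  induction u generalizing v with
  | nil => simp [sh_nil, FS, F]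
  | cons a u ihu =>
    induction v with
    | nil => simp [sh_cons_nil, FS, F]
    | cons b v ihv =>
      have h1 := ihu (b :: v) (ok_tail _ _ hu) hv
      have h2 := ihv (ok_tail _ _ hv)
      rw [sh_cons_cons, FS_append, FS_map_cons, FS_map_cons, ← h1, ← h2]
      have h3 : th (F (a :: u) * F (b :: v)) =
          G a * (F u * F (b :: v)) + G b * (F (a :: u) * F v) := by
        rw [th_mul, th_F a u hu, th_F b v hv]; ring
      ext n
      rw [map_add, PowerSeries.coeff_mk, PowerSeries.coeff_mk, ← mul_add, ← map_add, ← h3, coeff_th]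
      rcases Nat.eq_zero_or_pos n with rfl | hn
      · rw [PowerSeries.coeff_zero_eq_constantCoeff, map_mul, ← PowerSeries.coeff_zero_eq_constantCoeff,
          coeff_F_zero]
        simp
      · rw [inv_mul_cancel_left₀]
        have : n ≠ 0 := by omega
        exact_mod_cast this

def fl : ℕ → ℕ → List ℕ → List ℕ
  | _, _, [] => []
  | c, q, 0 :: l => fl (c + 1) q l
  | c, q, (a + 1) :: l => (2 * (c + 1) + (q + a) % 2) :: fl 0 a l

theorem p_add_mul (e n j : ℕ) (he : e < 2) : p e (n + j) = p e n * p e j := by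
  rw [p_sign e _ he, p_sign e _ he, p_sign e _ he, pow_add]

theorem p_sq (e n : ℕ) (he : e < 2) : p e n * p e n = 1 := by
  have := abs_p_sign e n he
  rw [← abs_mul_abs_self, this]; norm_num

theorem coeff_F_succ (a : ℕ) (ha : a < 2) (l : List ℕ) (n : ℕ) :
    PowerSeries.coeff n (F ((a + 1) :: l)) =
      (n : ℝ)⁻¹ * (p a n * ∑ j ∈ Finset.range n, p a j * PowerSeries.coeff j (F l)) := by
  rw [F, PowerSeries.coeff_mk, PowerSeries.coeff_mul]
  congr 1
  rw [Finset.Nat.sum_antidiagonal_eq_sum_range_succ_mk, ← Finset.sum_range_reflect,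
    Finset.sum_range_succ, Finset.mul_sum]
  have : PowerSeries.coeff 0 (G (a + 1)) = (0 : ℝ) := by simp [G]
  simp only [Nat.succ_eq_add_one, Nat.add_sub_cancel, Nat.sub_self, this, zero_mul, add_zero]
  apply Finset.sum_congr rfl
  intro j hj
  have hj := Finset.mem_range.1 hj
  rw [show n - (n - j) = j by omega]
  have h1 : PowerSeries.coeff (n - j) (G (a + 1)) = p a (n - j) := by
    have : n - j ≠ 0 := by omega
    simp [G, this]
  rw [h1]
  have h2 := p_add_mul a (n - j) j ha
  rw [show n - j + j = n by omega] at h2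
  rw [h2]
  linear_combination (-p a (n - j) * PowerSeries.coeff j (F l)) * p_sq a j ha

theorem p_mk (c q a n : ℕ) (hq : q < 2) (ha : a < 2) :
    p (2 * (c + 1) + (q + a) % 2) n = p q n * ((n : ℝ)⁻¹) ^ c * ((n : ℝ)⁻¹ * p a n) := by
  have h1 : 2 * (c + 1) + (q + a) % 2 = lm (2 * (c + 1)) (lm q a) := by unfold lm; omega
  rw [h1, p_lm, p_lm]
  have : p (2 * (c + 1)) n = ((n : ℝ)⁻¹) ^ (c + 1) := by
    unfold p
    rw [show 2 * (c + 1) % 2 = 0 by omega, show 2 * (c + 1) / 2 = c + 1 by omega]; simp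
  rw [this, pow_succ]; ring

theorem fl_sound (l : List ℕ) (c q : ℕ) (hq : q < 2) (hl : ok l = true) (hne : l ≠ []) (n : ℕ) (hn : 1 ≤ n) :
    dZ (fl c q l) n = p q n * ((n : ℝ)⁻¹) ^ c * PowerSeries.coeff n (F l) := by
  induction l generalizing c q n with
  | nil => exact absurd rfl hne
  | cons a l ih =>
    cases a with
    | zero =>
      rw [fl, ih (c + 1) q hq (ok_tail _ _ hl) (ok_zero l hl) n hn]
      rw [F, PowerSeries.coeff_mk, pow_succ]
      simp [G]; ring
    | succ a =>
      have ha : a < 2 := by have := ok_head _ _ hl; omega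
      rw [fl, dZ, p_mk c q a n hq ha, coeff_F_succ a ha]
      have key : Z (fl 0 a l) n = ∑ j ∈ Finset.range n, p a j * PowerSeries.coeff j (F l) := by
        cases l with
        | nil =>
          rw [fl, Z_nil, Finset.sum_eq_single 0]
          · simp [F, p_sign a 0 ha]
          · intro b _ hb
            simp [F, PowerSeries.coeff_one, hb]
          · intro h; exact absurd (Finset.mem_range.2 hn) h
        | cons b l =>
          have hZ : ∀ w : List ℕ, w ≠ [] → Z w n = ∑ j ∈ Finset.Ico 1 n, dZ w j := by
            intro w hw
            obtain ⟨x, w', rfl⟩ := List.exists_cons_of_ne_nil hw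
            rfl
          have hne2 : ∀ (l : List ℕ) (c q : ℕ), ok l = true → l ≠ [] → fl c q l ≠ [] := by
            intro l
            induction l with
            | nil => intro c q _ h; exact absurd rfl h
            | cons x l ihl =>
              intro c q h _
              cases x with
              | zero => rw [fl]; exact ihl _ _ (ok_tail _ _ h) (ok_zero l h)
              | succ x => rw [fl]; simp
          rw [hZ _ (hne2 _ _ _ (ok_tail _ _ hl) (by simp)), Finset.range_eq_Ico,
            Finset.sum_eq_sum_Ico_succ_bot (by omega : 0 < n), coeff_F_zero, mul_zero, zero_add]
          apply Finset.sum_congr rfl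
          intro j hj
          rw [ih 0 a ha (ok_tail _ _ hl) (by simp) j (Finset.mem_Ico.1 hj).1]
          simp
      rw [key]; ring

/-! ### regularised double shuffle relations -/

theorem fl_ne (l : List ℕ) (c q : ℕ) (h : ok l = true) (hne : l ≠ []) : fl c q l ≠ [] := by
  induction l generalizing c q with
  | nil => exact absurd rfl hne
  | cons x l ihl =>
    cases x with
    | zero => rw [fl]; exact ihl _ _ (ok_tail _ _ h) (ok_zero l h)
    | succ x => rw [fl]; simp

theorem fl_big (l : List ℕ) (c q : ℕ) : big (fl c q l) = true := by
  induction l generalizing c q with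
  | nil => rfl
  | cons x l ihl =>
    cases x with
    | zero => rw [fl]; exact ihl _ _
    | succ x =>
      rw [fl]
      have := ihl 0 x
      simp only [big, List.all_cons, Bool.and_eq_true, decide_eq_true_eq] at this ⊢
      exact ⟨by omega, this⟩

theorem coeff_eq (l : List ℕ) (h : ok l = true) (hne : l ≠ []) (n : ℕ) (hn : 1 ≤ n) :
    PowerSeries.coeff n (F l) = dZ (fl 0 0 l) n := by
  rw [fl_sound l 0 0 (by omega) h hne n hn, p_sign 0 n (by omega)]; simp [sg]

theorem coeff_zero' (l : List ℕ) (hne : l ≠ []) : PowerSeries.coeff 0 (F l) = 0 := by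
  obtain ⟨b, l', rfl⟩ := List.exists_cons_of_ne_nil hne
  exact coeff_F_zero b l'

theorem Z_fl (l : List ℕ) (h : ok l = true) (hne : l ≠ []) (N : ℕ) :
    Z (fl 0 0 l) N = ∑ n ∈ Finset.range N, PowerSeries.coeff n (F l) := by
  have h1 : Z (fl 0 0 l) N = ∑ j ∈ Finset.Ico 1 N, dZ (fl 0 0 l) j := by
    obtain ⟨x, w', hw⟩ := List.exists_cons_of_ne_nil (fl_ne l 0 0 h hne)
    rw [hw]; rfl
  rw [h1]
  rcases Nat.eq_zero_or_pos N with rfl | hN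
  · simp
  rw [Finset.range_eq_Ico, Finset.sum_eq_sum_Ico_succ_bot hN, coeff_zero' l hne, zero_add]
  apply Finset.sum_congr rfl
  intro j hj
  rw [coeff_eq l h hne j (Finset.mem_Ico.1 hj).1]

theorem coeff_le (l : List ℕ) (h : ok l = true) (hne : l ≠ []) (n N : ℕ) (hn : n ≤ N) :
    |PowerSeries.coeff n (F l)| ≤ (n : ℝ)⁻¹ * B N ^ (fl 0 0 l).length := by
  rcases Nat.eq_zero_or_pos n with rfl | hn1
  · rw [coeff_zero' l hne]; simp
  rw [coeff_eq l h hne n hn1]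
  have hb := fl_big l 0 0
  obtain ⟨x, w, hw⟩ := List.exists_cons_of_ne_nil (fl_ne l 0 0 h hne)
  rw [hw] at hb ⊢
  simp only [big, List.all_cons, Bool.and_eq_true, decide_eq_true_eq] at hb
  rw [dZ, abs_mul]
  apply mul_le_mul (abs_p_le x n hb.1) _ (abs_nonneg _) (by positivity)
  refine (abs_Z_le w hb.2 n).trans ?_
  refine (pow_le_pow_left₀ (B_nonneg _) (B_mono hn) _).trans ?_
  exact pow_le_pow_right₀ (one_le_B _) (by simp)

theorem conv_sum (f g : ℕ → ℝ) (N : ℕ) :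
    ∑ n ∈ Finset.range N, ∑ q ∈ Finset.HasAntidiagonal.antidiagonal n, f q.1 * g q.2 =
      ∑ j ∈ Finset.range N, g j * ∑ i ∈ Finset.range (N - j), f i := by
  induction N with
  | zero => simp
  | succ N ih =>
    have h : ∑ q ∈ Finset.HasAntidiagonal.antidiagonal N, f q.1 * g q.2 =
        ∑ k ∈ Finset.range (N + 1), f (N - k) * g k := by
      rw [Finset.Nat.sum_antidiagonal_eq_sum_range_succ_mk, ← Finset.sum_range_reflect]
      apply Finset.sum_congr rfl
      intro k hk
      have hk := Finset.mem_range.1 hk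
      simp only [Nat.succ_eq_add_one, Nat.add_sub_cancel]
      rw [show N - (N - k) = k by omega]
    rw [Finset.sum_range_succ, ih, h, Finset.sum_range_succ, Finset.sum_range_succ _ N,
      ← add_assoc, ← Finset.sum_add_distrib]
    congr 1
    · apply Finset.sum_congr rfl
      intro j hj
      have hj := Finset.mem_range.1 hj
      rw [show N + 1 - j = (N - j) + 1 by omega, Finset.sum_range_succ]
      ring
    · simp [mul_comm]

theorem conv_diff (f g : ℕ → ℝ) (N : ℕ) :
    (∑ i ∈ Finset.range N, f i) * (∑ j ∈ Finset.range N, g j) -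
      ∑ n ∈ Finset.range N, ∑ q ∈ Finset.HasAntidiagonal.antidiagonal n, f q.1 * g q.2 =
      ∑ j ∈ Finset.range N, g j * ∑ i ∈ Finset.Ico (N - j) N, f i := by
  rw [conv_sum, Finset.mul_sum, ← Finset.sum_sub_distrib]
  apply Finset.sum_congr rfl
  intro j hj
  rw [Finset.sum_Ico_eq_sub _ (Nat.sub_le N j)]; ring

theorem conv_bound (f g : ℕ → ℝ) (N : ℕ) (hN : 1 ≤ N) (X Y : ℝ) (hX : 0 ≤ X) (hY : 0 ≤ Y)
    (hf : ∀ i, i ≤ N → |f i| ≤ (i : ℝ)⁻¹ * X)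
    (hg : ∀ j, j ≤ N → |g j| ≤ (j : ℝ)⁻¹ * ((j : ℝ)⁻¹ * Y)) :
    |∑ j ∈ Finset.range N, g j * ∑ i ∈ Finset.Ico (N - j) N, f i| ≤
      2 * (X * Y * B N ^ 2 * (N : ℝ)⁻¹) := by
  have hB := one_le_B N
  have step : ∀ j ∈ Finset.range N, |g j * ∑ i ∈ Finset.Ico (N - j) N, f i| ≤
      (X * Y * (N : ℝ)⁻¹ * (2 * B N)) * (j : ℝ)⁻¹ := by
    intro j hj
    have hjN := Finset.mem_range.1 hj
    rcases Nat.eq_zero_or_pos j with rfl | hj1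
    · simp
    rw [abs_mul]
    have hj0 : (0 : ℝ) < j := by exact_mod_cast hj1
    have e1 : |∑ i ∈ Finset.Ico (N - j) N, f i| ≤ ∑ i ∈ Finset.Ico (N - j) N, (i : ℝ)⁻¹ * X :=
      (Finset.abs_sum_le_sum_abs _ _).trans
        (Finset.sum_le_sum fun i hi => hf i (Finset.mem_Ico.1 hi).2.le)
    have e2 : (j : ℝ)⁻¹ * ∑ i ∈ Finset.Ico (N - j) N, (i : ℝ)⁻¹ ≤ (N : ℝ)⁻¹ * (2 * B N) := by
      rw [Finset.mul_sum]
      calc ∑ i ∈ Finset.Ico (N - j) N, (j : ℝ)⁻¹ * (i : ℝ)⁻¹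
          ≤ ∑ i ∈ Finset.Ico (N - j) N, (N : ℝ)⁻¹ * ((i : ℝ)⁻¹ + (j : ℝ)⁻¹) := by
            apply Finset.sum_le_sum
            intro i hi
            obtain ⟨hi1, hi2⟩ := Finset.mem_Ico.1 hi
            have hi0 : (0 : ℝ) < i := by exact_mod_cast (by omega : 0 < i)
            have hN0 : (0 : ℝ) < N := by exact_mod_cast hN
            have hs : (N : ℝ) ≤ i + j := by exact_mod_cast (by omega : N ≤ i + j)
            have : (i : ℝ)⁻¹ + (j : ℝ)⁻¹ = (i + j) * ((j : ℝ)⁻¹ * (i : ℝ)⁻¹) := by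
              field_simp; ring
            rw [this, ← mul_assoc]
            apply le_mul_of_one_le_left (by positivity)
            rw [← div_eq_inv_mul, le_div_iff₀ hN0]; linarith
        _ = (N : ℝ)⁻¹ * (∑ i ∈ Finset.Ico (N - j) N, (i : ℝ)⁻¹ + ∑ i ∈ Finset.Ico (N - j) N, (j : ℝ)⁻¹) := by
            rw [← Finset.mul_sum, Finset.sum_add_distrib]
        _ ≤ (N : ℝ)⁻¹ * (2 * B N) := by
            apply mul_le_mul_of_nonneg_left _ (by positivity)
            have h1 : ∑ i ∈ Finset.Ico (N - j) N, (i : ℝ)⁻¹ ≤ B N := by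
              refine le_trans ?_ (sum_le_B N)
              apply Finset.sum_le_sum_of_subset_of_nonneg
              · exact Finset.Ico_subset_Ico_left (by omega)
              · intro i _ _; positivity
            have h2 : ∑ i ∈ Finset.Ico (N - j) N, (j : ℝ)⁻¹ = 1 := by
              rw [Finset.sum_const, Nat.card_Ico, show N - (N - j) = j by omega, nsmul_eq_mul,
                mul_inv_cancel₀ hj0.ne']
            linarith
    calc |g j| * |∑ i ∈ Finset.Ico (N - j) N, f i|
        ≤ ((j : ℝ)⁻¹ * ((j : ℝ)⁻¹ * Y)) * ∑ i ∈ Finset.Ico (N - j) N, (i : ℝ)⁻¹ * X :=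
          mul_le_mul (hg j hjN.le) e1 (abs_nonneg _) (by positivity)
      _ = (X * Y * (j : ℝ)⁻¹) * ((j : ℝ)⁻¹ * ∑ i ∈ Finset.Ico (N - j) N, (i : ℝ)⁻¹) := by
          rw [← Finset.sum_mul]; ring
      _ ≤ (X * Y * (j : ℝ)⁻¹) * ((N : ℝ)⁻¹ * (2 * B N)) :=
          mul_le_mul_of_nonneg_left e2 (by positivity)
      _ = _ := by ring
  have hs : ∑ j ∈ Finset.range N, (j : ℝ)⁻¹ ≤ B N := by
    rw [Finset.range_eq_Ico, Finset.sum_eq_sum_Ico_succ_bot (by omega : 0 < N)]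
    simpa using sum_le_B N
  calc _ ≤ ∑ j ∈ Finset.range N, |g j * ∑ i ∈ Finset.Ico (N - j) N, f i| :=
        Finset.abs_sum_le_sum_abs _ _
    _ ≤ ∑ j ∈ Finset.range N, (X * Y * (N : ℝ)⁻¹ * (2 * B N)) * (j : ℝ)⁻¹ := Finset.sum_le_sum step
    _ = (X * Y * (N : ℝ)⁻¹ * (2 * B N)) * ∑ j ∈ Finset.range N, (j : ℝ)⁻¹ := by rw [Finset.mul_sum]
    _ ≤ (X * Y * (N : ℝ)⁻¹ * (2 * B N)) * B N := by
        apply mul_le_mul_of_nonneg_left hs; positivity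
    _ = _ := by ring

theorem ok_cons (a : ℕ) (w : List ℕ) (ha : a ≤ 2) (hw : ok w = true) (hne : w ≠ []) :
    ok (a :: w) = true := by
  obtain ⟨b, l, rfl⟩ := List.exists_cons_of_ne_nil hne
  simp only [ok, Bool.and_eq_true, decide_eq_true_eq]
  exact ⟨ha, hw⟩

theorem sh_ok (u v : List ℕ) (hu : ok u = true) (hv : ok v = true) (h : u ≠ [] ∨ v ≠ []) :
    ∀ w ∈ sh u v, ok w = true ∧ w ≠ [] := by
  induction u generalizing v with
  | nil =>
    intro w hw
    rw [sh_nil, List.mem_singleton] at hw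
    subst hw
    exact ⟨hv, by simpa using h⟩
  | cons a u ihu =>
    induction v with
    | nil =>
      intro w hw
      rw [sh_cons_nil, List.mem_singleton] at hw
      subst hw
      exact ⟨hu, by simp⟩
    | cons b v ihv =>
      intro w hw
      rw [sh_cons_cons, List.mem_append, List.mem_map, List.mem_map] at hw
      rcases hw with ⟨w', hw', rfl⟩ | ⟨w', hw', rfl⟩
      · obtain ⟨h1, h2⟩ := ihu (b :: v) (ok_tail _ _ hu) hv (Or.inr (by simp)) w' hw'
        exact ⟨ok_cons a w' (ok_head _ _ hu) h1 h2, by simp⟩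
      · obtain ⟨h1, h2⟩ := ihv (ok_tail _ _ hv) (Or.inl (by simp)) w' hw'
        exact ⟨ok_cons b w' (ok_head _ _ hv) h1 h2, by simp⟩

def gSt (u v : List ℕ) : List (ℤ × Col) :=
  (-1, Col.P u v) :: (qs u v).map (fun k => (1, Col.Z k))

theorem St_sound (N : ℕ) (hN : 1 ≤ N) (u v : List ℕ) : ev N (gSt u v) = 0 := by
  unfold gSt
  rw [ev_cons, ev_Z, ← qs_sound u v N hN]
  simp [val]

def gDS (u v : List ℕ) : List (ℤ × Col) :=
  (qs (fl 0 0 u) (fl 0 0 v)).map (fun k => (1, Col.Z k)) ++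
    (sh u v).map (fun k => (-1, Col.Z (fl 0 0 k)))

theorem ev_sh (N : ℕ) (L : List (List ℕ)) (h : ∀ w ∈ L, ok w = true ∧ w ≠ []) :
    ev N (L.map (fun k => (-1, Col.Z (fl 0 0 k)))) =
      -∑ n ∈ Finset.range N, PowerSeries.coeff n (FS L) := by
  induction L with
  | nil => simp [ev, FS]
  | cons w L ih =>
    obtain ⟨h1, h2⟩ := h w (by simp)
    rw [List.map_cons, ev_cons, ih (fun w' hw' => h w' (by simp [hw']))]
    have : FS (w :: L) = F w + FS L := by simp [FS]
    rw [this, val, Z_fl w h1 h2]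
    simp only [map_add, Finset.sum_add_distrib]
    push_cast; ring

theorem DS_lim (u v : List ℕ) (hu : ok u = true) (hv : ok (0 :: v) = true) (hne : u ≠ []) :
    Tendsto (fun N => ev N (gDS u (0 :: v))) atTop (𝓝 0) := by
  apply lim_of_bound _ ((fl 0 0 u).length + (fl 0 0 v).length + 2) 2
  intro N hN
  have e1 : ev N (gDS u (0 :: v)) =
      ∑ j ∈ Finset.range N, PowerSeries.coeff j (F (0 :: v)) *
        ∑ i ∈ Finset.Ico (N - j) N, PowerSeries.coeff i (F u) := by
    unfold gDS
    rw [ev_append, ev_Z, ← qs_sound _ _ N hN, ev_sh N _ (sh_ok u _ hu hv (Or.inl hne)),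
      ← sh_sound u _ hu hv, Z_fl u hu hne, Z_fl _ hv (by simp), ← conv_diff]
    simp only [PowerSeries.coeff_mul]
    push_cast; ring
  rw [e1]
  have hB := B_nonneg N
  refine (conv_bound _ _ N hN (B N ^ (fl 0 0 u).length) (B N ^ (fl 0 0 v).length) (by positivity)
    (by positivity) (fun i hi => coeff_le u hu hne i N hi) ?_).trans_eq ?_
  · intro j hj
    have : PowerSeries.coeff j (F (0 :: v)) = (j : ℝ)⁻¹ * PowerSeries.coeff j (F v) := by
      simp [F, G]
    rw [this, abs_mul, abs_of_nonneg (by positivity : (0 : ℝ) ≤ (j : ℝ)⁻¹)]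
    apply mul_le_mul_of_nonneg_left _ (by positivity)
    exact coeff_le v (ok_tail _ _ hv) (ok_zero v hv) j N hj
  · rw [pow_add, pow_add]

/-! ### certificates -/

inductive Rel where
  | K1 (c : ℕ) (u : List ℕ) (e : ℕ) (w : List ℕ)
  | N1 (e : ℕ) (v : List ℕ) (d : ℕ) (w : List ℕ)
  | K3 (c : ℕ) (u w : List ℕ)
  | M3 (v : List ℕ) (d : ℕ) (w : List ℕ)
  | St (u v : List ℕ)
  | DS (u v : List ℕ)

def gen : Rel → List (ℤ × Col)
  | .K1 c u e w => gK1 c u e w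
  | .N1 e v d w => gN1 e v d w
  | .K3 c u w => gK3 c u w
  | .M3 v d w => gM3 v d w
  | .St u v => gSt u v
  | .DS u v => gDS u (0 :: v)

def valid : Rel → Bool
  | .K1 c _ e _ => Nat.ble 4 c && Nat.blt e 2
  | .N1 e v d w => Nat.blt e 2 && (Nat.ble 2 d && (big v && big w))
  | .K3 c _ _ => Nat.ble 2 c
  | .M3 v d w => Nat.ble 2 d && (big v && big w)
  | .St _ _ => true
  | .DS u v => ok u && (ok (0 :: v) && !u.isEmpty)

theorem gen_lim (r : Rel) (h : valid r = true) : Tendsto (fun N => ev N (gen r)) atTop (𝓝 0) := by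
  cases r with
  | K1 c u e w =>
    simp only [valid, Bool.and_eq_true, Nat.ble_eq, Nat.blt_eq] at h
    simp only [gen, K1_sound _ c u e w h.2 h.1]; exact tendsto_const_nhds
  | N1 e v d w =>
    simp only [valid, Bool.and_eq_true, Nat.ble_eq, Nat.blt_eq] at h
    exact N1_lim d v e w h.1 h.2.1 h.2.2.2 h.2.2.1
  | K3 c u w =>
    simp only [valid, Nat.ble_eq] at h
    simp only [gen, K3_sound _ c u w h]; exact tendsto_const_nhds
  | M3 v d w =>
    simp only [valid, Bool.and_eq_true, Nat.ble_eq] at h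
    exact M3_lim d v w h.1 h.2.2 h.2.1
  | St u v =>
    apply tendsto_const_nhds.congr'
    filter_upwards [eventually_ge_atTop 1] with N hN
    exact (St_sound N hN u v).symm
  | DS u v =>
    simp only [valid, Bool.and_eq_true] at h
    apply DS_lim u v h.1 h.2.1
    rintro rfl
    simp at h

inductive Tr where
  | leaf
  | node (l : Tr) (k : ℕ) (c : Col) (v : ℤ) (r : Tr)

def hl (l : List ℕ) (s : ℕ) : ℕ := l.foldl (fun a x => a * 37 + x + 1) s

def hc : Col → ℕ
  | .W c w => (hl (c :: w) 1 * 2654435761) % 4294967296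
  | .D c u d w => (hl (c :: u) (hl (d :: w) 2 * 41) * 2654435761) % 4294967296
  | .T c u d w => (hl (c :: u) (hl (d :: w) 3 * 41) * 2654435761) % 4294967296
  | .Z w => (hl w 4 * 2654435761) % 4294967296
  | .P u v => (hl u (hl v 5 * 41) * 2654435761) % 4294967296

def ins (k : ℕ) (c : Col) (v : ℤ) : Tr → Tr
  | .leaf => .node .leaf k c v .leaf
  | .node l k' c' v' r =>
    bif Nat.blt k k' then .node (ins k c v l) k' c' v' r
    else bif Nat.blt k' k then .node l k' c' v' (ins k c v r)
    else bif decide (c = c') then .node l k' c' (v' + v) r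
    else .node l k' c' v' (ins k c v r)

noncomputable def evT (N : ℕ) : Tr → ℝ
  | .leaf => 0
  | .node l _ c v r => evT N l + (v : ℝ) * val N c + evT N r

def allz : Tr → Bool
  | .leaf => true
  | .node l _ _ v r => allz l && (decide (v = 0) && allz r)

theorem evT_ins (N k : ℕ) (c : Col) (v : ℤ) (t : Tr) :
    evT N (ins k c v t) = evT N t + (v : ℝ) * val N c := by
  induction t with
  | leaf => simp [ins, evT]
  | node l k' c' v' r ihl ihr =>
    rw [ins]
    cases Nat.blt k k' <;> simp only [cond_true, cond_false]
    · cases Nat.blt k' k <;> simp only [cond_true, cond_false]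
      · by_cases hcc : c = c'
        · subst hcc
          simp only [decide_true, cond_true, evT]
          push_cast; ring
        · simp only [hcc, decide_false, cond_false, evT, ihr]; ring
      · simp only [evT, ihr]; ring
    · simp only [evT, ihl]; ring

theorem evT_allz (N : ℕ) (t : Tr) (h : allz t = true) : evT N t = 0 := by
  induction t with
  | leaf => rfl
  | node l k c v r ihl ihr =>
    simp only [allz, Bool.and_eq_true, decide_eq_true_eq] at h
    rw [evT, ihl h.1, ihr h.2.2, h.2.1]; simp

/-- continuation-passing form of `ins`, so that trees get fully evaluated by the kernel -/
def insK (k : ℕ) (c : Col) (v : ℤ) : Tr → (Tr → Bool) → Bool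
  | .leaf, f => f (.node .leaf k c v .leaf)
  | .node l k' c' v' r, f =>
    bif Nat.blt k k' then insK k c v l (fun l' => f (.node l' k' c' v' r))
    else bif Nat.blt k' k then insK k c v r (fun r' => f (.node l k' c' v' r'))
    else bif decide (c = c') then f (.node l k' c' (v' + v) r)
    else insK k c v r (fun r' => f (.node l k' c' v' r'))

theorem insK_eq (k : ℕ) (c : Col) (v : ℤ) (t : Tr) (f : Tr → Bool) :
    insK k c v t f = f (ins k c v t) := by
  induction t generalizing f with
  | leaf => rfl
  | node l k' c' v' r ihl ihr =>
    rw [insK, ins, ihl, ihr]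
    cases Nat.blt k k' <;> cases Nat.blt k' k <;> cases decide (c = c') <;> rfl

def addL (a : ℤ) : List (ℤ × Col) → Tr → (Tr → Bool) → Bool
  | [], t, f => f t
  | (b, c) :: l, t, f => insK (hc c) c (a * b) t (fun t' => addL a l t' f)

theorem addL_sound (a : ℤ) (l : List (ℤ × Col)) (t : Tr) (f : Tr → Bool) (h : addL a l t f = true) :
    ∃ t', f t' = true ∧ ∀ N, evT N t' = evT N t + (a : ℝ) * ev N l := by
  induction l generalizing t with
  | nil => exact ⟨t, h, fun N => by simp [ev]⟩
  | cons x l ih =>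
    obtain ⟨b, c⟩ := x
    rw [addL, insK_eq] at h
    obtain ⟨t', h1, h2⟩ := ih _ h
    refine ⟨t', h1, fun N => ?_⟩
    rw [h2, evT_ins, ev_cons]; push_cast; ring

def addC : List (ℤ × Rel) → Tr → Bool
  | [], t => allz t
  | (a, r) :: l, t => addL a (gen r) t (fun t' => addC l t')

noncomputable def evC (N : ℕ) : List (ℤ × Rel) → ℝ
  | [] => 0
  | (a, r) :: l => (a : ℝ) * ev N (gen r) + evC N l

theorem addC_sound (l : List (ℤ × Rel)) (t : Tr) (h : addC l t = true) (N : ℕ) :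
    evT N t + evC N l = 0 := by
  induction l generalizing t with
  | nil => rw [evC, evT_allz N t h, add_zero]
  | cons x l ih =>
    obtain ⟨b, c⟩ := x
    rw [addC] at h
    obtain ⟨t', h1, h2⟩ := addL_sound _ _ _ _ h
    have h3 := ih t' h1
    rw [h2] at h3
    rw [evC]; linarith

theorem evC_lim (l : List (ℤ × Rel)) (h : l.all (fun x => valid x.2) = true) :
    Tendsto (fun N => evC N l) atTop (𝓝 0) := by
  induction l with
  | nil => simp only [evC]; exact tendsto_const_nhds
  | cons x l ih =>
    obtain ⟨b, c⟩ := x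
    simp only [List.all_cons, Bool.and_eq_true] at h
    simp only [evC]
    simpa using ((gen_lim c h.1).const_mul (b : ℝ)).add (ih h.2)

theorem cert_sound (l : List (ℤ × Rel)) (tg : List (ℤ × Col))
    (hv : l.all (fun x => valid x.2) = true)
    (h : addL (-1) tg .leaf (fun t => addC l t) = true) :
    Tendsto (fun N => ev N tg) atTop (𝓝 0) := by
  refine (evC_lim l hv).congr ?_
  intro N
  obtain ⟨t', h1, h2⟩ := addL_sound _ _ _ _ h
  have h3 := addC_sound l t' h1 N
  rw [h2] at h3
  simp only [evT] at h3
  push_cast at h3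
  linarith

def cert0 : List (ℤ × Rel) := [
  (-1006530626226475040256, .M3 [4, 2] 4 [2, 2]),
  (1006530626226475040256, .K3 4 [4, 2] [2, 2]),
  (-1006530626226475040256, .M3 [2] 4 [4, 2, 2]),
  (-1006530626226475040256, .M3 [] 6 [4, 2, 2]),
  (1006530626226475040256, .K3 4 [2] [4, 2, 2]),
  (1006530626226475040256, .K3 6 [4, 2] [2]),
  (1006530626226475040256, .K3 8 [4, 2] []),
  (-151838000118330765696, .M3 [8] 4 [2]),
  (151838000118330765696, .K3 4 [8] [2]),
  (151838000118330765696, .K3 6 [8] []),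
  (151838000118330765696, .K3 8 [] [4, 2]),
  (151838000118330765696, .K3 6 [] [2, 4, 2]),
  (151838000118330765696, .K3 4 [] [2, 2, 4, 2]),
  (-151838000118330765696, .M3 [] 4 [2, 2, 4, 2]),
  (40307429828453978223902, .M3 [8] 6 []),
  (40307429828453978223902, .M3 [2, 8] 4 []),
  (-40307429828453978223902, .K3 4 [2, 8] []),
  (-40307429828453978223902, .K3 8 [] [6]),
  (-40307429828453978223902, .K3 6 [] [2, 6]),
  (-40307429828453978223902, .K3 4 [] [2, 2, 6]),
  (40307429828453978223902, .M3 [] 4 [2, 2, 6]),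
  (-36126239427294363648, .M3 [2] 4 [2, 6]),
  (-36126239427294363648, .M3 [] 6 [2, 6]),
  (36126239427294363648, .K3 4 [2] [2, 6]),
  (36126239427294363648, .K3 6 [2] [6]),
  (-36126239427294363648, .M3 [6, 2] 6 []),
  (-36126239427294363648, .M3 [2, 6, 2] 4 []),
  (36126239427294363648, .K3 4 [2, 6, 2] []),
  (-303288265400075707392, .N1 1 [10] 5 []),
  (606576530800151414784, .K1 5 [10] 1 []),
  (-303288265400075707392, .K1 13 [] 1 [2]),
  (9545929977480471562752, .K1 15 [] 1 []),
  (3019591878679425120768, .M3 [4] 4 [2, 2, 2]),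
  (-3019591878679425120768, .K3 4 [4] [2, 2, 2]),
  (-3019591878679425120768, .K3 4 [] [4, 2, 2, 2]),
  (3019591878679425120768, .M3 [] 4 [4, 2, 2, 2]),
  (-3019591878679425120768, .K3 6 [4] [2, 2]),
  (-3019591878679425120768, .K3 8 [4] [2]),
  (-3019591878679425120768, .K3 10 [4] []),
  (351427312994906754432, .M3 [10] 4 [])]

def cert1 : List (ℤ × Rel) := [
  (-351427312994906754432, .K3 4 [10] []),
  (-351427312994906754432, .K3 10 [] [4]),
  (-351427312994906754432, .K3 8 [] [2, 4]),
  (-351427312994906754432, .K3 6 [] [2, 2, 4]),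
  (-351427312994906754432, .K3 4 [] [2, 2, 2, 4]),
  (351427312994906754432, .M3 [] 4 [2, 2, 2, 4]),
  (3355102087421583467520, .K1 9 [] 1 [4, 2]),
  (-3786725795576672434176, .K1 5 [] 1 [4, 4, 2]),
  (1893362897788336217088, .N1 1 [] 5 [4, 4, 2]),
  (109590187715370418094512, .M3 [4] 4 [2, 4]),
  (-109590187715370418094512, .K3 4 [4] [2, 4]),
  (-109590187715370418094512, .K3 4 [] [4, 2, 4]),
  (109590187715370418094512, .M3 [] 4 [4, 2, 4]),
  (-109590187715370418094512, .K3 6 [4] [4]),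
  (109590187715370418094512, .M3 [6, 4] 4 []),
  (-109590187715370418094512, .K3 4 [6, 4] []),
  (3051426087184921936128, .N1 1 [6] 5 [4]),
  (-6102852174369843872256, .K1 5 [6] 1 [4]),
  (3051426087184921936128, .K1 9 [] 1 [2, 4]),
  (-2724276801226504336128, .K1 5 [] 1 [4, 2, 4]),
  (1362138400613252168064, .N1 1 [] 5 [4, 2, 4]),
  (2603691407358791649792, .K1 9 [6] 1 []),
  (-5552029415916654041088, .K1 11 [] 1 [4]),
  (-531224497175084049024, .M3 [2] 4 [2, 2, 4]),
  (-531224497175084049024, .M3 [] 6 [2, 2, 4]),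
  (531224497175084049024, .K3 4 [2] [2, 2, 4]),
  (531224497175084049024, .K3 6 [2] [2, 4]),
  (531224497175084049024, .K3 8 [2] [4]),
  (-531224497175084049024, .M3 [8, 2] 4 []),
  (531224497175084049024, .K3 4 [8, 2] []),
  (826733442046297745664, .M3 [6] 4 [2, 2]),
  (-826733442046297745664, .K3 4 [6] [2, 2]),
  (-826733442046297745664, .K3 6 [6] [2]),
  (-826733442046297745664, .K3 6 [] [4, 2, 2]),
  (-826733442046297745664, .K3 4 [] [2, 4, 2, 2]),
  (826733442046297745664, .M3 [] 4 [2, 4, 2, 2]),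
  (-826733442046297745664, .K3 8 [6] []),
  (-2500603328731732104960, .N1 1 [2] 5 [4, 4]),
  (5001206657463464209920, .K1 5 [2] 1 [4, 4]),
  (2500603328731732104960, .K1 7 [] 1 [4, 4])]

def cert2 : List (ℤ × Rel) := [
  (-2500603328731732104960, .K1 5 [] 1 [2, 4, 4]),
  (1250301664365866052480, .N1 1 [] 5 [2, 4, 4]),
  (-5655505229380299409920, .K1 9 [2] 1 [4]),
  (2187790936038158178816, .K1 13 [2] 1 []),
  (503265313113237520128, .M3 [4, 2] 4 [4]),
  (-503265313113237520128, .K3 4 [4, 2] [4]),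
  (503265313113237520128, .M3 [2] 4 [4, 4]),
  (503265313113237520128, .M3 [] 6 [4, 4]),
  (-503265313113237520128, .K3 4 [2] [4, 4]),
  (503265313113237520128, .M3 [4, 4, 2] 4 []),
  (-503265313113237520128, .K3 4 [4, 4, 2] []),
  (866429268969022308864, .M3 [2, 2] 4 [2, 2, 2]),
  (-866429268969022308864, .K3 4 [2, 2] [2, 2, 2]),
  (866429268969022308864, .M3 [2] 6 [2, 2, 2]),
  (866429268969022308864, .M3 [] 8 [2, 2, 2]),
  (-866429268969022308864, .K3 6 [2, 2] [2, 2]),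
  (-866429268969022308864, .K3 8 [2, 2] [2]),
  (-866429268969022308864, .K3 10 [2, 2] []),
  (-1732858537938044617728, .M3 [2] 4 [2, 2, 2, 2]),
  (-1732858537938044617728, .M3 [] 6 [2, 2, 2, 2]),
  (1732858537938044617728, .K3 4 [2] [2, 2, 2, 2]),
  (1732858537938044617728, .K3 6 [2] [2, 2, 2]),
  (1732858537938044617728, .K3 8 [2] [2, 2]),
  (1732858537938044617728, .K3 10 [2] [2]),
  (1732858537938044617728, .K3 12 [2] []),
  (-2604466877031963297792, .N1 1 [6, 2] 5 [2]),
  (5208933754063926595584, .K1 5 [6, 2] 1 [2]),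
  (5208933754063926595584, .N1 1 [2, 6, 2] 5 []),
  (-10417867508127853191168, .K1 5 [2, 6, 2] 1 []),
  (-5208933754063926595584, .K1 7 [6, 2] 1 []),
  (-1302233438515981648896, .N1 1 [2] 5 [4, 2, 2]),
  (2604466877031963297792, .K1 5 [2] 1 [4, 2, 2]),
  (1302233438515981648896, .K1 7 [] 1 [4, 2, 2]),
  (-1302233438515981648896, .K1 5 [] 1 [2, 4, 2, 2]),
  (651116719257990824448, .N1 1 [] 5 [2, 4, 2, 2]),
  (-2604466877031963297792, .K1 9 [2] 1 [2, 2]),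
  (-3051813822021507760128, .N1 1 [8] 5 [2]),
  (6103627644043015520256, .K1 5 [8] 1 [2]),
  (6103627644043015520256, .N1 1 [2, 8] 5 []),
  (-12207255288086031040512, .K1 5 [2, 8] 1 [])]

def cert3 : List (ℤ × Rel) := [
  (-6103627644043015520256, .K1 7 [8] 1 []),
  (-3051813822021507760128, .K1 11 [] 1 [2, 2]),
  (3467714293342141231104, .N1 1 [8, 2] 5 []),
  (-6935428586684282462208, .K1 5 [8, 2] 1 []),
  (3467714293342141231104, .K1 11 [2] 1 [2]),
  (3690612296163741814272, .N1 0 [9] 7 []),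
  (7381224592327483628544, .K1 6 [9] 1 []),
  (-3690612296163741814272, .K1 9 [] 1 [6]),
  (3690612296163741814272, .K1 5 [] 1 [4, 6]),
  (-1845306148081870907136, .N1 1 [] 5 [4, 6]),
  (-826733442046297745664, .M3 [2, 2] 4 [2, 4]),
  (826733442046297745664, .K3 4 [2, 2] [2, 4]),
  (-826733442046297745664, .M3 [2] 6 [2, 4]),
  (-826733442046297745664, .M3 [] 8 [2, 4]),
  (826733442046297745664, .K3 6 [2, 2] [4]),
  (-826733442046297745664, .M3 [6, 2, 2] 4 []),
  (826733442046297745664, .K3 4 [6, 2, 2] []),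
  (240051438129933873974765, .M3 [6] 4 [4]),
  (-240051438129933873974765, .K3 4 [6] [4]),
  (240051438129933873974765, .M3 [4, 6] 4 []),
  (-240051438129933873974765, .K3 4 [4, 6] []),
  (-240051438129933873974765, .K3 6 [] [4, 4]),
  (-240051438129933873974765, .K3 4 [] [2, 4, 4]),
  (240051438129933873974765, .M3 [] 4 [2, 4, 4]),
  (39820081619593489111454, .DS [1] [1, 1, 0, 0, 1]),
  (-39820081619593489111454, .M3 [6] 8 []),
  (-39820081619593489111454, .M3 [2, 6] 6 []),
  (-39820081619593489111454, .M3 [2, 2, 6] 4 []),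
  (39820081619593489111454, .K3 4 [2, 2, 6] []),
  (39820081619593489111454, .K3 6 [] [8]),
  (39820081619593489111454, .K3 4 [] [2, 8]),
  (-39820081619593489111454, .M3 [] 4 [2, 8]),
  (-240554703443047111494893, .M3 [4] 4 [6]),
  (240554703443047111494893, .K3 4 [4] [6]),
  (240554703443047111494893, .K3 4 [] [4, 6]),
  (-240554703443047111494893, .M3 [] 4 [4, 6]),
  (-240554703443047111494893, .M3 [4, 4] 6 []),
  (-240554703443047111494893, .M3 [2, 4, 4] 4 []),
  (240554703443047111494893, .K3 4 [2, 4, 4] []),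
  (-113102114917123348195050, .DS [1] [1, 0, 0, 1, 1])]

def cert4 : List (ℤ × Rel) := [
  (-179124870131684300889264, .DS [1] [0, 0, 1, 1, 1]),
  (14927072510973691740772, .DS [0, 1] [0, 1, 1, 1]),
  (-173637138403064412903802, .DS [1] [0, 1, 0, 1, 1]),
  (48842286415142324471663, .DS [0, 1] [1, 0, 1, 1]),
  (18522853594759182979027, .DS [1] [1, 0, 0, 0, 1]),
  (34601002026231859442332, .DS [1] [0, 1, 0, 0, 1]),
  (22150643400524647721851, .DS [1] [0, 0, 1, 0, 1]),
  (45108861724172367471364, .DS [1] [0, 0, 0, 1, 1]),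
  (-22084933851807199538851, .DS [0, 1] [1, 0, 0, 1]),
  (-52583545355686251342647, .DS [0, 1] [0, 1, 0, 1]),
  (-27959100490243604575708, .DS [0, 1] [0, 0, 1, 1]),
  (-109086922402257180574384, .M3 [2, 4] 4 [4]),
  (109086922402257180574384, .K3 4 [2, 4] [4]),
  (-109086922402257180574384, .M3 [4] 6 [4]),
  (109086922402257180574384, .K3 4 [] [6, 4]),
  (-109086922402257180574384, .M3 [] 4 [6, 4]),
  (-109086922402257180574384, .M3 [4, 2, 4] 4 []),
  (109086922402257180574384, .K3 4 [4, 2, 4] []),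
  (200734621823453622383439, .DS [1] [1, 0, 1, 0, 1]),
  (7468831332380072787840, .DS [0, 0, 1] [0, 1, 1]),
  (18329539884239288361811, .DS [0, 1] [1, 1, 0, 1]),
  (-109977239305435730170866, .DS [1] [0, 1, 1, 0, 1]),
  (-24603438116895132402240, .St [4] [10]),
  (18677445418004083189056, .St [6] [8]),
  (-22381728148666928520932, .DS [0, 0, 1] [0, 0, 1]),
  (48056846175271209439764, .DS [0, 1] [0, 0, 0, 1]),
  (-33228275371838251710352, .DS [1] [0, 0, 0, 0, 1]),
  (1408298316460008339456, .DS [2] [0, 2, 1, 0, 2]),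
  (1408298316460008339456, .DS [2] [0, 1, 2, 0, 1]),
  (-1768277929519627594752, .DS [1] [2, 0, 2, 0, 1]),
  (1813686658108087707648, .DS [2] [0, 1, 0, 2, 2]),
  (1813686658108087707648, .DS [2] [0, 2, 0, 1, 1]),
  (6879773512634903854080, .DS [1] [2, 0, 2, 0, 2]),
  (12847198549565935276032, .DS [1] [2, 0, 0, 2, 2]),
  (-1819939343551142197248, .DS [2] [0, 1, 2, 0, 2]),
  (-1819939343551142197248, .DS [2] [0, 2, 1, 0, 1]),
  (1159540686094417225728, .DS [2] [0, 0, 1, 2, 2]),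
  (1159540686094417225728, .DS [2] [0, 0, 2, 1, 1]),
  (2445511096263731023872, .DS [2] [1, 0, 0, 2, 2]),
  (2445511096263731023872, .DS [2] [2, 0, 0, 1, 1])]

def cert5 : List (ℤ × Rel) := [
  (5423083531316775684096, .DS [2] [0, 0, 2, 1, 2]),
  (5423083531316775684096, .DS [2] [0, 0, 1, 2, 1]),
  (587123700101171435520, .DS [2] [2, 0, 1, 0, 2]),
  (587123700101171435520, .DS [2] [1, 0, 2, 0, 1]),
  (-3004984596900832696320, .DS [1] [2, 0, 0, 2, 1]),
  (-2673604070450944346112, .DS [2] [2, 0, 0, 1, 2]),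
  (-2673604070450944346112, .DS [2] [1, 0, 0, 2, 1]),
  (1402633194089309915136, .DS [2] [1, 0, 2, 0, 2]),
  (1402633194089309915136, .DS [2] [2, 0, 1, 0, 1]),
  (3171865867983369148416, .DS [0, 2] [2, 2, 0, 2]),
  (40653089206773080064, .DS [0, 1] [2, 1, 0, 1]),
  (-3627419712512614944768, .DS [1] [2, 0, 0, 1, 1]),
  (-2563713416894740675584, .DS [0, 1] [2, 0, 1, 1]),
  (5448586512377825946624, .DS [0, 2] [2, 0, 2, 2]),
  (-53911926790984108032, .DS [2] [0, 2, 0, 1, 2]),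
  (-53911926790984108032, .DS [2] [0, 1, 0, 2, 1]),
  (673289805279908256768, .DS [2] [1, 0, 1, 0, 1]),
  (673289805279908256768, .DS [2] [2, 0, 2, 0, 2]),
  (-3286764110504505065472, .DS [2] [1, 0, 0, 1, 2]),
  (-3286764110504505065472, .DS [2] [2, 0, 0, 2, 1]),
  (677460584730361528320, .DS [2] [1, 0, 0, 1, 1]),
  (677460584730361528320, .DS [2] [2, 0, 0, 2, 2]),
  (870467478866192212992, .DS [2] [1, 0, 1, 0, 2]),
  (870467478866192212992, .DS [2] [2, 0, 2, 0, 1]),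
  (-332191036587766831104, .DS [2] [0, 1, 1, 0, 1]),
  (-332191036587766831104, .DS [2] [0, 2, 2, 0, 2]),
  (-5207521700172091447296, .DS [0, 1] [2, 0, 2, 1]),
  (7617158016995333849088, .DS [2] [0, 1, 0, 1, 1]),
  (7617158016995333849088, .DS [2] [0, 2, 0, 2, 2]),
  (15183486726881971654656, .DS [2] [0, 0, 1, 1, 1]),
  (15183486726881971654656, .DS [2] [0, 0, 2, 2, 2]),
  (-1410766711313424688128, .DS [0, 2] [2, 1, 0, 2]),
  (-3282149586802134644736, .DS [2] [0, 1, 0, 1, 2]),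
  (-3282149586802134644736, .DS [2] [0, 2, 0, 2, 1]),
  (-1183922506129149766656, .DS [0, 2] [2, 0, 2, 1]),
  (-1316886519778557339648, .DS [0, 2] [1, 0, 2, 2]),
  (6843036951733155821568, .DS [0, 2] [0, 1, 2, 1]),
  (3182671654899106673664, .DS [0, 2] [1, 0, 2, 1]),
  (1159540686094417225728, .DS [2] [0, 0, 1, 1, 2]),
  (1159540686094417225728, .DS [2] [0, 0, 2, 2, 1])]

def cert6 : List (ℤ × Rel) := [
  (1980536415889627607040, .DS [0, 2] [0, 2, 2, 1]),
  (9083560383031913361408, .DS [0, 2] [0, 2, 2, 2]),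
  (-2372661155562692087808, .DS [1] [0, 2, 2, 0, 1]),
  (3676156597166499803136, .DS [1] [0, 2, 2, 0, 2]),
  (-3352365408335271032832, .DS [1] [0, 2, 0, 2, 1]),
  (15450534329829599539200, .DS [1] [0, 2, 0, 2, 2]),
  (-3598337452232380243968, .DS [1] [0, 2, 1, 0, 1]),
  (-8842748339644048232448, .DS [1] [0, 2, 0, 1, 1]),
  (-11000108588727252781056, .DS [0, 1] [0, 2, 2, 1]),
  (-2092375933468018627584, .DS [0, 2] [2, 0, 1, 2]),
  (3252297610417711159296, .DS [0, 1] [0, 2, 1, 1]),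
  (-446821554287899106304, .DS [0, 1] [2, 2, 0, 1]),
  (-3701387954179033519104, .DS [0, 1] [2, 0, 1, 2]),
  (-3266177670983857410048, .DS [1] [0, 2, 0, 1, 2]),
  (-5066064060734714253312, .DS [0, 1] [0, 2, 1, 2]),
  (244194795971253242880, .DS [0, 2] [2, 2, 0, 1]),
  (-971449210592128788480, .DS [2] [0, 1, 1, 0, 2]),
  (-971449210592128788480, .DS [2] [0, 2, 2, 0, 1]),
  (1306882746927299991552, .DS [0, 2] [2, 0, 1, 1]),
  (1907610838698907146240, .DS [0, 2] [0, 1, 2, 2]),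
  (-942796574225799690240, .DS [0, 2] [0, 2, 1, 2]),
  (6459574677858136829952, .DS [0, 2, 1] [0, 2, 1]),
  (612562388460729086976, .DS [0, 1] [2, 1, 0, 2]),
  (-912348475703872432128, .DS [1] [2, 0, 0, 1, 2]),
  (-2919677605069270548480, .DS [1] [0, 2, 1, 0, 2]),
  (-176172221384085147648, .DS [0, 2] [1, 2, 0, 2]),
  (3841750419050430136320, .DS [0, 2] [0, 2, 1, 1]),
  (-654298571916835200000, .N1 1 [2, 2] 5 [2, 4]),
  (1308597143833670400000, .K1 5 [2, 2] 1 [2, 4]),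
  (654298571916835200000, .K1 7 [2] 1 [2, 4]),
  (1308597143833670400000, .N1 1 [2, 2, 2] 5 [4]),
  (-2617194287667340800000, .K1 5 [2, 2, 2] 1 [4]),
  (-1308597143833670400000, .K1 7 [2, 2] 1 [4]),
  (2617194287667340800000, .K1 9 [2, 2, 2] 1 []),
  (327149285958417600000, .N1 1 [2] 5 [2, 2, 4]),
  (-654298571916835200000, .K1 5 [2] 1 [2, 2, 4]),
  (-327149285958417600000, .K1 7 [] 1 [2, 2, 4]),
  (327149285958417600000, .K1 5 [] 1 [2, 2, 2, 4]),
  (-163574642979208800000, .N1 1 [] 5 [2, 2, 2, 4]),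
  (654298571916835200000, .N1 1 [2, 4] 5 [4])]

def cert7 : List (ℤ × Rel) := [
  (-1308597143833670400000, .K1 5 [2, 4] 1 [4]),
  (-654298571916835200000, .K1 7 [4] 1 [4]),
  (1308597143833670400000, .K1 9 [2, 4] 1 []),
  (-327149285958417600000, .N1 1 [4] 5 [2, 4]),
  (654298571916835200000, .K1 5 [4] 1 [2, 4]),
  (654298571916835200000, .N1 1 [4, 2] 5 [4]),
  (-1308597143833670400000, .K1 5 [4, 2] 1 [4]),
  (1308597143833670400000, .K1 9 [4, 2] 1 []),
  (-417897688786685466624, .K1 11 [2, 2] 1 []),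
  (-208948844393342733312, .K1 11 [4] 1 []),
  (-8969142234190872244224, .DS [1] [0, 0, 2, 2, 1]),
  (15737007140678550024192, .DS [1] [0, 0, 2, 2, 2]),
  (-7061487585839954933760, .DS [1] [0, 0, 2, 1, 2]),
  (-15645985881394299863040, .DS [1] [0, 0, 2, 1, 1]),
  (863247416310177933312, .N1 1 [2, 2] 5 [4, 2]),
  (-1726494832620355866624, .K1 5 [2, 2] 1 [4, 2]),
  (-863247416310177933312, .K1 7 [2] 1 [4, 2]),
  (1726494832620355866624, .K1 9 [2, 2] 1 [2]),
  (-431623708155088966656, .N1 1 [2] 5 [2, 4, 2]),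
  (863247416310177933312, .K1 5 [2] 1 [2, 4, 2]),
  (431623708155088966656, .K1 7 [] 1 [2, 4, 2]),
  (-431623708155088966656, .K1 5 [] 1 [2, 2, 4, 2]),
  (215811854077544483328, .N1 1 [] 5 [2, 2, 4, 2]),
  (431623708155088966656, .N1 1 [4] 5 [4, 2]),
  (-863247416310177933312, .K1 5 [4] 1 [4, 2]),
  (863247416310177933312, .K1 9 [4] 1 [2]),
  (1726494832620355866624, .N1 1 [6, 2, 2] 5 []),
  (-3452989665240711733248, .K1 5 [6, 2, 2] 1 []),
  (863247416310177933312, .N1 1 [6, 4] 5 []),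
  (-1726494832620355866624, .K1 5 [6, 4] 1 []),
  (234714025613177100288, .DS [0, 2] [1, 1, 0, 2]),
  (-156388150608792870912, .DS [0, 2] [2, 1, 0, 1]),
  (7574296587579015653376, .DS [0, 2] [0, 1, 1, 2]),
  (-1219712420122799520768, .DS [0, 1] [1, 2, 0, 2]),
  (-1718280381743035143168, .DS [0, 1] [1, 2, 0, 1]),
  (-10343658159919685615616, .DS [0, 2, 2] [0, 2, 2]),
  (1966130919129460979712, .DS [0, 1] [2, 0, 2, 2]),
  (5787416927855396093952, .DS [0, 1] [0, 2, 2, 2]),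
  (2200225638995204419584, .DS [0, 2] [1, 2, 0, 1]),
  (4417266144828446214144, .DS [0, 2] [1, 0, 1, 2])]

def cert8 : List (ℤ × Rel) := [
  (-2736770410563182026752, .DS [0, 2] [0, 1, 1, 1]),
  (592327458259133184000, .DS [1] [1, 0, 2, 0, 2]),
  (608412875403413821440, .DS [1] [1, 0, 2, 0, 1]),
  (-3675797141392026040320, .DS [0, 1] [1, 0, 2, 2]),
  (450176359706493954048, .DS [0, 1] [1, 0, 2, 1]),
  (-4170780701061918815232, .DS [0, 2, 2] [2, 0, 2]),
  (5523115923695540416512, .DS [0, 0, 2] [2, 2, 2]),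
  (-823344113714876817408, .DS [2] [2, 1, 0, 0, 2]),
  (-823344113714876817408, .DS [2] [1, 2, 0, 0, 1]),
  (-1509429730959157997568, .DS [2] [1, 2, 0, 0, 2]),
  (-1509429730959157997568, .DS [2] [2, 1, 0, 0, 1]),
  (-3499160767011052222464, .N1 1 [2, 6] 5 [2]),
  (6998321534022104444928, .K1 5 [2, 6] 1 [2]),
  (3499160767011052222464, .K1 7 [6] 1 [2]),
  (6998321534022104444928, .N1 1 [2, 2, 6] 5 []),
  (-13996643068044208889856, .K1 5 [2, 2, 6] 1 []),
  (-6998321534022104444928, .K1 7 [2, 6] 1 []),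
  (1749580383505526111232, .N1 1 [6] 5 [2, 2]),
  (-3499160767011052222464, .K1 5 [6] 1 [2, 2]),
  (3499160767011052222464, .N1 1 [4, 6] 5 []),
  (-6998321534022104444928, .K1 5 [4, 6] 1 []),
  (1749580383505526111232, .K1 9 [] 1 [2, 2, 2]),
  (-1749580383505526111232, .K1 5 [] 1 [4, 2, 2, 2]),
  (874790191752763055616, .N1 1 [] 5 [4, 2, 2, 2]),
  (445947893767206629376, .DS [2] [1, 1, 0, 0, 2]),
  (445947893767206629376, .DS [2] [2, 2, 0, 0, 1]),
  (-5111495583115276259328, .DS [2] [1, 1, 0, 0, 1]),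
  (-5111495583115276259328, .DS [2] [2, 2, 0, 0, 2]),
  (-1474311263295001850880, .DS [0, 1] [2, 2, 0, 2]),
  (-1830751889987121659904, .DS [1] [1, 0, 0, 2, 2]),
  (-922770685308427763712, .DS [1] [1, 0, 0, 2, 1]),
  (6815910829031529302016, .DS [0, 2] [1, 0, 1, 1]),
  (-4729530901457832751104, .DS [0, 0, 1] [2, 2, 1]),
  (3464807355685522624512, .DS [0, 0, 1] [2, 1, 1]),
  (-3464807355685522624512, .DS [1] [2, 0, 1, 0, 1]),
  (1734763579285218545664, .DS [0, 0, 1] [1, 2, 1]),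
  (-110049939087710048256, .DS [0, 1] [1, 1, 0, 2]),
  (1617753342340404062208, .DS [0, 2] [1, 1, 0, 1]),
  (326141062590470679552, .DS [0, 2, 1] [2, 0, 2]),
  (3265067216942866151424, .DS [0, 2, 1] [2, 0, 1])]

def cert9 : List (ℤ × Rel) := [
  (-3015406806505388027904, .DS [1] [1, 0, 0, 1, 2]),
  (-3512149714880966621184, .DS [1] [0, 1, 2, 0, 1]),
  (-3005865342420684171264, .DS [1] [0, 1, 2, 0, 2]),
  (-8144547696285407692800, .DS [1] [0, 1, 0, 2, 1]),
  (-2178132701421559996416, .DS [1] [0, 1, 0, 2, 2]),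
  (-8230735433636821315584, .DS [1] [0, 1, 0, 1, 2]),
  (-13738331233043382552576, .DS [1] [0, 0, 1, 2, 1]),
  (-8969142234190872244224, .DS [1] [0, 0, 1, 2, 2]),
  (-15645985881394299863040, .DS [1] [0, 0, 1, 1, 2]),
  (-1382098448877034653696, .DS [0, 1] [1, 0, 1, 2]),
  (-3304026060868738652160, .DS [0, 2, 1] [0, 1, 1]),
  (-10927183011536532320256, .DS [0, 1] [0, 1, 2, 2]),
  (3261722615612096704512, .DS [0, 1] [0, 1, 2, 1]),
  (-6277908363590880792576, .DS [0, 0, 2] [1, 2, 2]),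
  (-2092636121196960264192, .DS [1] [2, 2, 0, 0, 1]),
  (2092636121196960264192, .DS [1] [2, 2, 0, 0, 2]),
  (-2092636121196960264192, .DS [1] [1, 2, 0, 0, 2]),
  (2092636121196960264192, .DS [1] [1, 2, 0, 0, 1]),
  (3464807355685522624512, .DS [0, 0, 1] [1, 1, 2]),
  (5229230401549943427072, .DS [0, 0, 2] [1, 2, 1]),
  (2192073354269567465472, .DS [0, 1, 2] [0, 1, 2]),
  (-1548377462133048041472, .DS [0, 0, 2] [2, 2, 1]),
  (-762379226002956693504, .DS [0, 1, 1] [0, 2, 1]),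
  (1908859204371695468544, .DS [0, 1, 2] [1, 0, 1]),
  (-2778721738441241444352, .DS [0, 0, 2] [2, 1, 2]),
  (110049939087710048256, .DS [0, 1, 1] [1, 0, 2]),
  (-480248558110874357760, .DS [0, 1] [0, 1, 1, 2]),
  (-762379226002956693504, .DS [0, 1, 1] [0, 1, 2]),
  (428520107659846864896, .DS [0, 1, 2] [0, 1, 1]),
  (534955155059983847424, .DS [0, 1, 2] [0, 2, 1]),
  (-4802456478648553211904, .DS [0, 2, 2] [0, 2, 1]),
  (-1682349075161641362432, .DS [0, 2, 1] [1, 0, 1]),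
  (-1053255493107221781504, .DS [1] [2, 0, 0, 0, 2]),
  (-1507372118577247245312, .DS [1] [2, 0, 0, 0, 1]),
  (-21448243304046054088208, .DS [2] [0, 1, 0, 0, 2]),
  (-21448243304046054088208, .DS [2] [0, 2, 0, 0, 1]),
  (3660131322290937415952, .DS [2] [0, 2, 0, 0, 2]),
  (3660131322290937415952, .DS [2] [0, 1, 0, 0, 1]),
  (-38364769347791043515544, .DS [2] [0, 0, 1, 0, 2]),
  (-38364769347791043515544, .DS [2] [0, 0, 2, 0, 1])]

def cert10 : List (ℤ × Rel) := [
  (17951798453405772375960, .DS [2] [0, 0, 2, 0, 2]),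
  (17951798453405772375960, .DS [2] [0, 0, 1, 0, 1]),
  (71946461491046556393240, .DS [0, 2] [0, 0, 2, 1]),
  (-40014088513395502202880, .DS [2] [0, 0, 0, 2, 2]),
  (-40014088513395502202880, .DS [2] [0, 0, 0, 1, 1]),
  (11024749371811691424768, .DS [2] [1, 0, 0, 0, 2]),
  (11024749371811691424768, .DS [2] [2, 0, 0, 0, 1]),
  (-20371396963132785744384, .DS [2] [2, 0, 0, 0, 2]),
  (-20371396963132785744384, .DS [2] [1, 0, 0, 0, 1]),
  (-225729564509591492632, .DS [0, 1] [2, 0, 0, 1]),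
  (5458014365952923860296, .DS [0, 2] [2, 0, 0, 2]),
  (-15816195228322523922568, .DS [0, 0, 1] [2, 0, 1]),
  (-79108726018273678702736, .DS [0, 2] [0, 2, 0, 2]),
  (-3273015751558950255360, .DS [2] [0, 0, 0, 1, 2]),
  (-3273015751558950255360, .DS [2] [0, 0, 0, 2, 1]),
  (-21325798264906651744704, .DS [0, 2] [0, 0, 2, 2]),
  (-7723341842608603590400, .DS [1] [0, 2, 0, 0, 2]),
  (9996884227677050625280, .DS [1] [0, 2, 0, 0, 1]),
  (21654510380650204955760, .DS [0, 0, 2] [0, 2, 1]),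
  (14734386488208718522736, .DS [0, 1] [0, 2, 0, 1]),
  (-11069911616822242645320, .DS [0, 2] [2, 0, 0, 1]),
  (44153377388352248237744, .DS [0, 0, 1] [0, 2, 1]),
  (7451685851010857004160, .DS [0, 0, 2] [0, 2, 2]),
  (56212121849425524224704, .DS [0, 2] [0, 1, 0, 2]),
  (74934472555398828737232, .DS [0, 2] [0, 2, 0, 1]),
  (-82058166028708997347280, .DS [0, 1] [0, 2, 0, 2]),
  (60078221800373867004576, .DS [0, 2] [0, 0, 1, 1]),
  (49391092790977337456232, .DS [0, 2] [0, 0, 1, 2]),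
  (-560152972520919621888, .DS [1] [0, 0, 2, 0, 2]),
  (26522353978909295112960, .DS [1] [0, 0, 2, 0, 1]),
  (-291619670780515800190656, .DS [0, 1] [0, 0, 2, 2]),
  (41097687921635442200472, .DS [0, 1] [0, 0, 2, 1]),
  (14250851513359932414152, .DS [0, 0, 2] [2, 0, 2]),
  (-41136186492621725592912, .DS [0, 2] [1, 0, 0, 2]),
  (-86377359099967739016520, .DS [0, 2] [0, 1, 0, 1]),
  (37357867439748081956784, .DS [0, 2, 1] [0, 0, 1]),
  (25766868335009657590272, .DS [1] [0, 0, 0, 2, 2]),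
  (59937116295996995375616, .DS [1] [0, 0, 0, 2, 1]),
  (-61412131188468531424424, .DS [0, 0, 2] [2, 0, 1]),
  (76406217478633340608640, .DS [0, 1] [2, 0, 0, 2])]

def cert11 : List (ℤ × Rel) := [
  (27242373230579688910848, .DS [0, 2, 2] [0, 0, 2]),
  (-42825563904346824993304, .DS [0, 2] [1, 0, 0, 1]),
  (-34801997416717100060592, .DS [0, 2, 1] [0, 0, 2]),
  (-3140955823577503332096, .DS [0, 1] [1, 0, 0, 2]),
  (36908698409282876679704, .DS [0, 0, 1] [1, 0, 2]),
  (-138984824177059620864, .DS [1] [1, 0, 0, 0, 2]),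
  (37646736152557719297872, .DS [0, 0, 2] [1, 0, 2]),
  (21654510380650204955760, .DS [0, 0, 2] [0, 1, 2]),
  (9460561182815396742144, .DS [1] [0, 1, 0, 0, 2]),
  (23961528667754074143744, .DS [1] [0, 0, 1, 0, 2]),
  (59937116295996995375616, .DS [1] [0, 0, 0, 1, 2]),
  (44153377388352248237744, .DS [0, 0, 1] [0, 1, 2]),
  (81727839392048239783208, .DS [0, 1] [0, 1, 0, 2]),
  (98356614528793434413760, .DS [0, 0, 1] [0, 2, 2]),
  (-245656836348291325558400, .DS [0, 0, 2] [0, 1, 1]),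
  (14802498739678863019776, .DS [0, 1, 2] [0, 0, 1]),
  (-8712544098721884165888, .DS [0, 0, 2] [1, 0, 1]),
  (63653056621704661137480, .DS [0, 1] [0, 0, 1, 2]),
  (-12246628716647881123584, .DS [0, 1, 2] [0, 0, 2]),
  (547938918758942713344, .St [5] [11]),
  (-37466225926345783907328, .St [5] [10]),
  (8240923851825266270208, .St [7] [9]),
  (-5179484497861067599872, .St [7] [8]),
  (46296519644022989682400, .DS [0, 2] [0, 0, 0, 1]),
  (10780829755606818537984, .St [6] [9]),
  (-71747635063527465345392, .DS [0, 1] [0, 0, 0, 2]),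
  (2989051324865940422400, .St [4] [11]),
  (-20489197140128377734656, .DS [1] [0, 0, 0, 0, 2]),
  (-17000710884281096064760, .DS [0, 0, 2] [0, 0, 2]),
  (124114574673502517901864, .DS [0, 0, 1] [0, 0, 2]),
  (-6054645283013569228352, .DS [0, 2] [0, 0, 0, 2]),
  (-85532896474822094416536, .DS [0, 0, 2] [0, 0, 1]),
  (-5414813333179137460224, .DS [2] [0, 0, 0, 0, 2]),
  (-5414813333179137460224, .DS [2] [0, 0, 0, 0, 1])]

def cert : List (ℤ × Rel) :=
  cert0 ++ (cert1 ++ (cert2 ++ (cert3 ++ (cert4 ++ (cert5 ++ (cert6 ++ (cert7 ++ (cert8 ++ (cert9 ++ (cert10 ++ (cert11)))))))))))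

def target : List (ℤ × Col) := [
  (-547938918758942713344, .P [5] [11]),
  (37466225926345783907328, .P [5] [10]),
  (-8240923851825266270208, .P [7] [9]),
  (5179484497861067599872, .P [7] [8]),
  (-2989051324865940422400, .P [4] [11]),
  (24603438116895132402240, .P [4] [10]),
  (-10780829755606818537984, .P [6] [9]),
  (-18677445418004083189056, .P [6] [8]),
  (18453061480818709071360, .W 7 [9]),
  (23317959507580005099264, .W 14 []),
  (-32103347060385188356608, .Z [15]),
  (-33160456774014613774488, .Z [14])]


theorem cert_valid : cert.all (fun x => valid x.2) = true := by decide +kernel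

theorem cert_check : addL (-1) target .leaf (fun t => addC cert t) = true := by decide +kernel

theorem target_lim : Tendsto (fun N => ev N target) atTop (𝓝 0) :=
  cert_sound cert target cert_valid cert_check

/-! ### limits and conclusion -/

theorem p_even (s m : ℕ) : p (2 * s) m = ((m : ℝ)⁻¹) ^ s := by
  unfold p; rw [show 2 * s % 2 = 0 by omega, show 2 * s / 2 = s by omega]; simp

theorem p_odd (s m : ℕ) : p (2 * s + 1) m = (-1) ^ m * ((m : ℝ)⁻¹) ^ s := by
  unfold p
  rw [show (2 * s + 1) % 2 = 1 by omega, show (2 * s + 1) / 2 = s by omega]; simp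

theorem Z_range (x N : ℕ) : Z [x] (N + 1) = ∑ n ∈ Finset.range N, p x (n + 1) := by
  rw [Z_cons, Finset.sum_Ico_eq_sum_range]
  simp [Z_nil, add_comm]

theorem zsummable (s : ℕ) (hs : 2 ≤ s) : Summable (fun n : ℕ => 1 / ((n : ℝ) + 1) ^ s) := by
  have h := (summable_nat_add_iff 1).2 (Real.summable_one_div_nat_pow.2 (by omega : 1 < s))
  simpa using h

theorem Z_even_lim (s : ℕ) (hs : 2 ≤ s) : Tendsto (fun N => Z [2 * s] N) atTop (𝓝 (zeta s)) := by
  rw [← tendsto_add_atTop_iff_nat 1]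
  refine ((zsummable s hs).hasSum.tendsto_sum_nat).congr ?_
  intro N
  rw [Z_range]
  apply Finset.sum_congr rfl
  intro n _
  rw [p_even]; push_cast; rw [one_div, inv_pow]

theorem Z_alt (s M : ℕ) : Z [2 * s + 1] (2 * M + 1) =
    2 * (2⁻¹ : ℝ) ^ s * Z [2 * s] (M + 1) - Z [2 * s] (2 * M + 1) := by
  induction M with
  | zero => simp [Z_cons]
  | succ M ih =>
    have h : ∀ x, Z [x] (2 * (M + 1) + 1) = Z [x] (2 * M + 1) + p x (2 * M + 1) + p x (2 * M + 2) := by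
      intro x
      rw [show 2 * (M + 1) + 1 = (2 * M + 1 + 1) + 1 by ring, Z_cons_succ _ _ _ (by omega),
        Z_cons_succ _ _ _ (by omega)]; simp [Z_nil]
    rw [h, h, ih, Z_cons_succ _ _ (M + 1) (by omega), Z_nil, p_odd, p_odd, p_even, p_even, p_even]
    have e1 : (-1 : ℝ) ^ (2 * M + 1) = -1 := by rw [pow_succ, pow_mul]; simp
    have e2 : (-1 : ℝ) ^ (2 * M + 2) = 1 := by
      rw [show 2 * M + 2 = 2 * (M + 1) by ring, pow_mul]; simp
    have e3 : (((2 * M + 2 : ℕ) : ℝ)⁻¹) ^ s = (2⁻¹ : ℝ) ^ s * (((M + 1 : ℕ) : ℝ)⁻¹) ^ s := by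
      rw [← mul_pow, ← mul_inv]; congr 2; push_cast; ring
    rw [e1, e2, e3]; ring

theorem Z_odd_lim (s : ℕ) (hs : 2 ≤ s) :
    Tendsto (fun N => Z [2 * s + 1] N) atTop (𝓝 ((2 * (2⁻¹ : ℝ) ^ s - 1) * zeta s)) := by
  have hsum : Summable (fun n : ℕ => p (2 * s + 1) (n + 1)) := by
    apply Summable.of_norm_bounded (zsummable s hs)
    intro n
    rw [p_odd, norm_mul, norm_pow, norm_neg, norm_one, one_pow, one_mul, norm_pow, norm_inv]
    push_cast
    rw [Real.norm_of_nonneg (by positivity), one_div, inv_pow]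
  have h1 : Tendsto (fun N => Z [2 * s + 1] N) atTop (𝓝 (∑' n : ℕ, p (2 * s + 1) (n + 1))) := by
    rw [← tendsto_add_atTop_iff_nat 1]
    refine hsum.hasSum.tendsto_sum_nat.congr ?_
    intro N
    rw [Z_range]
  have t1 : Tendsto (fun M : ℕ => M + 1) atTop atTop := tendsto_add_atTop_nat 1
  have t2 : Tendsto (fun M : ℕ => 2 * M + 1) atTop atTop :=
    tendsto_atTop_mono (fun M => by simp only [id]; omega) tendsto_id
  have h2 := h1.comp t2
  have h3 := (((Z_even_lim s hs).comp t1).const_mul (2 * (2⁻¹ : ℝ) ^ s)).sub ((Z_even_lim s hs).comp t2)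
  have h4 := tendsto_nhds_unique (h2.congr fun M => Z_alt s M) h3
  rw [h4] at h1
  convert h1 using 2
  ring

theorem A_eq (n : ℕ) : A 4 n = Z [9] (n + 1) := by
  rw [Z_range, A]
  apply Finset.sum_congr rfl
  intro j _
  rw [show (9 : ℕ) = 2 * 4 + 1 by rfl, p_odd]
  push_cast
  rw [div_eq_mul_inv, inv_pow]

theorem partial_eq (N : ℕ) : ∑ n ∈ Finset.range N,
      (-1:ℝ)^(n+1) / (((n:ℝ)+1)^3 * ((2*(n+1)).choose (n+1) : ℝ)) *
        (110 * A 4 (n+1) + 29 * (-1:ℝ)^(n+1) / ((n:ℝ)+1)^4) =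
    110 * val (N + 1) (.W 7 [9]) + 139 * val (N + 1) (.W 14 []) := by
  simp only [val]
  rw [Finset.sum_Ico_eq_sum_range, Finset.sum_Ico_eq_sum_range, Finset.mul_sum, Finset.mul_sum,
    ← Finset.sum_add_distrib]
  apply Finset.sum_congr (by simp)
  intro n _
  rw [add_comm 1 n, A_eq, Z_cons_succ _ _ (n + 1) (by omega), Z_nil, ic_eq,
    show (9 : ℕ) = 2 * 4 + 1 by rfl, show (7 : ℕ) = 2 * 3 + 1 by rfl, show (14 : ℕ) = 2 * 7 by rfl,
    p_odd, p_odd, p_even]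
  have hs : ((-1 : ℝ) ^ (n + 1)) ^ 2 = 1 := by rw [← pow_mul, mul_comm, pow_mul]; simp
  generalize (-1 : ℝ) ^ (n + 1) = s at *
  have hc : (((2 * (n + 1)).choose (n + 1) : ℕ) : ℝ) ≠ 0 := by
    exact_mod_cast (Nat.choose_pos (by omega)).ne'
  generalize (((2 * (n + 1)).choose (n + 1) : ℕ) : ℝ) = c at *
  generalize Z [2 * 4 + 1] (n + 1) = z
  have hn : ((n : ℝ) + 1) ≠ 0 := by positivity
  push_cast
  field_simp
  linear_combination 139 * hs

theorem zeta_two : zeta 2 = Real.pi ^ 2 / 6 := by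
  have h := (hasSum_nat_add_iff' 1).2 hasSum_zeta_two
  have := h.tsum_eq
  simp at this
  unfold zeta
  simpa using this

theorem zeta_four : zeta 4 = Real.pi ^ 4 / 90 := by
  have h := (hasSum_nat_add_iff' 1).2 hasSum_zeta_four
  have := h.tsum_eq
  simp at this
  unfold zeta
  simpa using this

theorem final : Tendsto (fun N => 110 * val N (.W 7 [9]) + 139 * val N (.W 14 [])) atTop
    (𝓝 (221 * Real.pi^4 * zeta 3 / 180 + 223 * zeta 7 / 24
        - 301 * Real.pi^2 * zeta 5 / 36)) := by
  have a2 := Z_even_lim 2 (by norm_num)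
  have a3 := Z_even_lim 3 (by norm_num)
  have a4 := Z_even_lim 4 (by norm_num)
  have a5 := Z_even_lim 5 (by norm_num)
  have a7 := Z_even_lim 7 (by norm_num)
  have b2 := Z_odd_lim 2 (by norm_num)
  have b3 := Z_odd_lim 3 (by norm_num)
  have b4 := Z_odd_lim 4 (by norm_num)
  have b5 := Z_odd_lim 5 (by norm_num)
  have b7 := Z_odd_lim 7 (by norm_num)
  have t := target_lim
  norm_num only at a2 a3 a4 a5 a7 b2 b3 b4 b5 b7
  have key := ((((((((((t.sub ((b2.mul b5).const_mul (-547938918758942713344 : ℝ))).sub ((b2.mul a5).const_mul (37466225926345783907328 : ℝ))).sub ((b3.mul b4).const_mul (-8240923851825266270208 : ℝ))).sub ((b3.mul a4).const_mul (5179484497861067599872 : ℝ))).sub ((a2.mul b5).const_mul (-2989051324865940422400 : ℝ))).sub ((a2.mul a5).const_mul (24603438116895132402240 : ℝ))).sub ((a3.mul b4).const_mul (-10780829755606818537984 : ℝ))).sub ((a3.mul a4).const_mul (-18677445418004083189056 : ℝ))).sub (b7.const_mul (-32103347060385188356608 : ℝ))).sub (a7.const_mul (-33160456774014613774488 : ℝ))).const_mul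 ((167755104371079173376 : ℝ)⁻¹)
  rw [zeta_two, zeta_four] at key
  refine (key.congr ?_).trans_eq ?_
  · intro N
    simp only [target, ev_cons, ev_nil, val]
    push_cast
    ring
  · congr 1
    ring


end Apy

theorem stmt_15 :
    Tendsto (fun N => ∑ n ∈ Finset.range N,
      (-1:ℝ)^(n+1) / (((n:ℝ)+1)^3 * ((2*(n+1)).choose (n+1) : ℝ)) *
        (110 * A 4 (n+1) + 29 * (-1:ℝ)^(n+1) / ((n:ℝ)+1)^4))
      atTop (𝓝 (221 * Real.pi^4 * zeta 3 / 180 + 223 * zeta 7 / 24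
        - 301 * Real.pi^2 * zeta 5 / 36)) := by
  have h := (tendsto_add_atTop_iff_nat 1).2 Apy.final
  exact h.congr (fun N => (Apy.partial_eq N).symm)
end

section
/- $\sum_{n=0}^{\infty} \frac{\binom{2n}{n}}{(2n+1)\,16^n}\left(12 \sum_{j=0}^{n} \frac{(-1)^j}{(2j+1)^2} - \frac{(-1)^n}{(2n+1)^2}\right) = 4\pi G$. -/
open Filter Topology

/-- The Catalan constant `G = ∑_{k ≥ 0} (-1)^k/(2k+1)^2`. -/
noncomputable def catalan' : ℝ := ∑' k : ℕ, (-1:ℝ)^k / (2*(k:ℝ)+1)^2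


namespace S16
open Real Set MeasureTheory

/-- `-log(1-t)/t`, continuous version. -/
noncomputable def g1 : ℝ → ℝ := dslope (fun t => -Real.log (1 - t)) 0
noncomputable def L2 (z : ℝ) : ℝ := ∫ t in (0:ℝ)..z, g1 t
noncomputable def g2 : ℝ → ℝ := dslope L2 0
noncomputable def L3 (z : ℝ) : ℝ := ∫ t in (0:ℝ)..z, g2 t

lemma g1_eq {z : ℝ} (hz : z ≠ 0) : g1 z = -Real.log (1 - z) / z := by
  rw [g1, dslope_of_ne _ hz, slope_def_field]; simp

lemma g1_cont : ContinuousOn g1 (Iio 1) := by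
  unfold g1
  rw [continuousOn_dslope (Iio_mem_nhds (by norm_num))]
  have h : ∀ x ∈ Iio (1:ℝ), DifferentiableAt ℝ (fun t => -Real.log (1 - t)) x := by
    intro x hx
    have : (1:ℝ) - x ≠ 0 := by have : x < 1 := hx; linarith
    fun_prop (disch := assumption)
  exact ⟨fun x hx => (h x hx).continuousAt.continuousWithinAt, h 0 (by simp)⟩

lemma uIcc_sub {z : ℝ} (hz : z < 1) : uIcc 0 z ⊆ Iio 1 := by
  intro x hx
  rcases le_total 0 z with h | h
  · rw [uIcc_of_le h] at hx; exact lt_of_le_of_lt hx.2 hz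
  · rw [uIcc_of_ge h] at hx; exact lt_of_le_of_lt hx.2 one_pos

lemma prim_deriv {g : ℝ → ℝ} (hg : ContinuousOn g (Iio 1)) {z : ℝ} (hz : z < 1) :
    HasDerivAt (fun z => ∫ t in (0:ℝ)..z, g t) (g z) z := by
  apply intervalIntegral.integral_hasDerivAt_right
  · exact (hg.mono (uIcc_sub hz)).intervalIntegrable
  · exact hg.stronglyMeasurableAtFilter isOpen_Iio z hz
  · exact hg.continuousAt (Iio_mem_nhds hz)

lemma L2_deriv' {z : ℝ} (hz : z < 1) : HasDerivAt L2 (g1 z) z := prim_deriv g1_cont hz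

lemma L2_deriv {z : ℝ} (hz : z < 1) (h0 : z ≠ 0) : HasDerivAt L2 (-Real.log (1 - z) / z) z := by
  rw [← g1_eq h0]; exact L2_deriv' hz

@[simp] lemma L2_zero : L2 0 = 0 := by simp [L2]
@[simp] lemma L3_zero : L3 0 = 0 := by simp [L3]

lemma g2_eq {z : ℝ} (hz : z ≠ 0) : g2 z = L2 z / z := by
  rw [g2, dslope_of_ne _ hz, slope_def_field]; simp

lemma g2_cont : ContinuousOn g2 (Iio 1) := by
  unfold g2
  rw [continuousOn_dslope (Iio_mem_nhds (by norm_num))]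
  exact ⟨fun x hx => (L2_deriv' hx).continuousAt.continuousWithinAt,
    (L2_deriv' one_pos).differentiableAt⟩

lemma L3_deriv' {z : ℝ} (hz : z < 1) : HasDerivAt L3 (g2 z) z := prim_deriv g2_cont hz

lemma L3_deriv {z : ℝ} (hz : z < 1) (h0 : z ≠ 0) : HasDerivAt L3 (L2 z / z) z := by
  rw [← g2_eq h0]; exact L3_deriv' hz

/-! continuity at one -/
lemma g1_int : IntervalIntegrable g1 volume 0 1 := by
  have h1 : IntervalIntegrable g1 volume 0 (1/2) :=
    (g1_cont.mono (uIcc_sub (by norm_num))).intervalIntegrable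
  have h2 : IntervalIntegrable g1 volume (1/2) 1 := by
    have hl : IntervalIntegrable (fun t => Real.log (1 - t)) volume (1/2) 1 := by
      have := (intervalIntegral.intervalIntegrable_log' (a := 1/2) (b := 0)).comp_sub_left 1
      norm_num at this
      exact this
    have : IntervalIntegrable (fun t => Real.log (1 - t) * (-t⁻¹)) volume (1/2) 1 := by
      apply hl.mul_continuousOn
      apply ContinuousOn.neg
      apply continuousOn_inv₀.mono
      intro x hx
      rw [uIcc_of_le (by norm_num)] at hx
      have := hx.1
      simp; rintro rfl; norm_num at this
    refine this.congr ?_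
    intro x hx
    rw [uIoc_of_le (by norm_num)] at hx
    have : x ≠ 0 := by have := hx.1; intro h; rw [h] at this; norm_num at this
    simp only [g1_eq this]; ring
  exact h1.trans h2

lemma L2_contOn : ContinuousOn L2 (Icc 0 1) := by
  have := intervalIntegral.continuousOn_primitive_interval (μ := volume) (f := g1) (a := 0) (b := 1)
    (by rw [uIcc_of_le zero_le_one]; exact (intervalIntegrable_iff_integrableOn_Icc_of_le zero_le_one).1 g1_int)
  rw [uIcc_of_le zero_le_one] at this
  exact this

lemma L2_tendsto : Tendsto L2 (𝓝[<] 1) (𝓝 (L2 1)) := by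
  have := L2_contOn 1 (by simp)
  exact tendsto_nhdsWithin_mono_left (Ioo_subset_Icc_self) this |>.mono_left
    (by rw [nhdsWithin_Ioo_eq_nhdsLT (by norm_num)])

lemma g2_contOn : ContinuousOn g2 (Icc 0 1) := by
  intro x hx
  rcases eq_or_lt_of_le hx.2 with rfl | h
  · have : ContinuousWithinAt (fun z => L2 z / z) (Icc 0 1) 1 :=
      (L2_contOn 1 (by simp)).div continuousWithinAt_id (by norm_num)
    refine this.congr_of_eventuallyEq ?_ (g2_eq one_ne_zero)
    have : ∀ᶠ z in 𝓝[Icc 0 1] (1:ℝ), z ≠ 0 := 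
      nhdsWithin_le_nhds (isOpen_ne.mem_nhds one_ne_zero)
    filter_upwards [this] with z hz using g2_eq hz
  · exact (g2_cont.continuousAt (Iio_mem_nhds h)).continuousWithinAt

lemma L3_contOn : ContinuousOn L3 (Icc 0 1) := by
  have := intervalIntegral.continuousOn_primitive_interval (μ := volume) (f := g2) (a := 0) (b := 1)
    (by rw [uIcc_of_le zero_le_one]; exact g2_contOn.integrableOn_Icc)
  rw [uIcc_of_le zero_le_one] at this
  exact this

lemma L3_tendsto : Tendsto L3 (𝓝[<] 1) (𝓝 (L3 1)) := by
  have := L3_contOn 1 (by simp)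
  exact tendsto_nhdsWithin_mono_left (Ioo_subset_Icc_self) this |>.mono_left
    (by rw [nhdsWithin_Ioo_eq_nhdsLT (by norm_num)])

/-- Zero derivative on `(0,1)` plus a limit at `0+` determines the function. -/
lemma const_of {f : ℝ → ℝ} {l a b : ℝ} (hf : ∀ x ∈ Ioo a b, HasDerivAt f 0 x)
    (hl : Tendsto f (𝓝[>] a) (𝓝 l)) {x : ℝ} (hx : x ∈ Ioo a b) : f x = l := by
  have hc : ∀ y ∈ Ioo a b, f y = f x := by
    intro y hy
    exact (convex_Ioo a b).is_const_of_fderivWithin_eq_zero (𝕜 := ℝ)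
      (fun z hz => (hf z hz).differentiableAt.differentiableWithinAt)
      (fun z hz => by
        rw [fderivWithin_of_isOpen isOpen_Ioo hz]
        ext; simp [(hf z hz).deriv]) hy hx
  have : Tendsto f (𝓝[>] a) (𝓝 (f x)) := by
    refine (tendsto_const_nhds).congr' ?_
    filter_upwards [Ioo_mem_nhdsGT (hx.1.trans hx.2)] with y hy using (hc y hy).symm
  exact tendsto_nhds_unique this hl

/-- `F v * log v → 0` -/
lemma tendsto_mul_log {F : ℝ → ℝ} (hF : DifferentiableAt ℝ F 0) (h0 : F 0 = 0) :
    Tendsto (fun v => F v * Real.log v) (𝓝[>] 0) (𝓝 0) := by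
  have h1 : Tendsto (dslope F 0) (𝓝[>] 0) (𝓝 (dslope F 0 0)) :=
    ((continuousAt_dslope_same.2 hF).tendsto).mono_left nhdsWithin_le_nhds
  have h2 : Tendsto (fun v : ℝ => v * Real.log v) (𝓝[>] 0) (𝓝 0) := by
    have := (Real.continuous_mul_log.tendsto 0).mono_left (nhdsWithin_le_nhds (s := Ioi 0))
    simpa using this
  have := h1.mul h2
  rw [mul_zero] at this
  refine this.congr' ?_
  filter_upwards [self_mem_nhdsWithin] with v hv
  have hv : v ≠ 0 := ne_of_gt hv
  rw [dslope_of_ne _ hv, slope_def_field, h0]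
  field_simp
  ring

end S16


namespace S16
open Real Set MeasureTheory

lemma L2c {f : ℝ → ℝ} {f' v l r : ℝ} (hf : HasDerivAt f f' v) (h1 : f v < 1) (h0 : f v ≠ 0)
    (hl : Real.log (1 - f v) = l) (hr : f' = r * f v) :
    HasDerivAt (fun v => L2 (f v)) (-l * r) v := by
  have := (L2_deriv h1 h0).comp v hf
  refine HasDerivAt.congr_deriv (this) ?_
  rw [hl, hr]; field_simp

lemma L3c {f : ℝ → ℝ} {f' v r : ℝ} (hf : HasDerivAt f f' v) (h1 : f v < 1) (h0 : f v ≠ 0)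
    (hr : f' = r * f v) :
    HasDerivAt (fun v => L3 (f v)) (L2 (f v) * r) v := by
  have := (L3_deriv h1 h0).comp v hf
  refine HasDerivAt.congr_deriv (this) ?_
  rw [hr]; field_simp

lemma L2_ca {z : ℝ} (hz : z < 1) : ContinuousAt L2 z := (L2_deriv' hz).continuousAt
lemma L3_ca {z : ℝ} (hz : z < 1) : ContinuousAt L3 z := (L3_deriv' hz).continuousAt

lemma tendsto_of_ca {f : ℝ → ℝ} {a l : ℝ} (h : ContinuousAt f a) (hl : f a = l) :
    Tendsto f (𝓝[>] a) (𝓝 l) := by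
  rw [← hl]; exact h.tendsto.mono_left nhdsWithin_le_nhds

lemma ca2 {f : ℝ → ℝ} {a : ℝ} (hf : ContinuousAt f a) (h : f a < 1) :
    ContinuousAt (fun v => L2 (f v)) a := ContinuousAt.comp (g := L2) (L2_ca h) hf
lemma ca3 {f : ℝ → ℝ} {a : ℝ} (hf : ContinuousAt f a) (h : f a < 1) :
    ContinuousAt (fun v => L3 (f v)) a := ContinuousAt.comp (g := L3) (L3_ca h) hf

lemma dup2 {w : ℝ} (hw : w ∈ Ioo (0:ℝ) 1) : L2 (w^2) = 2 * (L2 w + L2 (-w)) := by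
  have := const_of (f := fun w => L2 (w^2) - 2 * (L2 w + L2 (-w))) (l := 0) (a := 0) (b := 1) ?_ ?_ hw
  · linarith
  · intro x ⟨h0, h1⟩
    have e : Real.log (1 - x^2) = Real.log (1 - x) + Real.log (1 + x) := by
      rw [← Real.log_mul (by linarith) (by linarith)]; congr 1; ring
    have d1 := L2c (f := fun x => x^2) (v := x) (r := 2 * x⁻¹) (hasDerivAt_pow 2 x) (by nlinarith)
      (by positivity) e (by field_simp; norm_num)
    have d2 := L2_deriv h1 h0.ne'
    have d3 := L2c (f := fun x => -x) (v := x) (r := x⁻¹) (hasDerivAt_neg x) (by linarith)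
      (by simpa using h0.ne') (l := Real.log (1 + x)) (by simp) (by field_simp)
    refine HasDerivAt.congr_deriv (d1.sub ((d2.add d3).const_mul 2)) ?_
    ring
  · apply tendsto_of_ca
    · exact (ca2 (by fun_prop) (by simp)).sub (((L2_ca one_pos).add (ca2 (by fun_prop) (by simp))).const_mul 2)
    · simp

lemma dup3 {w : ℝ} (hw : w ∈ Ioo (0:ℝ) 1) : L3 (w^2) = 4 * (L3 w + L3 (-w)) := by
  have := const_of (f := fun w => L3 (w^2) - 4 * (L3 w + L3 (-w))) (l := 0) (a := 0) (b := 1) ?_ ?_ hw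
  · linarith
  · intro x ⟨h0, h1⟩
    have d1 := L3c (f := fun x => x^2) (v := x) (r := 2 * x⁻¹) (hasDerivAt_pow 2 x) (by nlinarith)
      (by positivity) (by field_simp; norm_num)
    have d2 := L3_deriv h1 h0.ne'
    have d3 := L3c (f := fun x => -x) (v := x) (r := x⁻¹) (hasDerivAt_neg x) (by linarith)
      (by simpa using h0.ne') (by field_simp)
    refine HasDerivAt.congr_deriv (d1.sub ((d2.add d3).const_mul 4)) ?_
    rw [dup2 ⟨h0, h1⟩]
    ring
  · apply tendsto_of_ca
    · exact (ca3 (by fun_prop) (by simp)).sub (((L3_ca one_pos).add (ca3 (by fun_prop) (by simp))).const_mul 4)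
    · simp

lemma sq_tendsto : Tendsto (fun w : ℝ => w^2) (𝓝[<] 1) (𝓝[<] 1) := by
  apply tendsto_nhdsWithin_of_tendsto_nhds_of_eventually_within
  · have : ContinuousAt (fun w : ℝ => w^2) 1 := by fun_prop
    have := this.tendsto.mono_left (nhdsWithin_le_nhds (s := Iio 1))
    simpa using this
  · filter_upwards [Ioo_mem_nhdsLT (zero_lt_one' ℝ)] with w hw
    have := hw.1; have := hw.2
    simp only [mem_Iio]; nlinarith

lemma L2_one : L2 1 = - 2 * L2 (-1) := by
  have h1 := L2_tendsto.comp sq_tendsto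
  have hm : Tendsto (fun w => L2 (-w)) (𝓝[<] 1) (𝓝 (L2 (-1))) :=
    (ca2 (f := fun w => -w) (a := 1) (by fun_prop) (by norm_num)).tendsto.mono_left nhdsWithin_le_nhds
  have h2 := (L2_tendsto.add hm).const_mul 2
  have := tendsto_nhds_unique (h1.congr' (by
    filter_upwards [Ioo_mem_nhdsLT (zero_lt_one' ℝ)] with w hw using dup2 hw)) h2
  linarith

lemma L3_one : 3 * L3 1 = - 4 * L3 (-1) := by
  have h1 := L3_tendsto.comp sq_tendsto
  have hm : Tendsto (fun w => L3 (-w)) (𝓝[<] 1) (𝓝 (L3 (-1))) :=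
    (ca3 (f := fun w => -w) (a := 1) (by fun_prop) (by norm_num)).tendsto.mono_left nhdsWithin_le_nhds
  have h2 := (L3_tendsto.add hm).const_mul 4
  have := tendsto_nhds_unique (h1.congr' (by
    filter_upwards [Ioo_mem_nhdsLT (zero_lt_one' ℝ)] with w hw using dup3 hw)) h2
  linarith

lemma inv2 {y : ℝ} (hy : 1 < y) : L2 (-y) + L2 (-y⁻¹) = 2 * L2 (-1) - Real.log y ^ 2 / 2 := by
  have := const_of (f := fun y => L2 (-y) + L2 (-y⁻¹) + Real.log y ^ 2 / 2) (l := 2 * L2 (-1)) (a := 1)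
    (b := y + 1) ?_ ?_ ⟨hy, by linarith⟩
  · linarith
  · intro x ⟨h1, _⟩
    have h0 : 0 < x := by linarith
    have e : Real.log (1 + x⁻¹) = Real.log (1 + x) - Real.log x := by
      rw [← Real.log_div (by linarith) (by linarith)]; congr 1; field_simp; ring
    have d1 := L2c (f := fun x => -x) (v := x) (r := x⁻¹) (hasDerivAt_neg x) (by linarith)
      (by simpa using h0.ne') (l := Real.log (1 + x)) (by simp) (by field_simp)
    have d2 := L2c (f := fun x => -x⁻¹) (v := x) (r := -x⁻¹) (hasDerivAt_inv h0.ne').neg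
      (by have := inv_pos.2 h0; linarith)
      (by simpa using h0.ne') (l := Real.log (1 + x) - Real.log x) (by rw [← e]; simp) (by field_simp)
    have d3 := ((Real.hasDerivAt_log h0.ne').pow 2).div_const 2
    refine HasDerivAt.congr_deriv ((d1.add d2).add d3) ?_
    simp; ring
  · apply tendsto_of_ca
    · refine ((ca2 (by fun_prop) (by norm_num)).add (ca2 ?_ (by norm_num))).add ?_
      · exact (continuousAt_inv₀ one_ne_zero).neg
      · exact ((Real.continuousAt_log one_ne_zero).pow 2).div_const 2
    · simp; ring

lemma inv3 {y : ℝ} (hy : 1 < y) :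
    L3 (-y) = L3 (-y⁻¹) + 2 * L2 (-1) * Real.log y - Real.log y ^ 3 / 6 := by
  have := const_of (f := fun y => L3 (-y) - L3 (-y⁻¹) - 2 * L2 (-1) * Real.log y + Real.log y ^ 3 / 6) (l := 0) (a := 1)
    (b := y + 1) ?_ ?_ ⟨hy, by linarith⟩
  · linarith
  · intro x ⟨h1, _⟩
    have h0 : 0 < x := by linarith
    have d1 := L3c (f := fun x => -x) (v := x) (r := x⁻¹) (hasDerivAt_neg x) (by linarith)
      (by simpa using h0.ne') (by field_simp)
    have d2 := L3c (f := fun x => -x⁻¹) (v := x) (r := -x⁻¹) (hasDerivAt_inv h0.ne').neg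
      (by have := inv_pos.2 h0; linarith)
      (by simpa using h0.ne') (by field_simp)
    have d3 := ((Real.hasDerivAt_log h0.ne').pow 3).div_const 6
    have d4 := (Real.hasDerivAt_log h0.ne').const_mul (2 * L2 (-1))
    refine HasDerivAt.congr_deriv (((d1.sub d2).sub d4).add d3) ?_
    have := inv2 h1
    simp
    linear_combination x⁻¹ * this
  · apply tendsto_of_ca
    · refine (((ca3 (by fun_prop) (by norm_num)).sub (ca3 ?_ (by norm_num))).sub ?_).add ?_
      · exact (continuousAt_inv₀ one_ne_zero).neg
      · exact ((Real.continuousAt_log one_ne_zero)).const_mul _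
      · exact ((Real.continuousAt_log one_ne_zero).pow 3).div_const 6
    · simp

/-! arguments in v -/
lemma hb {v : ℝ} (h : v < 1) : HasDerivAt (fun v => Real.log (1 - v)) (-(1-v)⁻¹) v := by
  have := ((hasDerivAt_id v).const_sub 1).log (by simp; linarith)
  refine HasDerivAt.congr_deriv (this) ?_
  simp; field_simp

lemma hf7 {v : ℝ} (h : v < 1) : HasDerivAt (fun v => -v / (1 - v)) (-1/(1-v)^2) v := by
  have h' : 1 - v ≠ 0 := by linarith
  have := (hasDerivAt_id v).neg.div ((hasDerivAt_id v).const_sub 1) h'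
  refine HasDerivAt.congr_deriv (this) ?_
  simp

lemma hf2 {v : ℝ} (h : v < 1) : HasDerivAt (fun v => -v^2 / (1 - v)) (-(2*v-v^2)/(1-v)^2) v := by
  have h' : 1 - v ≠ 0 := by linarith
  have := (hasDerivAt_pow 2 v).neg.div ((hasDerivAt_id v).const_sub 1) h'
  refine HasDerivAt.congr_deriv (this) ?_
  simp; ring

lemma hf3 {v : ℝ} (h : v < 1) : HasDerivAt (fun v => -v / (1 - v)^2) (-(1+v)/(1-v)^3) v := by
  have h' : 1 - v ≠ 0 := by linarith
  have := (hasDerivAt_id v).neg.div (((hasDerivAt_id v).const_sub 1).pow 2) (pow_ne_zero 2 h')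
  refine HasDerivAt.congr_deriv (this) ?_
  simp; field_simp; ring

lemma landen2 {v : ℝ} (hv : v ∈ Ioo (0:ℝ) 1) :
    L2 (-v / (1 - v)) = - L2 v - Real.log (1 - v) ^ 2 / 2 := by
  have := const_of (f := fun v => L2 (-v / (1 - v)) + L2 v + Real.log (1 - v) ^ 2 / 2) (l := 0) (a := 0)
    (b := 1) ?_ ?_ hv
  · linarith
  · intro v ⟨h0, h1⟩
    have h' : 0 < 1 - v := by linarith
    have d1 := L2c (hf7 h1) (r := v⁻¹ + (1-v)⁻¹) (l := - Real.log (1 - v))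
      (lt_trans (div_neg_of_neg_of_pos (by linarith) h') one_pos)
      (div_neg_of_neg_of_pos (by linarith) h').ne (by rw [← Real.log_inv]; congr 1; field_simp; ring)
      (by field_simp; ring)
    have d2 := L2_deriv h1 h0.ne'
    have d3 := ((hb h1).pow 2).div_const 2
    refine HasDerivAt.congr_deriv ((d1.add d2).add d3) ?_
    simp; field_simp; ring
  · apply tendsto_of_ca
    · refine ((ca2 (hf7 one_pos).continuousAt (by norm_num)).add (L2_ca one_pos)).add ?_
      exact ((hb one_pos).continuousAt.pow 2).div_const 2
    · simp

lemma sub_tendsto : Tendsto (fun w : ℝ => 1 - w) (𝓝[>] 0) (𝓝[<] 1) := by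
  apply tendsto_nhdsWithin_of_tendsto_nhds_of_eventually_within
  · have : ContinuousAt (fun w : ℝ => 1 - w) 0 := by fun_prop
    have := this.tendsto.mono_left (nhdsWithin_le_nhds (s := Ioi 0))
    simpa using this
  · filter_upwards [self_mem_nhdsWithin] with w hw
    simpa using hw

lemma euler {v : ℝ} (hv : v ∈ Ioo (0:ℝ) 1) :
    L2 (1 - v) = L2 1 - L2 v - Real.log (1 - v) * Real.log v := by
  have := const_of (f := fun v => L2 (1 - v) + L2 v + Real.log (1 - v) * Real.log v) (l := L2 1) (a := 0)
    (b := 1) ?_ ?_ hv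
  · linarith
  · intro v ⟨h0, h1⟩
    have h' : 0 < 1 - v := by linarith
    have d1 := L2c ((hasDerivAt_id v).const_sub 1) (r := -(1-v)⁻¹) (l := Real.log v)
      (by simp; linarith) (by simp; linarith) (by simp) (by simp; field_simp)
    have d2 := L2_deriv h1 h0.ne'
    have d3 := (hb h1).mul (Real.hasDerivAt_log h0.ne')
    refine HasDerivAt.congr_deriv ((d1.add d2).add d3) ?_
    field_simp; ring
  · have h1 := L2_tendsto.comp sub_tendsto
    have h2 := tendsto_of_ca (L2_ca one_pos) L2_zero
    have h3 := tendsto_mul_log (hb one_pos).differentiableAt (by simp)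
    simpa using (h1.add h2).add h3

lemma landen3 {v : ℝ} (hv : v ∈ Ioo (0:ℝ) 1) :
    L3 (1 - v) + L3 v + L3 (-v / (1 - v)) = L3 1 + L2 1 * Real.log (1 - v)
      + Real.log (1 - v) ^ 3 / 6 - Real.log (1 - v) ^ 2 / 2 * Real.log v := by
  have := const_of (f := fun v => L3 (1 - v) + L3 v + L3 (-v / (1 - v)) - L2 1 * Real.log (1 - v)
      - Real.log (1 - v) ^ 3 / 6 + Real.log (1 - v) ^ 2 / 2 * Real.log v) (l := L3 1) (a := 0)
    (b := 1) ?_ ?_ hv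
  · linarith
  · intro v ⟨h0, h1⟩
    have h' : 0 < 1 - v := by linarith
    have d1 := L3c ((hasDerivAt_id v).const_sub 1) (r := -(1-v)⁻¹)
      (by simp; linarith) (by simp; linarith) (by simp; field_simp)
    have d2 := L3_deriv h1 h0.ne'
    have d3 := L3c (hf7 h1) (r := v⁻¹ + (1-v)⁻¹)
      (lt_trans (div_neg_of_neg_of_pos (by linarith) h') one_pos)
      (div_neg_of_neg_of_pos (by linarith) h').ne
      (by field_simp; ring)
    have d4 := (hb h1).const_mul (L2 1)
    have d5 := ((hb h1).pow 3).div_const 6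
    have d6 := (((hb h1).pow 2).div_const 2).mul (Real.hasDerivAt_log h0.ne')
    refine HasDerivAt.congr_deriv (((((d1.add d2).add d3).sub d4).sub d5).add d6) ?_
    simp only [id]
    rw [landen2 ⟨h0, h1⟩, euler ⟨h0, h1⟩]
    simp; field_simp; ring
  · have h1 := L3_tendsto.comp sub_tendsto
    have h2 := tendsto_of_ca (f := fun v => L3 v + L3 (-v / (1 - v)) - L2 1 * Real.log (1 - v)
      - Real.log (1 - v) ^ 3 / 6) (a := 0) (l := 0) (by
        refine (((L3_ca one_pos).add (ca3 (hf7 one_pos).continuousAt (by norm_num))).sub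
          ((hb one_pos).continuousAt.const_mul _)).sub (((hb one_pos).continuousAt.pow 3).div_const 6)) (by simp)
    have h3 := tendsto_mul_log (((hb one_pos).pow 2).div_const 2).differentiableAt (by simp)
    convert (h1.add h2).add h3 using 1
    · ext v; simp; ring
    · simp

end S16


namespace S16
open Real Set MeasureTheory

lemma cpos (v : ℝ) : 0 < 1 - v + v^2 := by nlinarith [sq_nonneg (v - 1/2)]

lemma hc (v : ℝ) : HasDerivAt (fun v => Real.log (1 - v + v^2)) ((2*v-1) * (1 - v + v^2)⁻¹) v := by
  have := (((hasDerivAt_id v).const_sub 1).add (hasDerivAt_pow 2 v)).log (cpos v).ne'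
  refine HasDerivAt.congr_deriv this ?_
  simp; field_simp; ring

lemma f2neg {v : ℝ} (h0 : 0 < v) (h1 : v < 1) : -v^2/(1-v) < 0 :=
  div_neg_of_neg_of_pos (by nlinarith) (by linarith)
lemma f3neg {v : ℝ} (h0 : 0 < v) (h1 : v < 1) : -v/(1-v)^2 < 0 :=
  div_neg_of_neg_of_pos (by nlinarith) (by have : 0 < 1 - v := by linarith
                                           positivity)
lemma f7neg {v : ℝ} (h0 : 0 < v) (h1 : v < 1) : -v/(1-v) < 0 :=
  div_neg_of_neg_of_pos (by nlinarith) (by linarith)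

lemma d2f2 {v : ℝ} (h0 : 0 < v) (h1 : v < 1) : HasDerivAt (fun v => L2 (-v^2/(1-v)))
    (-(Real.log (1 - v + v^2) - Real.log (1 - v)) * (2 * v⁻¹ + (1-v)⁻¹)) v := by
  have h' : 0 < 1 - v := by linarith
  refine L2c (hf2 h1) ((f2neg h0 h1).trans one_pos) (f2neg h0 h1).ne ?_ ?_
  · rw [← Real.log_div (cpos v).ne' h'.ne']; congr 1; field_simp; ring
  · field_simp; ring

lemma d2f3 {v : ℝ} (h0 : 0 < v) (h1 : v < 1) : HasDerivAt (fun v => L2 (-v/(1-v)^2))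
    (-(Real.log (1 - v + v^2) - 2 * Real.log (1 - v)) * (v⁻¹ + 2 * (1-v)⁻¹)) v := by
  have h' : 0 < 1 - v := by linarith
  refine L2c (hf3 h1) ((f3neg h0 h1).trans one_pos) (f3neg h0 h1).ne ?_ ?_
  · have : 2 * Real.log (1 - v) = Real.log ((1-v)^2) := by simp
    rw [this, ← Real.log_div (cpos v).ne' (by positivity)]; congr 1; field_simp; ring
  · field_simp; ring

lemma dilogW {v : ℝ} (hv : v ∈ Ioo (0:ℝ) 1) :
    L2 (-v^3) = 3 * L2 (-v) + 2 * L2 (-v^2/(1-v)) - L2 (-v/(1-v)^2) + 2 * L2 v - Real.log (1-v)^2 := by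
  have := const_of (f := fun v => L2 (-v^3) - 3 * L2 (-v) - 2 * L2 (-v^2/(1-v)) + L2 (-v/(1-v)^2)
      - 2 * L2 v + Real.log (1-v)^2) (l := 0) (a := 0) (b := 1) ?_ ?_ hv
  · linarith
  · intro v ⟨h0, h1⟩
    have h' : 0 < 1 - v := by linarith
    have d1 := L2c (f := fun v => -v^3) (hasDerivAt_pow 3 v).neg (r := 3 * v⁻¹)
      (l := Real.log (1 - v + v^2) + Real.log (1 + v))
      (by have : 0 < v^3 := by positivity
          linarith)
      (by simp; exact h0.ne') (by rw [← Real.log_mul (cpos v).ne' (by linarith)]; congr 1; ring)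
      (by field_simp; norm_num)
    have d2 := L2c (f := fun x => -x) (v := v) (r := v⁻¹) (hasDerivAt_neg v) (by linarith)
      (by simpa using h0.ne') (l := Real.log (1 + v)) (by simp) (by field_simp)
    have d3 := d2f2 h0 h1
    have d4 := d2f3 h0 h1
    have d5 := L2_deriv h1 h0.ne'
    have d6 := (hb h1).pow 2
    refine HasDerivAt.congr_deriv (((((d1.sub (d2.const_mul 3)).sub (d3.const_mul 2)).add d4).sub
      (d5.const_mul 2)).add d6) ?_
    simp; field_simp; ring
  · apply tendsto_of_ca
    · refine (((((ca2 (by fun_prop) (by norm_num)).sub ((ca2 (by fun_prop) (by norm_num)).const_mul 3)).sub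
        ((ca2 (hf2 one_pos).continuousAt (by norm_num)).const_mul 2)).add
        (ca2 (hf3 one_pos).continuousAt (by norm_num))).sub ((L2_ca one_pos).const_mul 2)).add
        ((hb one_pos).continuousAt.pow 2)
    · simp

noncomputable def PF (v : ℝ) : ℝ := 3 * L2 v - 2 * L2 (-v^2/(1-v)) + 4 * L2 (-v/(1-v)^2)
  + 39/4 * Real.log (1-v)^2 - 6 * (Real.log (1-v) * Real.log (1-v+v^2))
noncomputable def PE (v : ℝ) : ℝ := 
  (-(3/2) * L2 v - 2 * L2 (-v^2/(1-v)) - 2 * L2 (-v/(1-v)^2)) * Real.log (1-v)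
  - 9/2 * Real.log (1-v)^3 + 3 * (Real.log (1-v)^2 * Real.log (1-v+v^2))
noncomputable def PL (v : ℝ) : ℝ := 
  -2 * L3 (-v^2/(1-v)) - L3 (-v/(1-v)^2) + L3 (-v^3) - 9 * L3 (-v) - 15/2 * L3 v + 3/2 * L3 (-v/(1-v))
noncomputable def Psi (v : ℝ) : ℝ := PL v + PE v + PF v * Real.log v

lemma PL_deriv {v : ℝ} (h0 : 0 < v) (h1 : v < 1) : HasDerivAt PL
    (-2 * (L2 (-v^2/(1-v)) * (2 * v⁻¹ + (1-v)⁻¹)) - L2 (-v/(1-v)^2) * (v⁻¹ + 2 * (1-v)⁻¹)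
      + L2 (-v^3) * (3 * v⁻¹) - 9 * (L2 (-v) * v⁻¹) - 15/2 * (L2 v / v)
      + 3/2 * (L2 (-v/(1-v)) * (v⁻¹ + (1-v)⁻¹))) v := by
  have h' : 0 < 1 - v := by linarith
  have d1 := L3c (hf2 h1) (r := 2 * v⁻¹ + (1-v)⁻¹) ((f2neg h0 h1).trans one_pos) (f2neg h0 h1).ne
    (by field_simp; ring)
  have d2 := L3c (hf3 h1) (r := v⁻¹ + 2 * (1-v)⁻¹) ((f3neg h0 h1).trans one_pos) (f3neg h0 h1).ne
    (by field_simp; ring)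
  have d3 := L3c (f := fun v => -v^3) (hasDerivAt_pow 3 v).neg (r := 3 * v⁻¹)
      (by have : 0 < v^3 := by positivity
          linarith)
      (by simp; exact h0.ne') (by field_simp; norm_num)
  have d4 := L3c (f := fun x => -x) (v := v) (r := v⁻¹) (hasDerivAt_neg v) (by linarith)
      (by simpa using h0.ne') (by field_simp)
  have d5 := L3_deriv h1 h0.ne'
  have d6 := L3c (hf7 h1) (r := v⁻¹ + (1-v)⁻¹)
      ((f7neg h0 h1).trans one_pos) (f7neg h0 h1).ne (by field_simp; ring)
  exact (((((d1.const_mul (-2)).sub d2).add d3).sub (d4.const_mul 9)).sub (d5.const_mul (15/2))).add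
    (d6.const_mul (3/2))

lemma Psi_deriv {v : ℝ} (h0 : 0 < v) (h1 : v < 1) : HasDerivAt Psi
    (Real.log (1-v) * (Real.log v - Real.log (1-v) / 2) *
      (v⁻¹ - 11/2 * (1-v)⁻¹ - 6 * ((2*v-1) * (1 - v + v^2)⁻¹))) v := by
  have h' : 0 < 1 - v := by linarith
  have hcp := cpos v
  have a2 := d2f2 h0 h1
  have a3 := d2f3 h0 h1
  have a1 := L2_deriv h1 h0.ne'
  have b1 := hb h1
  have c1 := hc v
  have dF := ((((a1.const_mul 3).sub (a2.const_mul 2)).add (a3.const_mul 4)).add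
    ((b1.pow 2).const_mul (39/4))).sub ((b1.mul c1).const_mul 6)
  have dE := (((((a1.const_mul (-(3/2))).sub (a2.const_mul 2)).sub (a3.const_mul 2)).mul b1).sub
    ((b1.pow 3).const_mul (9/2))).add (((b1.pow 2).mul c1).const_mul 3)
  refine HasDerivAt.congr_deriv (((PL_deriv h0 h1).add dE).add (dF.mul (Real.hasDerivAt_log h0.ne'))) ?_
  rw [dilogW ⟨h0, h1⟩, landen2 ⟨h0, h1⟩]
  simp
  generalize Real.log (1 - v + v^2) = lc
  generalize Real.log (1 - v) = lb
  generalize Real.log v = la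
  generalize L2 v = x1
  generalize L2 (-v^2/(1-v)) = x2
  generalize L2 (-v/(1-v)^2) = x3
  generalize L2 (-v) = x4
  field_simp
  ring

lemma Psi_zero : Tendsto Psi (𝓝[>] 0) (𝓝 0) := by
  have e2 := (L2_deriv' (z := -0^2/(1-0)) (by norm_num)).comp 0 (hf2 one_pos)
  have e3 := (L2_deriv' (z := -0/(1-0)^2) (by norm_num)).comp 0 (hf3 one_pos)
  have e1 := L2_deriv' one_pos
  have b1 := hb one_pos
  have c1 := hc 0
  have hF := tendsto_mul_log (F := PF) (((((e1.const_mul 3).sub (e2.const_mul 2)).add (e3.const_mul 4)).add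
    ((b1.pow 2).const_mul (39/4))).sub ((b1.mul c1).const_mul 6)).differentiableAt (by simp [PF])
  have dE := (((((e1.const_mul (-(3/2))).sub (e2.const_mul 2)).sub (e3.const_mul 2)).mul b1).sub
    ((b1.pow 3).const_mul (9/2))).add (((b1.pow 2).mul c1).const_mul 3)
  have hE : Tendsto PE (𝓝[>] 0) (𝓝 0) := tendsto_of_ca dE.continuousAt (by simp [PE])
  have hL : Tendsto PL (𝓝[>] 0) (𝓝 0) := by
    apply tendsto_of_ca
    · exact ((((((ca3 (hf2 one_pos).continuousAt (by norm_num)).const_mul (-2)).sub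
        (ca3 (hf3 one_pos).continuousAt (by norm_num))).add (ca3 (by fun_prop) (by norm_num))).sub
        ((ca3 (by fun_prop) (by norm_num)).const_mul 9)).sub ((L3_ca one_pos).const_mul (15/2))).add
        ((ca3 (hf7 one_pos).continuousAt (by norm_num)).const_mul (3/2))
    · simp [PL]
  have := (hL.add hE).add hF
  rw [add_zero, add_zero] at this
  exact this

noncomputable def ps : ℝ := (√5 - 1) / 2

lemma ps_sq : ps^2 = 1 - ps := by
  have : √5 ^ 2 = 5 := Real.sq_sqrt (by norm_num)
  unfold ps; linear_combination this / 4

lemma ps_pos : 0 < ps := by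
  have : 1 < √5 := by rw [Real.lt_sqrt] <;> norm_num
  unfold ps; linarith
lemma ps_lt : ps < 1 := by nlinarith [ps_sq, ps_pos]

lemma Psi_ps : Psi ps = 0 := by
  have h0 := ps_pos
  have h1 := ps_lt
  have hs := ps_sq
  have hi : 1 < ps⁻¹ := (one_lt_inv₀ h0).2 h1
  have hb : Real.log (1 - ps) = 2 * Real.log ps := by rw [← hs]; simp
  have hl : Real.log ps⁻¹ = - Real.log ps := Real.log_inv _
  have f2 : -ps^2/(1-ps) = -1 := by rw [← hs]; field_simp
  have f3 : -ps/(1-ps)^2 = -(ps⁻¹^3) := by rw [← hs]; field_simp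
  have f7 : -ps/(1-ps) = -ps⁻¹ := by rw [← hs]; field_simp
  have i3 := inv3 (y := ps⁻¹^3) (one_lt_pow₀ hi (by norm_num))
  have i1 := inv3 hi
  have hl3 : Real.log (ps⁻¹^3) = - 3 * Real.log ps := by rw [Real.log_pow, hl]; push_cast; ring
  have hin : (ps⁻¹^3)⁻¹ = ps^3 := by simp
  rw [hl3, hin] at i3
  rw [hl, inv_inv] at i1
  have lan := landen3 ⟨h0, h1⟩
  rw [f7, hb, ← hs, dup3 ⟨h0, h1⟩, i1, L2_one] at lan
  have z := L3_one
  unfold Psi PL PE PF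
  rw [f2, f3, f7, hb, i3, i1]
  linear_combination (-3/2) * lan - (1/2) * z

end S16


namespace S16
open Real Set MeasureTheory

noncomputable def fx (x : ℝ) : ℝ := 2 * Real.arsinh (x / 2)
noncomputable def vx (x : ℝ) : ℝ := 1 - Real.exp (-2 * Real.arsinh (x / 2))

lemma ars_deriv (x : ℝ) : HasDerivAt (fun x => Real.arsinh (x/2)) ((√(1 + (x/2)^2))⁻¹ * (1/2)) x := by
  have := (Real.hasDerivAt_arsinh (x/2)).comp x ((hasDerivAt_id x).div_const 2)
  exact this

lemma fx_deriv (x : ℝ) : HasDerivAt fx ((√(1 + (x/2)^2))⁻¹) x := by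
  refine ((ars_deriv x).const_mul 2).congr_deriv ?_
  ring

lemma vx_deriv (x : ℝ) : HasDerivAt vx (Real.exp (-2 * Real.arsinh (x / 2)) * (√(1 + (x/2)^2))⁻¹) x := by
  refine ((((ars_deriv x).const_mul (-2)).exp).const_sub 1).congr_deriv ?_
  ring

lemma fx_zero : fx 0 = 0 := by simp [fx]
lemma fx_cont : ContinuousOn (dslope fx 0) univ := by
  rw [continuousOn_dslope univ_mem]
  exact ⟨fun x _ => (fx_deriv x).continuousAt.continuousWithinAt, (fx_deriv 0).differentiableAt⟩

lemma Epos {x : ℝ} (hx : 0 < x) : 1 < Real.exp (Real.arsinh (x/2)) := by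
  rw [Real.one_lt_exp_iff, Real.arsinh_pos_iff]; linarith

lemma Ex (x : ℝ) : x = Real.exp (Real.arsinh (x/2)) - (Real.exp (Real.arsinh (x/2)))⁻¹ := by
  have h := Real.sinh_arsinh (x/2)
  rw [Real.sinh_eq, Real.exp_neg] at h
  linarith

lemma Ec (x : ℝ) : √(1 + (x/2)^2) = (Real.exp (Real.arsinh (x/2)) + (Real.exp (Real.arsinh (x/2)))⁻¹) / 2 := by
  have h := Real.cosh_arsinh (x/2)
  rw [Real.cosh_eq, Real.exp_neg] at h
  linarith

lemma vxE (x : ℝ) : vx x = 1 - (Real.exp (Real.arsinh (x/2)))⁻¹^2 := by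
  rw [vx, ← Real.exp_neg, ← Real.exp_nat_mul]; congr 2; push_cast; ring

lemma vxE' (x : ℝ) : vx x = x * (Real.exp (Real.arsinh (x/2)))⁻¹ := by
  rw [vxE]
  nth_rw 2 [Ex x]
  have := Real.exp_pos (Real.arsinh (x/2))
  field_simp

lemma vx_pos {x : ℝ} (hx : 0 < x) : 0 < vx x := by rw [vxE']; positivity
lemma vx_lt (x : ℝ) : vx x < 1 := by unfold vx; have := Real.exp_pos (-2 * Real.arsinh (x / 2)); linarith

lemma vx_one : vx 1 = ps := by
  have hE := Real.exp_arsinh (1/2)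
  have h5 : √(1 + (1/2:ℝ)^2) = √5 / 2 := by
    rw [Real.sqrt_eq_iff_mul_self_eq (by norm_num) (by positivity)]
    have : √5 ^ 2 = 5 := Real.sq_sqrt (by norm_num)
    linear_combination -this / 4
  rw [vxE', hE, h5, ps]
  have : √5 ^ 2 = 5 := Real.sq_sqrt (by norm_num)
  have h : 0 < √5 := by positivity
  field_simp
  linear_combination -this

lemma H_deriv {x : ℝ} (hx : 0 < x) : HasDerivAt (fun x => - Psi (vx x))
    (Real.log x * (dslope fx 0 x * (1 - 12 * x^2 / (1 + x^2)))) x := by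
  refine ((Psi_deriv (vx_pos hx) (vx_lt x)).comp x (vx_deriv x)).neg.congr_deriv ?_
  have hb : Real.log (1 - vx x) = -2 * Real.arsinh (x/2) := by simp [vx]
  have ha : Real.log (vx x) = Real.log x - Real.arsinh (x/2) := by
    rw [vxE', Real.log_mul hx.ne' (by positivity), Real.log_inv, Real.log_exp]; ring
  have hd : dslope fx 0 x = 2 * Real.arsinh (x/2) / x := by
    rw [dslope_of_ne _ hx.ne', slope_def_field, fx_zero, fx]; ring
  have he : Real.exp (-2 * Real.arsinh (x / 2)) = 1 - vx x := by simp [vx]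
  rw [hb, ha, hd, he, Ec x, vxE]
  have h1 := Epos hx
  have h2 := Ex x
  set E := Real.exp (Real.arsinh (x/2)) with hE
  set A := Real.arsinh (x/2)
  set l := Real.log x
  have hE0 : 0 < E := by linarith
  have hE1 : E^2 - 1 ≠ 0 := by nlinarith
  have key : (1 - E⁻¹^2)⁻¹ - 11/2 * (1 - (1 - E⁻¹^2))⁻¹ - 6 * ((2 * (1 - E⁻¹^2) - 1) * (1 - (1 - E⁻¹^2) + (1 - E⁻¹^2)^2)⁻¹)
     = (x⁻¹ - 12 * x / (1 + x^2)) * ((1 - (1 - E⁻¹^2)) * ((E + E⁻¹)/2)⁻¹)⁻¹ := by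
    have hp : 0 < E^2 + (E^2-1)^2 := by positivity
    have e1 : 1 + x^2 = (E^2 + (E^2-1)^2) / E^2 := by rw [h2]; field_simp
    have e2 : 1 - (1 - E⁻¹^2) + (1 - E⁻¹^2)^2 = (E^2 + (E^2-1)^2) / E^4 := by field_simp; ring
    have e3 : 1 - E⁻¹^2 = (E^2 - 1)/E^2 := by field_simp
    have e4 : x = (E^2-1)/E := by rw [h2]; field_simp
    rw [e1, e2, e3, e4]
    have e5 : 1 - (E^2-1)/E^2 = 1/E^2 := by field_simp; ring
    rw [e5]
    field_simp
    ring
  rw [key]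
  have hn : (1 - (1 - E⁻¹^2)) * ((E + E⁻¹)/2)⁻¹ ≠ 0 := by
    have : 1 - (1 - E⁻¹^2) = E⁻¹^2 := by ring
    rw [this]; positivity
  generalize (1 - (1 - E⁻¹^2)) * ((E + E⁻¹)/2)⁻¹ = q at *
  have : 0 < 1 + x^2 := by positivity
  field_simp
  ring

lemma log_int {q : ℝ → ℝ} (hq : ContinuousOn q (uIcc 0 1)) :
    IntervalIntegrable (fun x => Real.log x * q x) volume 0 1 :=
  intervalIntegral.intervalIntegrable_log'.mul_continuousOn hq

lemma I0 : ∫ x in (0:ℝ)..1, Real.log x * (dslope fx 0 x * (1 - 12 * x^2 / (1 + x^2))) = 0 := by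
  have hz : Tendsto (fun x => - Psi (vx x)) (𝓝[>] 0) (𝓝 (-0)) := by
    apply Tendsto.neg
    refine Psi_zero.comp ?_
    apply tendsto_nhdsWithin_of_tendsto_nhds_of_eventually_within
    · exact tendsto_of_ca (vx_deriv 0).continuousAt (by simp [vx])
    · filter_upwards [self_mem_nhdsWithin] with x hx using vx_pos hx
  have h1 : Tendsto (fun x => - Psi (vx x)) (𝓝[<] 1) (𝓝 (- Psi (vx 1))) :=
    (H_deriv one_pos).continuousAt.tendsto.mono_left nhdsWithin_le_nhds
  rw [intervalIntegral.integral_eq_sub_of_hasDerivAt_of_tendsto one_pos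
    (fun x hx => H_deriv hx.1) (log_int ?_) hz h1, vx_one, Psi_ps]
  · simp
  · refine (fx_cont.mono (subset_univ _)).mul ?_
    apply Continuous.continuousOn
    have : ∀ x : ℝ, 1 + x^2 ≠ 0 := fun x => by positivity
    fun_prop (disch := assumption)

end S16


namespace S16
open Real Set MeasureTheory

lemma hs_cast {f g : ℕ → ℝ} {a b : ℝ} (h : HasSum f a) (hfg : ∀ n, g n = f n) (hab : b = a) :
    HasSum g b := by
  rw [hab, show g = f from funext hfg]; exact h

lemma choose_rec (a : ℝ) (n : ℕ) : Ring.choose a (n+1) * (n+1) = Ring.choose a n * (a - n) := by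
  rw [Ring.choose_eq_smul, Ring.choose_eq_smul, descPochhammer_succ_right, Polynomial.smeval_mul,
    Nat.factorial_succ]
  simp [Polynomial.smeval_sub, Polynomial.smeval_natCast]
  field_simp

lemma cb_rec (n : ℕ) : ((2*(n+1)).choose (n+1) : ℝ) * (n+1) = 2 * (2*n+1) * ((2*n).choose n : ℝ) := by
  have := Nat.succ_mul_centralBinom_succ n
  rw [Nat.centralBinom_eq_two_mul_choose, Nat.centralBinom_eq_two_mul_choose] at this
  have h : ((n + 1 : ℕ) : ℝ) * ((2*(n+1)).choose (n+1) : ℕ) = ((2 * (2*n+1) * (2*n).choose n : ℕ) : ℝ) := by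
    exact_mod_cast this
  push_cast at h
  linarith

lemma choose_half (n : ℕ) : Ring.choose (-(1/2) : ℝ) n = (-1)^n * ((2*n).choose n : ℝ) / 4^n := by
  induction n with
  | zero => simp
  | succ n ih =>
    have h1 := choose_rec (-(1/2)) n
    have h2 := cb_rec n
    have hn : (n:ℝ) + 1 ≠ 0 := by positivity
    rw [ih] at h1
    apply mul_right_cancel₀ hn
    rw [h1, pow_succ, pow_succ]
    have : (-1) ^ n * -1 * ((2 * (n + 1)).choose (n + 1) : ℝ) / (4 ^ n * 4) * (n + 1)
      = (-1)^n * -1 / (4^n * 4) * (((2 * (n + 1)).choose (n + 1) : ℝ) * (n+1)) := by ring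
    rw [this, h2]
    field_simp
    ring

lemma binom {y : ℝ} (hy : |y| < 1) :
    HasSum (fun n : ℕ => ((2*n).choose n : ℝ) / 4^n * y^n) (√(1 - y))⁻¹ := by
  have h := (Real.one_add_rpow_hasFPowerSeriesOnBall_zero (a := -(1/2))).hasSum (y := -y)
    (by
      have h1 : ‖y‖₊ < 1 := by
        rw [← NNReal.coe_lt_coe]; simpa using hy
      simpa [enorm_eq_nnnorm] using h1)
  have hp : 0 ≤ 1 - y := by have := (abs_lt.1 hy).2; linarith
  refine hs_cast h (fun n => ?_) ?_
  · simp only [binomialSeries_apply, choose_half]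
    simp
    rw [neg_pow y n]
    have : ((-1:ℝ)^n)*(-1)^n = 1 := by rw [← mul_pow]; simp
    linear_combination (-((2*n).choose n : ℝ) / 4^n * y^n) * this
  · rw [zero_add, Real.rpow_neg (by linarith), ← Real.sqrt_eq_rpow, sub_eq_add_neg]

noncomputable def an (n : ℕ) : ℝ := ((2*n).choose n : ℝ) / ((2*(n:ℝ)+1) * 16^n)

lemma cb_le (n : ℕ) : ((2*n).choose n : ℝ) ≤ 4^n := by
  have := Nat.centralBinom_le_four_pow n
  rw [Nat.centralBinom_eq_two_mul_choose] at this
  exact_mod_cast this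

lemma cb16_le (n : ℕ) : ((2*n).choose n : ℝ) / 16^n ≤ (1/4)^n := by
  rw [div_le_iff₀ (by positivity), ← mul_pow]
  norm_num
  exact cb_le n

lemma an_nonneg (n : ℕ) : 0 ≤ an n := by unfold an; positivity
lemma an_le (n : ℕ) : an n ≤ (1/4)^n := by
  refine le_trans ?_ (cb16_le n)
  unfold an
  rw [mul_comm (2*(n:ℝ)+1), ← div_div]
  apply div_le_self (by positivity)
  have : (0:ℝ) ≤ n := by positivity
  linarith

lemma series_int {ε x : ℝ} (he : |ε| ≤ 1) (hx0 : 0 ≤ x) (hx : x ≤ 1) :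
    HasSum (fun n : ℕ => an n * ε^n * x^(2*n+1)) (∫ s in (0:ℝ)..x, (√(1 - ε * (s/2)^2))⁻¹) := by
  have key := intervalIntegral.hasSum_integral_of_dominated_convergence (a := 0) (b := x)
    (μ := volume) (F := fun (n : ℕ) (s : ℝ) => ((2*n).choose n : ℝ) / 16^n * ε^n * s^(2*n))
    (f := fun s => (√(1 - ε * (s/2)^2))⁻¹)
    (fun n _ => (1/4)^n) (fun n => (by fun_prop : Continuous _).aestronglyMeasurable) ?_ ?_ ?_ ?_
  · refine hs_cast key (fun n => ?_) rfl
    rw [intervalIntegral.integral_const_mul, integral_pow, an]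
    have : (2*(n:ℝ)+1) ≠ 0 := by positivity
    push_cast
    simp
    field_simp
  · intro n
    refine Eventually.of_forall fun s hs => ?_
    rw [uIoc_of_le hx0] at hs
    rw [norm_mul, norm_mul, norm_pow, norm_pow, Real.norm_eq_abs, Real.norm_eq_abs, Real.norm_eq_abs,
      abs_of_nonneg (by positivity : (0:ℝ) ≤ ((2*n).choose n : ℝ) / 16^n), abs_of_pos hs.1]
    calc _ ≤ (1/4:ℝ)^n * 1 * 1 := by
          have := hs.1
          gcongr
          · exact cb16_le n
          · exact pow_le_one₀ (abs_nonneg _) he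
          · exact pow_le_one₀ hs.1.le (hs.2.trans hx)
      _ = _ := by ring
  · exact Eventually.of_forall fun s _ => summable_geometric_of_lt_one (by norm_num) (by norm_num)
  · exact intervalIntegrable_const
  · refine Eventually.of_forall fun s hs => ?_
    rw [uIoc_of_le hx0] at hs
    have hs1 : s^2 ≤ 1 := pow_le_one₀ hs.1.le (hs.2.trans hx)
    have := binom (y := ε * (s/2)^2) (by
      rw [abs_mul, abs_of_nonneg (by positivity : (0:ℝ) ≤ (s/2)^2)]
      nlinarith [abs_nonneg ε, sq_nonneg s])
    refine hs_cast this (fun n => ?_) rfl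
    rw [mul_pow, div_pow, div_pow, ← pow_mul, ← pow_mul, pow_mul 2 2 n]
    have : (16:ℝ)^n = 4^n * 4^n := by rw [← mul_pow]; norm_num
    rw [this]; norm_num; field_simp

lemma sum_an : HasSum an (π / 3) := by
  have h := series_int (ε := 1) (x := 1) (by simp) (by simp) le_rfl
  simp only [one_pow, mul_one, one_mul] at h
  refine hs_cast h (fun n => rfl) ?_
  have hd : ∀ s ∈ uIcc (0:ℝ) 1, HasDerivAt (fun s => 2 * Real.arcsin (s/2)) ((√(1 - (s/2)^2))⁻¹) s := by
    intro s hs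
    rw [uIcc_of_le zero_le_one] at hs
    have := (Real.hasDerivAt_arcsin (x := s/2) (by linarith [hs.1]) (by linarith [hs.2])).comp s
      ((hasDerivAt_id s).div_const 2)
    refine (this.const_mul 2).congr_deriv ?_
    field_simp
  rw [intervalIntegral.integral_eq_sub_of_hasDerivAt hd]
  · have : Real.arcsin (1/2) = π / 6 := by
      rw [← Real.sin_pi_div_six, Real.arcsin_sin] <;> linarith [Real.pi_pos]
    rw [this]; simp; ring
  · apply ContinuousOn.intervalIntegrable
    intro s hs
    rw [uIcc_of_le zero_le_one] at hs
    have : √(1 - (s/2)^2) ≠ 0 := by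
      apply ne_of_gt; apply Real.sqrt_pos.2; nlinarith [hs.1, hs.2]
    apply ContinuousAt.continuousWithinAt
    fun_prop (disch := assumption)

lemma sum_fx {x : ℝ} (hx0 : 0 < x) (hx : x ≤ 1) :
    HasSum (fun n : ℕ => (-1)^n * an n * x^(2*n)) (dslope fx 0 x) := by
  have h := series_int (ε := -1) (x := x) (by simp) hx0.le hx
  have hI : ∫ s in (0:ℝ)..x, (√(1 - (-1) * (s/2)^2))⁻¹ = fx x := by
    rw [intervalIntegral.integral_eq_sub_of_hasDerivAt (f := fx) (fun s _ => by
      refine (fx_deriv s).congr_deriv ?_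
      congr 2; ring)]
    · simp [fx_zero]
    · apply Continuous.intervalIntegrable
      have : ∀ s : ℝ, √(1 - (-1) * (s/2)^2) ≠ 0 := by
        intro s; apply ne_of_gt; apply Real.sqrt_pos.2; nlinarith [sq_nonneg (s/2)]
      fun_prop (disch := assumption)
  rw [hI] at h
  have hd : dslope fx 0 x = fx x / x := by
    rw [dslope_of_ne _ hx0.ne', slope_def_field, fx_zero]; ring
  rw [hd]
  refine hs_cast (h.div_const x) (fun n => ?_) rfl
  field_simp
  ring

lemma int_log (n : ℕ) : ∫ x in (0:ℝ)..1, Real.log x * x^(2*n) = -1/(2*(n:ℝ)+1)^2 := by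
  have hn : (2*(n:ℝ)+1) ≠ 0 := by positivity
  rw [intervalIntegral.integral_eq_sub_of_hasDerivAt_of_le zero_le_one
    (f := fun x => x^(2*n) * (x * Real.log x) / (2*(n:ℝ)+1) - x^(2*n+1) / (2*(n:ℝ)+1)^2)]
  · simp; ring
  · have := Real.continuous_mul_log
    apply Continuous.continuousOn
    fun_prop
  · intro x hx
    have h := (((hasDerivAt_pow (2*n+1) x).mul (Real.hasDerivAt_log hx.1.ne')).div_const (2*(n:ℝ)+1)).sub
      ((hasDerivAt_pow (2*n+1) x).div_const ((2*(n:ℝ)+1)^2))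
    have e : (fun x : ℝ => x^(2*n) * (x * Real.log x) / (2*(n:ℝ)+1) - x^(2*n+1) / (2*(n:ℝ)+1)^2)
       = fun x : ℝ => x^(2*n+1) * Real.log x / (2*(n:ℝ)+1) - x^(2*n+1) / (2*(n:ℝ)+1)^2 := by
      ext x; ring
    rw [e]
    refine h.congr_deriv ?_
    have := hx.1.ne'
    push_cast
    field_simp
    ring
  · exact log_int (by fun_prop)

noncomputable def rn (n : ℕ) : ℝ := ∫ x in (0:ℝ)..1, Real.log x * (x^(2*n) * (x^2 / (1 + x^2)))

lemma w_cont : Continuous fun x : ℝ => x^2 / (1 + x^2) := by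
  have : ∀ x : ℝ, 1 + x^2 ≠ 0 := fun x => by positivity
  fun_prop (disch := assumption)

lemma rn_int (n : ℕ) : IntervalIntegrable (fun x => Real.log x * (x^(2*n) * (x^2 / (1 + x^2)))) volume 0 1 :=
  log_int (by have := w_cont; fun_prop)

lemma rn_rec (n : ℕ) : rn n + rn (n+1) = -1/(2*((n+1:ℕ):ℝ)+1)^2 := by
  rw [← int_log, rn, rn, ← intervalIntegral.integral_add (rn_int n) (rn_int (n+1))]
  congr 1; ext x
  have : 1 + x^2 ≠ 0 := by positivity
  field_simp
  ring

lemma rn_bound (n : ℕ) : |rn n| ≤ 1/(2*(n:ℝ)+1)^2 := by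
  have h1 : rn n ≤ 0 := by
    have := intervalIntegral.integral_mono_on zero_le_one (rn_int n) (intervalIntegrable_const (c := (0:ℝ)))
      (fun x hx => mul_nonpos_of_nonpos_of_nonneg (Real.log_nonpos hx.1 hx.2) (by have := hx.1; positivity))
    simpa [rn] using this
  have h2 : -1/(2*(n:ℝ)+1)^2 ≤ rn n := by
    rw [← int_log, rn]
    refine intervalIntegral.integral_mono_on zero_le_one (log_int (by fun_prop)) (rn_int n) ?_
    intro x hx
    apply mul_le_mul_of_nonpos_left _ (Real.log_nonpos hx.1 hx.2)
    apply mul_le_of_le_one_right (by have := hx.1; positivity)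
    rw [div_le_one (by positivity)]; linarith
  rw [abs_of_nonpos h1]
  have : -1/(2*(n:ℝ)+1)^2 = -(1/(2*(n:ℝ)+1)^2) := by ring
  linarith

lemma inv_sq_sum : Summable fun n : ℕ => 1/(2*(n:ℝ)+1)^2 := by
  have h := (Real.summable_one_div_nat_pow (p := 2)).2 (by norm_num)
  have := h.comp_injective (i := fun n : ℕ => 2*n+1) (fun a b h => by simpa using h)
  refine this.congr fun n => ?_
  simp

lemma Sn_eq (n : ℕ) : ∑ j ∈ Finset.range (n+1), (-1:ℝ)^j / (2*(j:ℝ)+1)^2 + (-1)^n * rn n = catalan' := by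
  set S : ℕ → ℝ := fun n => ∑ j ∈ Finset.range (n+1), (-1:ℝ)^j / (2*(j:ℝ)+1)^2 + (-1)^n * rn n with hS
  have hstep : ∀ n, S (n+1) = S n := by
    intro n
    simp only [hS]
    rw [Finset.sum_range_succ _ (n+1)]
    have := rn_rec n
    rw [pow_succ]
    linear_combination (-(-1:ℝ)^n) * this
  have hconst : ∀ m, S m = S 0 := by
    intro m; induction m with
    | zero => rfl
    | succ m ih => rw [hstep, ih]
  have hsum : Summable fun k : ℕ => (-1:ℝ)^k / (2*(k:ℝ)+1)^2 := by
    refine Summable.of_norm (inv_sq_sum.congr fun n => ?_)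
    simp
  have hr : Tendsto (fun n => (-1)^n * rn n) atTop (𝓝 0) := by
    refine squeeze_zero_norm (fun n => ?_) inv_sq_sum.tendsto_atTop_zero
    simpa using rn_bound n
  have h1 := ((tendsto_add_atTop_iff_nat 1).2 hsum.hasSum.tendsto_sum_nat).add hr
  have h2 : Tendsto S atTop (𝓝 (S 0)) := by
    rw [show S = fun _ => S 0 from funext hconst]; exact tendsto_const_nhds
  have := tendsto_nhds_unique h2 h1
  rw [add_zero] at this
  exact (hconst n).trans this

lemma sum_int : HasSum (fun n => ∫ x in (0:ℝ)..1, Real.log x * ((-1)^n * an n * x^(2*n) * (1 - 12 * x^2 / (1 + x^2)))) 0 := by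
  refine hs_cast ?_ (fun _ => rfl) I0.symm
  have hw : Continuous fun x : ℝ => 1 - 12 * x^2 / (1 + x^2) := by
    have : ∀ x : ℝ, 1 + x^2 ≠ 0 := fun x => by positivity
    fun_prop (disch := assumption)
  refine intervalIntegral.hasSum_integral_of_dominated_convergence (a := 0) (b := 1) (μ := volume)
    (F := fun (n : ℕ) (x : ℝ) => Real.log x * ((-1)^n * an n * x^(2*n) * (1 - 12 * x^2 / (1 + x^2))))
    (f := fun x => Real.log x * (dslope fx 0 x * (1 - 12 * x^2 / (1 + x^2))))
    (fun (n : ℕ) (x : ℝ) => ‖Real.log x‖ * ((1/4)^n * 11)) (fun n => ?_) (fun n => ?_) ?_ ?_ ?_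
  · have h := (log_int (q := fun x => (-1)^n * an n * x^(2*n) * (1 - 12 * x^2 / (1 + x^2)))
      (by fun_prop))
    rw [uIoc_of_le zero_le_one]
    exact h.1.aestronglyMeasurable
  · refine Eventually.of_forall fun x hx => ?_
    rw [uIoc_of_le zero_le_one] at hx
    rw [norm_mul]
    gcongr
    rw [norm_mul, norm_mul, norm_mul]
    have e1 : ‖(-1:ℝ)^n‖ = 1 := by simp
    have e2 : ‖an n‖ ≤ (1/4)^n := by rw [Real.norm_of_nonneg (an_nonneg n)]; exact an_le n
    have e3 : ‖x^(2*n)‖ ≤ 1 := by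
      rw [Real.norm_of_nonneg (by have := hx.1; positivity)]; exact pow_le_one₀ hx.1.le hx.2
    have e4 : ‖1 - 12 * x^2 / (1 + x^2)‖ ≤ 11 := by
      have hp : 0 < 1 + x^2 := by positivity
      have : 12 * x^2 / (1 + x^2) ≤ 12 := by rw [div_le_iff₀ hp]; linarith
      have : 0 ≤ 12 * x^2 / (1 + x^2) := by positivity
      rw [Real.norm_eq_abs, abs_le]; constructor <;> linarith
    rw [e1]
    calc _ ≤ 1 * (1/4:ℝ)^n * 1 * 11 := by gcongr
      _ = _ := by ring
  · exact Eventually.of_forall fun x _ => ((summable_geometric_of_lt_one (by norm_num) (by norm_num)).mul_right 11).mul_left _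
  · simp_rw [tsum_mul_left]
    exact intervalIntegral.intervalIntegrable_log'.norm.mul_const _
  · refine Eventually.of_forall fun x hx => ?_
    rw [uIoc_of_le zero_le_one] at hx
    exact HasSum.mul_left (Real.log x) (HasSum.mul_right (1 - 12 * x^2 / (1 + x^2)) (sum_fx hx.1 hx.2))

end S16

theorem stmt_16 :
    Tendsto (fun N => ∑ n ∈ Finset.range N,
      ((2*n).choose n : ℝ) / ((2*(n:ℝ)+1) * 16^n) *
        (12 * (∑ j ∈ Finset.range (n+1), (-1:ℝ)^j / (2*(j:ℝ)+1)^2)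
          - (-1:ℝ)^n / (2*(n:ℝ)+1)^2))
      atTop (𝓝 (4 * Real.pi * catalan')) := by
  have h := ((S16.sum_an.mul_left (12 * catalan')).add S16.sum_int).tendsto_sum_nat
  have e : 12 * catalan' * (Real.pi / 3) + 0 = 4 * Real.pi * catalan' := by ring
  rw [e] at h
  refine h.congr fun N => Finset.sum_congr rfl fun n _ => ?_
  have hI : ∫ x in (0:ℝ)..1, Real.log x * ((-1)^n * S16.an n * x^(2*n) * (1 - 12 * x^2 / (1 + x^2)))
      = (-1)^n * S16.an n * (-1/(2*(n:ℝ)+1)^2 - 12 * S16.rn n) := by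
    rw [← S16.int_log, S16.rn, ← intervalIntegral.integral_const_mul,
      ← intervalIntegral.integral_sub (S16.log_int (by fun_prop)) ((S16.rn_int n).const_mul 12),
      ← intervalIntegral.integral_const_mul]
    congr 1; ext x; ring
  rw [hI, ← S16.Sn_eq n]
  change _ = S16.an n * _
  ring
end

section
/- $\sum_{n=1}^{\infty} \frac{(28n^2 - 18n + 3)(-64)^n}{n^5 \binom{2n}{n}^4 \binom{3n}{n}} = -14\,\zeta(3)$. -/
open Filter Topology

/-- Ratio of the WZ kernel in the `n` direction. -/
noncomputable def wzR (n k : ℝ) : ℝ :=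
  (n + k + 1/2)^3 * ((2*n+1)*(2*n+2)*(n+1))^3 /
    (((3*n+k+3/2)*(3*n+k+5/2)*(3*n+k+7/2)) * ((2*n+k+3/2)*(2*n+k+5/2))^3 *
      ((3*n+1)*(3*n+2)*(3*n+3)))

/-- The WZ kernel. -/
noncomputable def wzH : ℕ → ℕ → ℝ
  | 0, k => 1 / ((k:ℝ) + 1/2)^4
  | (n+1), k => wzH n k * wzR n k

/-- Numerator of the certificate. -/
def wzP (n k : ℝ) : ℝ :=
  (10214 + 148627 * n + 927800 * n ^ 2 + 3247172 * n ^ 3 + 6976384 * n ^ 4 + 9433664 * n ^ 5 + 7851008 * n ^ 6 + 3681280 * n ^ 7 + 745472 * n ^ 8)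
    + (53916 + 669582 * n + 3503352 * n ^ 2 + 10017000 * n ^ 3 + 16919616 * n ^ 4 + 16900224 * n ^ 5 + 9252864 * n ^ 6 + 2144256 * n ^ 7) * k
    + (113736 + 1193532 * n + 5132496 * n ^ 2 + 11589600 * n ^ 3 + 14510208 * n ^ 4 + 9560832 * n ^ 5 + 2592768 * n ^ 6) * k ^ 2
    + (129616 + 1118936 * n + 3802432 * n ^ 2 + 6367424 * n ^ 3 + 5261056 * n ^ 4 + 1717760 * n ^ 5) * k ^ 3
    + (88224 + 599184 * n + 1504512 * n ^ 2 + 1657920 * n ^ 3 + 677376 * n ^ 4) * k ^ 4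
    + (35904 + 178848 * n + 293760 * n ^ 2 + 159360 * n ^ 3) * k ^ 5
    + (8064 + 25920 * n + 20736 * n ^ 2) * k ^ 6
    + (768 + 1152 * n) * k ^ 7

noncomputable def wzF (n k : ℕ) : ℝ := (1 + 3*(n:ℝ) + 2*(k:ℝ)) * wzH n k

/-- Rational certificate. -/
noncomputable def wzC (n k : ℝ) : ℝ :=
  wzP n k / (128 * (3 * (3*n+1)*(3*n+2)) * ((3*n+k+3/2)*(3*n+k+5/2)*(2*n+k+3/2)^3))

noncomputable def wzG (n k : ℕ) : ℝ := wzH n k * wzC n k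

lemma wzR_pos (n k : ℝ) (hn : 0 ≤ n) (hk : 0 ≤ k) : 0 < wzR n k := by
  unfold wzR; positivity

lemma wzH_pos (n k : ℕ) : 0 < wzH n k := by
  induction n with
  | zero => simp only [wzH]; positivity
  | succ n ih => 
    simp only [wzH]
    exact mul_pos ih (wzR_pos _ _ (by positivity) (by positivity))

lemma wzH_succ_k (n k : ℕ) : wzH n (k+1) = wzH n k *
    (((k:ℝ)+1/2)*((n:ℝ)+k+1/2)^3/((3*(n:ℝ)+k+3/2)*(2*(n:ℝ)+k+3/2)^3)) := by
  induction n with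
  | zero =>
    simp only [wzH]
    push_cast
    have h1 : ((k:ℝ)+1/2) ≠ 0 := by positivity
    have h2 : ((k:ℝ)+3/2) ≠ 0 := by positivity
    have h3 : ((k:ℝ)+1+1/2) = k + 3/2 := by ring
    rw [h3]
    simp only [mul_zero, zero_add]
    field_simp
  | succ n ih =>
    simp only [wzH]
    rw [ih]
    unfold wzR
    push_cast
    have e1 : (n:ℝ) + (k+1) + 1/2 = n + k + 3/2 := by ring
    have e2 : 3*(n:ℝ)+(k+1)+3/2 = 3*n+k+5/2 := by ring
    have e3 : 3*(n:ℝ)+(k+1)+5/2 = 3*n+k+7/2 := by ring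
    have e4 : 3*(n:ℝ)+(k+1)+7/2 = 3*n+k+9/2 := by ring
    have e5 : 2*(n:ℝ)+(k+1)+3/2 = 2*n+k+5/2 := by ring
    have e6 : 2*(n:ℝ)+(k+1)+5/2 = 2*n+k+7/2 := by ring
    have e7 : (n:ℝ)+1+k+1/2 = n+k+3/2 := by ring
    have e8 : 3*((n:ℝ)+1)+k+3/2 = 3*n+k+9/2 := by ring
    have e9 : 2*((n:ℝ)+1)+k+3/2 = 2*n+k+7/2 := by ring
    rw [e1,e2,e3,e4,e5,e6,e7,e8,e9]
    have p1 : 0 < (n:ℝ) + k + 3/2 := by positivity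
    have p2 : 0 < 3*(n:ℝ)+k+3/2 := by positivity
    have p3 : 0 < 3*(n:ℝ)+k+5/2 := by positivity
    have p4 : 0 < 3*(n:ℝ)+k+7/2 := by positivity
    have p5 : 0 < 3*(n:ℝ)+k+9/2 := by positivity
    have p6 : 0 < 2*(n:ℝ)+k+3/2 := by positivity
    have p7 : 0 < 2*(n:ℝ)+k+5/2 := by positivity
    have p8 : 0 < 2*(n:ℝ)+k+7/2 := by positivity
    have p9 : 0 < (3*(n:ℝ)+1)*(3*n+2)*(3*n+3) := by positivity
    generalize (n:ℝ) + k + 3/2 = a1 at *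
    generalize 3*(n:ℝ)+k+3/2 = a2 at *
    generalize 3*(n:ℝ)+k+5/2 = a3 at *
    generalize 3*(n:ℝ)+k+7/2 = a4 at *
    generalize 3*(n:ℝ)+k+9/2 = a5 at *
    generalize 2*(n:ℝ)+k+3/2 = a6 at *
    generalize 2*(n:ℝ)+k+5/2 = a7 at *
    generalize 2*(n:ℝ)+k+7/2 = a8 at *
    generalize (3*(n:ℝ)+1)*(3*n+2)*(3*n+3) = a9 at *
    field_simp

set_option maxHeartbeats 1600000 in
lemma wz_poly (n k : ℝ) :
    (1+3*n+2*k)*((3*n+k+3/2)*(3*n+k+5/2)*(3*n+k+7/2))*((2*n+k+3/2)*(2*n+k+5/2))^3 *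
        (128 * (3 * (3*n+1)*(3*n+2)))
      - (4+3*n+2*k)*(n+k+1/2)^3 * (128 * (8 * (2*n+1)^3*(n+1)^5))
    = wzP n k * (3*n+k+7/2)*(2*n+k+5/2)^3 - (k+1/2)*(n+k+1/2)^3*wzP n (k+1) := by
  unfold wzP; ring

lemma wz_rat (n k : ℝ) (hn : 0 ≤ n) (hk : 0 ≤ k) :
    (1+3*n+2*k) - (4+3*n+2*k) * wzR n k = wzC n k -
      ((k+1/2)*(n+k+1/2)^3/((3*n+k+3/2)*(2*n+k+3/2)^3)) * wzC n (k+1) := by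
  have hp := wz_poly n k
  unfold wzR wzC
  have e2 : 3*n+(k+1)+3/2 = 3*n+k+5/2 := by ring
  have e3 : 3*n+(k+1)+5/2 = 3*n+k+7/2 := by ring
  have e5 : 2*n+(k+1)+3/2 = 2*n+k+5/2 := by ring
  have e6 : ((2*n+1)*(2*n+2)*(n+1))^3 = (8 * (2*n+1)^3*(n+1)^5) * (n+1) := by ring
  have e7 : ((3*n+1)*(3*n+2)*(3*n+3)) = (3 * (3*n+1)*(3*n+2)) * (n+1) := by ring
  rw [e2,e3,e5,e6,e7]
  have p0 : 0 < n + 1 := by positivity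
  have p2 : 0 < 3*n+k+3/2 := by positivity
  have p3 : 0 < 3*n+k+5/2 := by positivity
  have p4 : 0 < 3*n+k+7/2 := by positivity
  have p6 : 0 < 2*n+k+3/2 := by positivity
  have p7 : 0 < 2*n+k+5/2 := by positivity
  have p9 : 0 < 3 * (3*n+1)*(3*n+2) := by positivity
  generalize wzP n k = q1 at *
  generalize wzP n (k+1) = q2 at *
  generalize 1+3*n+2*k = s1 at *
  generalize 4+3*n+2*k = s2 at *
  generalize (8 * (2*n+1)^3*(n+1)^5) = s3 at *
  generalize 3*n+k+3/2 = a2 at *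
  generalize 3*n+k+5/2 = a3 at *
  generalize 3*n+k+7/2 = a4 at *
  generalize 2*n+k+3/2 = a6 at *
  generalize 2*n+k+5/2 = a7 at *
  generalize 3 * (3*n+1)*(3*n+2) = a9 at *
  generalize n + k + 1/2 = b1 at *
  generalize k + 1/2 = b2 at *
  generalize n + 1 = b3 at *
  have : s1 - s2 * (b1^3 * (s3*b3) / (a2*a3*a4*(a6*a7)^3*(a9*b3))) =
      (s1 * (a2*a3*a4) * (a6*a7)^3 * (128*a9) - s2 * b1^3 * (128*s3)) /
        (a2*a3*a4*(a6*a7)^3*(128*a9)) := by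
    field_simp
  rw [this, hp]
  field_simp

lemma wz_pair (n k : ℕ) : wzF n k - wzF (n+1) k = wzG n k - wzG n (k+1) := by
  unfold wzF wzG
  rw [wzH_succ_k]
  simp only [wzH]
  push_cast
  have h := wz_rat n k (by positivity) (by positivity)
  linear_combination (wzH n k) * h

lemma wzR_le (n k : ℝ) (hn : 0 ≤ n) (hk : 0 ≤ k) :
    (4+3*n+2*k) * wzR n k ≤ 2/3 * (1+3*n+2*k) ∧ wzR n k ≤ 1 := by
  have hR : wzR n k ≤ 1/6 := by
    have e : wzR n k = (((n+k+1/2)/(3*n+k+3/2)) * ((n+k+1/2)/(3*n+k+5/2)) *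
        ((n+k+1/2)/(3*n+k+7/2))) * (((2*n+1)/(2*n+k+3/2)) * ((2*n+2)/(2*n+k+5/2)))^3 *
        ((n+1)/(3*n+1) * ((n+1)/(3*n+2)) * ((n+1)/(3*n+3)) * (n+1)^0) := by
      unfold wzR
      field_simp
    have b1 : (n+k+1/2)/(3*n+k+3/2) ≤ 1 := by rw [div_le_one (by positivity)]; linarith
    have b2 : (n+k+1/2)/(3*n+k+5/2) ≤ 1 := by rw [div_le_one (by positivity)]; linarith
    have b3 : (n+k+1/2)/(3*n+k+7/2) ≤ 1 := by rw [div_le_one (by positivity)]; linarith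
    have b4 : (2*n+1)/(2*n+k+3/2) ≤ 1 := by rw [div_le_one (by positivity)]; linarith
    have b5 : (2*n+2)/(2*n+k+5/2) ≤ 1 := by rw [div_le_one (by positivity)]; linarith
    have b6 : (n+1)/(3*n+1) ≤ 1 := by rw [div_le_one (by positivity)]; linarith
    have b7 : (n+1)/(3*n+2) ≤ 1/2 := by rw [div_le_iff₀ (by positivity)]; linarith
    have b8 : (n+1)/(3*n+3) ≤ 1/3 := by rw [div_le_iff₀ (by positivity)]; linarith
    rw [e]
    calc _ ≤ (1 * 1 * 1) * ((1:ℝ) * 1)^3 * (1 * (1/2) * (1/3) * 1) := by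
          rw [pow_zero]
          gcongr
      _ = 1/6 := by norm_num
  have h0 := wzR_pos n k hn hk
  refine ⟨?_, by linarith⟩
  nlinarith

lemma wzF_nonneg (n k : ℕ) : 0 ≤ wzF n k :=
  mul_nonneg (by positivity) (wzH_pos n k).le

lemma wzF_le (n k : ℕ) : wzF n k ≤ (2/3)^n * wzF 0 k := by
  induction n with
  | zero => simp
  | succ n ih =>
    have h := (wzR_le n k (by positivity) (by positivity)).1
    have : wzF (n+1) k ≤ 2/3 * wzF n k := by
      unfold wzF
      simp only [wzH]
      push_cast
      have := mul_le_mul_of_nonneg_left h (wzH_pos n k).le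
      linarith
    rw [pow_succ]
    linarith

lemma wzH_le (n k : ℕ) : wzH n k ≤ 1 / ((k:ℝ)+1/2)^4 := by
  induction n with
  | zero => simp [wzH]
  | succ n ih =>
    have h := (wzR_le n k (by positivity) (by positivity)).2
    have := mul_le_mul_of_nonneg_left h (wzH_pos n k).le
    simp only [wzH]
    linarith

lemma wzP_nonneg (n k : ℝ) (hn : 0 ≤ n) (hk : 0 ≤ k) : 0 ≤ wzP n k := by
  unfold wzP; positivity

lemma wzP_le (n k : ℝ) (hn : 0 ≤ n) (hk : 0 ≤ k) : wzP n k ≤ wzP n 1 * (k+1)^7 := by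
  have h : ∀ i ≤ 7, k^i ≤ (k+1)^7 := fun i hi =>
    (pow_le_pow_left₀ hk (by linarith) i).trans (pow_le_pow_right₀ (by linarith) hi)
  have h0 := h 0 (by norm_num)
  have h1 := h 1 (by norm_num)
  rw [pow_zero] at h0
  rw [pow_one] at h1
  unfold wzP
  simp only [one_pow, mul_one, add_mul _ _ ((k+1)^7)]
  simp only [← add_mul _ _ ((k+1)^7)]
  have key : ∀ c0 c1 c2 c3 c4 c5 c6 c7 : ℝ, 0 ≤ c0 → 0 ≤ c1 → 0 ≤ c2 → 0 ≤ c3 → 0 ≤ c4 →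
      0 ≤ c5 → 0 ≤ c6 → 0 ≤ c7 →
      c0 + c1*k + c2*k^2 + c3*k^3 + c4*k^4 + c5*k^5 + c6*k^6 + c7*k^7 ≤
      (c0+c1+c2+c3+c4+c5+c6+c7) * (k+1)^7 := by
    intro c0 c1 c2 c3 c4 c5 c6 c7 g0 g1 g2 g3 g4 g5 g6 g7
    have := mul_le_mul_of_nonneg_left h0 g0
    have := mul_le_mul_of_nonneg_left h1 g1
    have := mul_le_mul_of_nonneg_left (h 2 (by norm_num)) g2
    have := mul_le_mul_of_nonneg_left (h 3 (by norm_num)) g3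
    have := mul_le_mul_of_nonneg_left (h 4 (by norm_num)) g4
    have := mul_le_mul_of_nonneg_left (h 5 (by norm_num)) g5
    have := mul_le_mul_of_nonneg_left (h 6 (by norm_num)) g6
    have := mul_le_mul_of_nonneg_left (h 7 (by norm_num)) g7
    linarith
  apply key <;> positivity

lemma wzG_le (n k : ℕ) : 0 ≤ wzG n k ∧ wzG n k ≤ (16 * wzP n 1) / ((k:ℝ)+1) := by
  have hP := wzP_nonneg n k (by positivity) (by positivity)
  have hP1 := wzP_nonneg n 1 (by positivity) (by positivity)
  have hC : 0 ≤ wzC n k := by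
    unfold wzC; exact div_nonneg hP (by positivity)
  refine ⟨mul_nonneg (wzH_pos n k).le hC, ?_⟩
  have hk : (0:ℝ) ≤ k := by positivity
  have hn : (0:ℝ) ≤ n := by positivity
  have h1 : wzC n k ≤ wzP n 1 * ((k:ℝ)+1)^2 * 1 := by
    unfold wzC
    rw [div_le_iff₀ (by positivity)]
    calc wzP n k ≤ wzP n 1 * ((k:ℝ)+1)^7 := wzP_le _ _ hn hk
      _ = wzP n 1 * ((k:ℝ)+1)^2 * 1 *
          (1 * (1 * 1 * 1) * (((k:ℝ)+1)*((k:ℝ)+1)*((k:ℝ)+1)^3)) := by ring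
      _ ≤ _ := by
        gcongr <;> linarith
  have h2 : wzH n k ≤ 16 / ((k:ℝ)+1)^4 := by
    refine (wzH_le n k).trans ?_
    rw [div_le_div_iff₀ (by positivity) (by positivity)]
    have : ((k:ℝ)+1)^4 ≤ (2*((k:ℝ)+1/2))^4 := by gcongr; linarith
    linarith [this, mul_pow 2 ((k:ℝ)+1/2) 4]
  calc wzG n k ≤ 16 / ((k:ℝ)+1)^4 * (wzP n 1 * ((k:ℝ)+1)^2 * 1) := by
        unfold wzG
        gcongr
    _ = (16 * wzP n 1) / ((k:ℝ)+1) * (1/((k:ℝ)+1)) := by field_simp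
    _ ≤ (16 * wzP n 1) / ((k:ℝ)+1) * 1 := by
        gcongr
        rw [div_le_one (by positivity)]
        linarith
    _ = _ := by ring

lemma wzG_tendsto (n : ℕ) : Tendsto (fun K => wzG n K) atTop (𝓝 0) := by
  have h : Tendsto (fun K : ℕ => (16 * wzP n 1) / ((K:ℝ)+1)) atTop (𝓝 0) :=
    Tendsto.div_atTop tendsto_const_nhds
      (tendsto_atTop_add_const_right _ _ tendsto_natCast_atTop_atTop)
  exact squeeze_zero (fun K => (wzG_le n K).1) (fun K => (wzG_le n K).2) h

lemma wzF_zero_eq (k : ℕ) : wzF 0 k = 16 * (1 / (((2*k:ℕ):ℝ)+1)^3) := by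
  unfold wzF
  simp only [wzH]
  push_cast
  have e : (k:ℝ)+1/2 = (2*k+1)/2 := by ring
  have p : 0 < 2*(k:ℝ)+1 := by positivity
  rw [e]
  have e2 : 1 + 3*(0:ℝ) + 2*k = 2*k+1 := by ring
  rw [e2]
  field_simp
  norm_num

lemma wzF_zero_hasSum : HasSum (fun k => wzF 0 k) (14 * zeta 3) := by
  have hs : Summable (fun k : ℕ => 1 / ((k:ℝ)+1)^3) := by
    have := (summable_nat_add_iff 1).mpr (Real.summable_one_div_nat_pow (p := 3) |>.mpr (by norm_num))
    simpa using this
  have he : Summable (fun k : ℕ => 1 / (((2*k:ℕ):ℝ)+1)^3) :=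
    hs.comp_injective (i := fun k : ℕ => 2*k) (fun a b h => by simpa using h)
  have ho : Summable (fun k : ℕ => 1 / (((2*k+1:ℕ):ℝ)+1)^3) :=
    hs.comp_injective (i := fun k : ℕ => 2*k+1) (fun a b h => by simpa using h)
  have h1 := tsum_even_add_odd (f := fun k : ℕ => 1 / ((k:ℝ)+1)^3) he ho
  have h2 : ∑' k : ℕ, 1 / (((2*k+1:ℕ):ℝ)+1)^3 = 1/8 * zeta 3 := by
    unfold zeta
    rw [← tsum_mul_left]
    congr 1
    ext k
    push_cast
    have : (2*(k:ℝ)+1+1) = 2*(k+1) := by ring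
    rw [this]
    field_simp
    norm_num
  have h3 : ∑' k : ℕ, 1 / ((k:ℝ)+1)^3 = zeta 3 := rfl
  have h4 := he.hasSum.mul_left 16
  have h5 : 16 * ∑' k : ℕ, 1 / (((2*k:ℕ):ℝ)+1)^3 = 14 * zeta 3 := by
    rw [h2, h3] at h1
    linarith
  rw [h5] at h4
  have h6 : (fun k => wzF 0 k) = fun k : ℕ => 16 * (1 / (((2*k:ℕ):ℝ)+1)^3) := by
    funext k
    exact wzF_zero_eq k
  rw [h6]
  exact h4

lemma wzF_summable (n : ℕ) : Summable (fun k => wzF n k) :=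
  Summable.of_nonneg_of_le (wzF_nonneg n) (wzF_le n) (wzF_zero_hasSum.summable.mul_left _)

lemma wz_finite (N K : ℕ) : ∑ k ∈ Finset.range K, wzF 0 k - ∑ k ∈ Finset.range K, wzF N k =
    ∑ n ∈ Finset.range N, (wzG n 0 - wzG n K) := by
  induction N with
  | zero => simp
  | succ N ih =>
    rw [Finset.sum_range_succ, ← ih]
    have : ∑ k ∈ Finset.range K, (wzF N k - wzF (N+1) k) = wzG N 0 - wzG N K := by
      simp only [wz_pair]
      exact Finset.sum_range_sub' _ _
    rw [Finset.sum_sub_distrib] at this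
    linarith

lemma wz_infinite (N : ℕ) : 14 * zeta 3 - ∑' k, wzF N k = ∑ n ∈ Finset.range N, wzG n 0 := by
  have h1 := wzF_zero_hasSum.tendsto_sum_nat.sub (wzF_summable N).hasSum.tendsto_sum_nat
  have h2 : Tendsto (fun K => ∑ n ∈ Finset.range N, (wzG n 0 - wzG n K)) atTop
      (𝓝 (∑ n ∈ Finset.range N, (wzG n 0 - 0))) :=
    tendsto_finsetSum _ fun n _ => tendsto_const_nhds.sub (wzG_tendsto n)
  simp only [sub_zero] at h2
  refine tendsto_nhds_unique h1 (h2.congr fun K => ?_)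
  exact (wz_finite N K).symm

lemma wz_limit : Tendsto (fun N => ∑ n ∈ Finset.range N, wzG n 0) atTop (𝓝 (14 * zeta 3)) := by
  have h0 : Tendsto (fun N => ∑' k, wzF N k) atTop (𝓝 0) := by
    have hb : Tendsto (fun N : ℕ => (2/3:ℝ)^N * (14 * zeta 3)) atTop (𝓝 (0 * (14 * zeta 3))) :=
      (tendsto_pow_atTop_nhds_zero_of_lt_one (by norm_num) (by norm_num)).mul_const _
    rw [zero_mul] at hb
    refine squeeze_zero (fun N => tsum_nonneg (wzF_nonneg N)) (fun N => ?_) hb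
    rw [← wzF_zero_hasSum.tsum_eq, ← tsum_mul_left]
    exact (wzF_summable N).tsum_le_tsum (wzF_le N) (wzF_zero_hasSum.summable.mul_left _)
  have h1 := (tendsto_const_nhds (x := 14 * zeta 3)).sub h0
  rw [sub_zero] at h1
  exact h1.congr wz_infinite

/-- The hypergeometric part of the summand (index shifted by one). -/
noncomputable def sT (n : ℕ) : ℝ := (-64:ℝ)^(n+1) /
  (((n:ℝ)+1)^5 * ((2*(n+1)).choose (n+1) : ℝ)^4 * ((3*(n+1)).choose (n+1) : ℝ))

lemma choose3 (m : ℕ) : ((m:ℝ)+1)*(2*m+1)*2 * ((3*(m+1)).choose (m+1) : ℝ) =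
    (3*(m:ℝ)+1)*(3*m+2)*3 * ((3*m).choose m : ℝ) := by
  have h1 := Nat.choose_mul_factorial_mul_factorial (n := 3*m) (k := m) (by omega)
  have h2 := Nat.choose_mul_factorial_mul_factorial (n := 3*(m+1)) (k := m+1) (by omega)
  have e1 : 3*m - m = 2*m := by omega
  have e2 : 3*(m+1) - (m+1) = 2*m+1+1 := by omega
  have e3 : Nat.factorial (3*(m+1)) = Nat.factorial (3*m+1+1+1) := rfl
  rw [e1] at h1
  rw [e2, e3] at h2
  simp only [Nat.factorial_succ] at h2
  have h1' := congrArg (Nat.cast : ℕ → ℝ) h1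
  have h2' := congrArg (Nat.cast : ℕ → ℝ) h2
  push_cast at h1' h2'
  have p1 : (0:ℝ) < (Nat.factorial m : ℝ) := by exact_mod_cast Nat.factorial_pos m
  have p2 : (0:ℝ) < (Nat.factorial (2*m) : ℝ) := by exact_mod_cast Nat.factorial_pos _
  have p3 : (0:ℝ) < (m:ℝ)+1 := by positivity
  rw [← h1'] at h2'
  have p : (Nat.factorial m : ℝ) * (Nat.factorial (2*m) : ℝ) * ((m:ℝ)+1) ≠ 0 := by positivity
  apply mul_left_cancel₀ p
  linear_combination h2'

lemma choose2 (m : ℕ) : ((m:ℝ)+1) * ((2*(m+1)).choose (m+1) : ℝ) =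
    2*(2*(m:ℝ)+1) * ((2*m).choose m : ℝ) := by
  have h := Nat.succ_mul_centralBinom_succ m
  simp only [Nat.centralBinom] at h
  exact_mod_cast h

lemma sT_succ (n : ℕ) : sT (n+1) = sT n *
    (-8 * ((n:ℝ)+1)^5 / (3 * (2*n+3)^3 * (3*n+4) * (3*n+5))) := by
  unfold sT
  have h2 := choose2 (n+1)
  have h3 := choose3 (n+1)
  have q1 : (0:ℝ) < ((2*(n+1)).choose (n+1) : ℝ) := by
    exact_mod_cast Nat.choose_pos (by omega)
  have q2 : (0:ℝ) < ((3*(n+1)).choose (n+1) : ℝ) := by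
    exact_mod_cast Nat.choose_pos (by omega)
  push_cast at h2 h3 ⊢
  generalize ((2*(n+1)).choose (n+1) : ℝ) = x at *
  generalize ((3*(n+1)).choose (n+1) : ℝ) = y at *
  have hx : ((2*(n+1+1)).choose (n+1+1) : ℝ) = 2*(2*n+3)*x/(n+2) := by
    rw [eq_div_iff (by positivity)]; linear_combination h2
  have hy : ((3*(n+1+1)).choose (n+1+1) : ℝ) = 
      (3*n+4)*(3*n+5)*3*y/((n+2)*(2*n+3)*2) := by
    rw [eq_div_iff (by positivity)]; linear_combination h3
  rw [hx, hy]
  have e : (n:ℝ)+1+1 = n+2 := by ring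
  rw [e, pow_succ (-64:ℝ) (n+1)]
  field_simp
  ring

lemma wzH_eq (n : ℕ) : wzH n 0 = -12 * (3*(n:ℝ)+1) * sT (2*n) := by
  induction n with
  | zero =>
    simp [wzH, sT, Nat.choose]
    norm_num
  | succ n ih =>
    have e : 2*(n+1) = 2*n+1+1 := by ring
    rw [e, sT_succ, sT_succ]
    simp only [wzH]
    rw [ih]
    unfold wzR
    push_cast
    have e1 : (n:ℝ)+0+1/2 = (2*n+1)/2 := by ring
    have e2 : 3*(n:ℝ)+0+3/2 = 3*(2*n+1)/2 := by ring
    have e3 : 3*(n:ℝ)+0+5/2 = (6*n+5)/2 := by ring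
    have e4 : 3*(n:ℝ)+0+7/2 = (6*n+7)/2 := by ring
    have e5 : 2*(n:ℝ)+0+3/2 = (4*n+3)/2 := by ring
    have e6 : 2*(n:ℝ)+0+5/2 = (4*n+5)/2 := by ring
    have e7 : 2*(n:ℝ)+2 = 2*(n+1) := by ring
    have e8 : 3*(n:ℝ)+3 = 3*(n+1) := by ring
    have f1 : 2*(2*(n:ℝ))+3 = 4*n+3 := by ring
    have f2 : 3*(2*(n:ℝ))+4 = 2*(3*n+2) := by ring
    have f3 : 3*(2*(n:ℝ))+5 = 6*n+5 := by ring
    have f0 : 3*((n:ℝ)+1)+1 = 3*n+4 := by ring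
    have f4 : 2*(n:ℝ)+1+1 = 2*(n+1) := by ring
    have f5 : 2*(2*(n:ℝ)+1)+3 = 4*n+5 := by ring
    have f6 : 3*(2*(n:ℝ)+1)+4 = 6*n+7 := by ring
    have f7 : 3*(2*(n:ℝ)+1)+5 = 2*(3*n+4) := by ring
    rw [e1,e2,e3,e4,e5,e6,e7,e8,f0,f1,f2,f3,f4,f5,f6,f7]
    field_simp
    ring

/-- The summand. -/
noncomputable def sTerm (n : ℕ) : ℝ := (28 * ((n:ℝ)+1)^2 - 18 * ((n:ℝ)+1) + 3) * sT n

lemma wzG_eq (n : ℕ) : wzG n 0 = -(sTerm (2*n) + sTerm (2*n+1)) := by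
  unfold wzG sTerm
  rw [wzH_eq, sT_succ]
  unfold wzC wzP
  push_cast
  have e2 : 3*(n:ℝ)+0+3/2 = 3*(2*n+1)/2 := by ring
  have e3 : 3*(n:ℝ)+0+5/2 = (6*n+5)/2 := by ring
  have e5 : 2*(n:ℝ)+0+3/2 = (4*n+3)/2 := by ring
  have f1 : 2*(2*(n:ℝ))+3 = 4*n+3 := by ring
  have f2 : 3*(2*(n:ℝ))+4 = 2*(3*n+2) := by ring
  have f3 : 3*(2*(n:ℝ))+5 = 6*n+5 := by ring
  rw [e2,e3,e5,f1,f2,f3]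
  field_simp
  ring

lemma wz_even (N : ℕ) : ∑ m ∈ Finset.range (2*N), sTerm m = -∑ n ∈ Finset.range N, wzG n 0 := by
  induction N with
  | zero => simp
  | succ N ih =>
    have e : 2*(N+1) = 2*N+1+1 := by ring
    rw [e, Finset.sum_range_succ, Finset.sum_range_succ, ih, Finset.sum_range_succ, wzG_eq]
    ring

lemma sT_abs (n : ℕ) : |sT n| ≤ 2 * (1/9)^n := by
  induction n with
  | zero =>
    simp [sT, Nat.choose]
    norm_num [abs_le]
  | succ n ih =>
    rw [sT_succ, abs_mul, pow_succ (1/9:ℝ) n]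
    have h : |(-8 * ((n:ℝ)+1)^5 / (3 * (2*n+3)^3 * (3*n+4) * (3*n+5)))| ≤ 1/9 := by
      rw [abs_div, abs_mul, abs_of_pos (by positivity : 0 < ((n:ℝ)+1)^5),
        abs_of_pos (by positivity : 0 < (3 * (2*(n:ℝ)+3)^3 * (3*n+4) * (3*n+5)))]
      rw [div_le_div_iff₀ (by positivity) (by positivity)]
      have : 3 * (2*((n:ℝ)+1))^3 * (3*(n+1)) * (3*(n+1)) ≤
          3 * (2*(n:ℝ)+3)^3 * (3*n+4) * (3*n+5) := by
        gcongr <;> linarith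
      norm_num
      have q : (0:ℝ) ≤ ((n:ℝ)+1)^5 := by positivity
      nlinarith
    rw [← mul_assoc]
    exact mul_le_mul ih h (abs_nonneg _) (by positivity)

lemma sTerm_abs (n : ℕ) : |sTerm n| ≤ 56 * (4/9)^n := by
  unfold sTerm
  rw [abs_mul]
  have h1 : |28 * ((n:ℝ)+1)^2 - 18 * ((n:ℝ)+1) + 3| ≤ 28 * 4^n := by
    have h2 : ((n:ℝ)+1) ≤ 2^n := by exact_mod_cast Nat.lt_two_pow_self (n := n)
    have h3 : ((n:ℝ)+1)^2 ≤ 4^n := by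
      calc ((n:ℝ)+1)^2 ≤ (2^n)^2 := by gcongr
        _ = 4^n := by rw [← pow_mul, mul_comm, pow_mul]; norm_num
    have h4 : (0:ℝ) ≤ n := by positivity
    rw [abs_le]
    constructor <;> nlinarith
  calc _ ≤ (28 * 4^n) * (2 * (1/9:ℝ)^n) := by
        gcongr
        exact sT_abs n
    _ = 56 * (4/9)^n := by
        rw [div_pow 4 9, div_pow 1 9, one_pow]
        ring

lemma sTerm_hasSum : Tendsto (fun N => ∑ n ∈ Finset.range N, sTerm n) atTop
    (𝓝 (-(14 * zeta 3))) := by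
  have hs : Summable sTerm := by
    apply Summable.of_norm_bounded (g := fun n : ℕ => 56 * (4/9:ℝ)^n)
    · exact (summable_geometric_of_lt_one (by norm_num) (by norm_num)).mul_left _
    · exact sTerm_abs
  have h1 := hs.hasSum.tendsto_sum_nat
  have h2 : Tendsto (fun N : ℕ => 2*N) atTop atTop :=
    tendsto_atTop_mono (fun N => by simp only [id]; omega) tendsto_id
  have h3 := h1.comp h2
  have h4 := wz_limit.neg
  have h5 := tendsto_nhds_unique h3 (h4.congr fun N => (wz_even N).symm)
  rw [← h5]
  exact h1

theorem stmt_18 :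
    Tendsto (fun N => ∑ n ∈ Finset.range N,
      ((28 * ((n:ℝ)+1)^2 - 18 * ((n:ℝ)+1) + 3) * (-64:ℝ)^(n+1)) /
        (((n:ℝ)+1)^5 * ((2*(n+1)).choose (n+1) : ℝ)^4 * ((3*(n+1)).choose (n+1) : ℝ)))
      atTop (𝓝 (-(14 * zeta 3))) := by
  refine sTerm_hasSum.congr fun N => Finset.sum_congr rfl fun n _ => ?_
  unfold sTerm sT
  rw [mul_div_assoc]
end
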